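/- arXiv:2603.08449 — 4 statements merged into one kernel-verified Lean document; each statement's English description precedes it below -/
import Mathlib

section
/- Let 1 ≤ p < ∞, a > 0, and let φ : (0,∞) → ℂ be measurable with ∫₀^∞ |φ(t)| t^{(a+1)/p − 1} dt < ∞. Let λ ∈ ℂ lie outside the closure of { k̂_{a,p}(ξ) : ξ ∈ ℝ }. Then there exists a measurable ψ : (0,∞) → ℂ with ∫₀^∞ |ψ(t)| t^{(a+1)/p − 1} dt < ∞ such that for every holomorphic function f on 𝕌 with ‖f‖_{A^p_a} < ∞ the following two identities hold at every point of 𝕌: (1/λ)(g + ℋ_ψ g) = f where g = λf − ℋ_φ f, and λh − ℋ_φ h = f where h = (1/λ)(f + ℋ_ψ f). -/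
open MeasureTheory
open scoped ENNReal NNReal

/-- The upper half-plane `𝕌 = {z : Im z > 0}`. -/
def upperHalf : Set ℂ := {z : ℂ | 0 < z.im}

/-- The Hausdorff operator `ℋ_φ f(z) = ∫₀^∞ f(z/t) φ(t) t⁻¹ dt` on functions on `𝕌`. -/
noncomputable def HphiHol (φ : ℝ → ℂ) (f : ℂ → ℂ) (z : ℂ) : ℂ :=
  ∫ t in Set.Ioi (0 : ℝ), f (z / (t : ℂ)) * φ t / (t : ℂ)

/-- The weighted Bergman norm `‖f‖_{A^p_a} = (∫_𝕌 |f(z)|^p (Im z)^{a−1} dA(z))^{1/p}`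
(valued in `ℝ≥0∞`), where `dA` is area (Lebesgue) measure on `ℂ`. -/
noncomputable def bergmanNorm (p a : ℝ) (f : ℂ → ℂ) : ℝ≥0∞ :=
  (∫⁻ z in upperHalf, (‖f z‖₊ : ℝ≥0∞) ^ p * ENNReal.ofReal (z.im ^ (a - 1))) ^ (1 / p)

/-- `k̂_{a,p}(ξ) = ∫₀^∞ φ(t) t^{c − 1 − iξ} dt` with `c = (a+1)/p`. -/
noncomputable def khat (φ : ℝ → ℂ) (c : ℝ) (ξ : ℝ) : ℂ :=
  ∫ t in Set.Ioi (0 : ℝ), φ t * (t : ℂ) ^ ((c : ℂ) - 1 - Complex.I * (ξ : ℂ))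


namespace WienerAux

open FourierTransform Real Filter Topology

/-- `WA g N`: `g` is the Fourier transform of an `L¹` function of norm at most `N`. -/
def WA (g : ℝ → ℂ) (N : ℝ) : Prop :=
  ∃ F : ℝ → ℂ, Integrable F ∧ (∀ ξ, 𝓕 F ξ = g ξ) ∧ ∫ x, ‖F x‖ ≤ N

lemma four_add {F G : ℝ → ℂ} (hF : Integrable F) (hG : Integrable G) (ξ : ℝ) :
    𝓕 (F + G) ξ = 𝓕 F ξ + 𝓕 G ξ := by
  simp only [Real.fourier_eq]
  rw [← integral_add]
  · simp
  · exact (Real.fourierIntegral_convergent_iff ξ).2 hF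
  · exact (Real.fourierIntegral_convergent_iff ξ).2 hG

lemma four_smul (c : ℂ) (F : ℝ → ℂ) (ξ : ℝ) :
    𝓕 (c • F) ξ = c * 𝓕 F ξ := by
  simp only [Real.fourier_eq]
  rw [← integral_const_mul]
  congr 1; ext x; simp [Circle.smul_def]; ring

lemma four_congr {F G : ℝ → ℂ} (h : F =ᵐ[volume] G) (ξ : ℝ) : 𝓕 F ξ = 𝓕 G ξ := by
  simp only [Real.fourier_eq]
  apply integral_congr_ae
  filter_upwards [h] with x hx
  rw [hx]

lemma four_norm_le (F : ℝ → ℂ) (ξ : ℝ) : ‖𝓕 F ξ‖ ≤ ∫ x, ‖F x‖ := by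
  rw [Real.fourier_eq]
  refine (norm_integral_le_integral_norm _).trans (le_of_eq ?_)
  simp

lemma four_conv {F G : ℝ → ℂ} (hF : Integrable F) (hG : Integrable G) (ξ : ℝ) :
    𝓕 (convolution F G (ContinuousLinearMap.mul ℂ ℂ) volume) ξ = 𝓕 F ξ * 𝓕 G ξ :=
  Real.fourier_mul_convolution_eq hF hG ξ

lemma conv_norm {F G : ℝ → ℂ} (hF : Integrable F) (hG : Integrable G) :
    ∫ x, ‖convolution F G (ContinuousLinearMap.mul ℂ ℂ) volume x‖
      ≤ (∫ x, ‖F x‖) * ∫ x, ‖G x‖ := by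
  have h := integral_convolution (ContinuousLinearMap.mul ℝ ℝ) (μ := volume) (ν := volume)
    hF.norm hG.norm
  simp only [ContinuousLinearMap.mul_apply'] at h
  rw [← h]
  refine integral_mono_of_nonneg (ae_of_all _ fun x => norm_nonneg _)
    (hF.norm.integrable_convolution _ hG.norm) (ae_of_all _ fun x => ?_)
  simp only [convolution, ContinuousLinearMap.mul_apply']
  refine (norm_integral_le_integral_norm _).trans (le_of_eq ?_)
  simp

lemma WA.add {g h : ℝ → ℂ} {M N : ℝ} (hg : WA g M) (hh : WA h N) :
    WA (fun x => g x + h x) (M + N) := by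
  obtain ⟨F, hF, h1, h2⟩ := hg
  obtain ⟨G, hG, h3, h4⟩ := hh
  refine ⟨F + G, hF.add hG, fun ξ => ?_, ?_⟩
  · rw [four_add hF hG, h1, h3]
  · refine le_trans ?_ (add_le_add h2 h4)
    rw [← integral_add hF.norm hG.norm]
    exact integral_mono (hF.add hG).norm (hF.norm.add hG.norm) fun x => norm_add_le _ _

lemma WA.smul {g : ℝ → ℂ} {M : ℝ} (c : ℂ) (hg : WA g M) :
    WA (fun x => c * g x) (‖c‖ * M) := by
  obtain ⟨F, hF, h1, h2⟩ := hg
  refine ⟨c • F, hF.smul c, fun ξ => ?_, ?_⟩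
  · rw [four_smul, h1]
  · simp only [Pi.smul_apply, norm_smul, integral_const_mul]
    gcongr

lemma WA.mul {g h : ℝ → ℂ} {M N : ℝ} (hg : WA g M) (hh : WA h N) :
    WA (fun x => g x * h x) (M * N) := by
  obtain ⟨F, hF, h1, h2⟩ := hg
  obtain ⟨G, hG, h3, h4⟩ := hh
  refine ⟨_, hF.integrable_convolution (ContinuousLinearMap.mul ℂ ℂ) hG, fun ξ => ?_, ?_⟩
  · rw [four_conv hF hG, h1, h3]
  · refine (conv_norm hF hG).trans ?_
    have : 0 ≤ ∫ x, ‖F x‖ := integral_nonneg fun _ => norm_nonneg _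
    have : 0 ≤ ∫ x, ‖G x‖ := integral_nonneg fun _ => norm_nonneg _
    gcongr
    linarith

lemma WA.mono {g : ℝ → ℂ} {M N : ℝ} (hg : WA g M) (h : M ≤ N) : WA g N := by
  obtain ⟨F, hF, h1, h2⟩ := hg
  exact ⟨F, hF, h1, h2.trans h⟩

lemma WA.pow {g : ℝ → ℂ} {M : ℝ} (hg : WA g M) (n : ℕ) :
    WA (fun x => g x ^ (n + 1)) (M ^ (n + 1)) := by
  induction n with
  | zero => simpa using hg
  | succ k ih => simpa only [pow_succ _ (k+1)] using ih.mul hg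

/-- Fourier transform at a point as a continuous linear functional on `L¹`. -/
noncomputable def fourCLM (ξ : ℝ) : (ℝ →₁[volume] ℂ) →L[ℂ] ℂ :=
  LinearMap.mkContinuous
    { toFun := fun u => 𝓕 (u : ℝ → ℂ) ξ
      map_add' := fun u v => by
        rw [four_congr (Lp.coeFn_add u v), four_add (L1.integrable_coeFn u) (L1.integrable_coeFn v)]
      map_smul' := fun c u => by
        rw [four_congr (Lp.coeFn_smul c u), four_smul]; rfl } 1
    (fun u => by
      rw [one_mul, L1.norm_eq_integral_norm]
      exact four_norm_le _ ξ)

lemma fourCLM_apply (ξ : ℝ) (u : ℝ →₁[volume] ℂ) : fourCLM ξ u = 𝓕 (u : ℝ → ℂ) ξ := rfl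

lemma WA.tsum {g : ℕ → ℝ → ℂ} {N : ℕ → ℝ} (hg : ∀ n, WA (g n) (N n)) (hN : Summable N) :
    ∃ M, WA (fun x => ∑' n, g n x) M := by
  choose F hF h1 h2 using hg
  let u : ℕ → (ℝ →₁[volume] ℂ) := fun n => (hF n).toL1
  have hu : Summable u := by
    refine Summable.of_norm_bounded hN fun n => ?_
    rw [L1.norm_of_fun_eq_integral_norm]
    exact h2 n
  refine ⟨_, ((∑' n, u n : ℝ →₁[volume] ℂ) : ℝ → ℂ), L1.integrable_coeFn _, fun ξ => ?_, le_rfl⟩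
  rw [← fourCLM_apply, (fourCLM ξ).map_tsum hu]
  congr 1; ext n
  rw [fourCLM_apply, four_congr (hF n).coeFn_toL1, h1]

/-- Injectivity of the Fourier transform on `L¹`. -/
lemma four_inj {F : ℝ → ℂ} (hF : Integrable F) (h : ∀ ξ, 𝓕 F ξ = 0) : F =ᵐ[volume] 0 := by
  refine ae_eq_zero_of_integral_contDiff_smul_eq_zero hF.locallyIntegrable fun g hg hc => ?_
  have hg2 : ContDiff ℝ (⊤ : ℕ∞) (fun x => (g x : ℂ)) := Complex.ofRealCLM.contDiff.comp hg
  have hc2 : HasCompactSupport (fun x => (g x : ℂ)) := hc.comp_left (g := fun x : ℝ => (x : ℂ)) rfl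
  let G : SchwartzMap ℝ ℂ := hc2.toSchwartzMap hg2
  let K : SchwartzMap ℝ ℂ := 𝓕⁻ G
  have hK : 𝓕 (K : ℝ → ℂ) = G := by
    rw [← SchwartzMap.fourier_coe]
    simp [K]
  have := VectorFourier.integral_fourierIntegral_smul_eq_flip (L := innerₗ ℝ) (μ := volume)
    (ν := volume) (f := F) (g := K) Real.continuous_fourierChar (by fun_prop) hF K.integrable
  have e1 : ∀ ξ, VectorFourier.fourierIntegral 𝐞 volume (innerₗ ℝ) F ξ = 0 := h
  have e2 : ∀ ξ, VectorFourier.fourierIntegral 𝐞 volume (innerₗ ℝ).flip K ξ = (g ξ : ℂ) := by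
    intro ξ
    rw [flip_innerₗ]
    exact congrFun hK ξ
  simp only [e1, e2, zero_smul, integral_zero] at this
  rw [this]
  congr 1; ext x; simp [mul_comm]

end WienerAux

namespace WienerAux

open FourierTransform Real Filter Topology

lemma four_deriv_aux {g g1 : ℝ → ℂ} (h : ∀ x, HasDerivAt g (g1 x) x) (hg : Integrable g)
    (hg1 : Integrable g1) (x : ℝ) : 𝓕 g1 x = (2 * π * Complex.I * x) * 𝓕 g x := by
  have e : deriv g = g1 := funext fun x => (h x).deriv
  have := Real.fourier_deriv hg (fun x => (h x).differentiableAt) (e ▸ hg1)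
  rw [e] at this
  rw [this]; rfl

lemma WA.of_C2 {g g1 g2 : ℝ → ℂ} (h1 : ∀ x, HasDerivAt g (g1 x) x)
    (h2 : ∀ x, HasDerivAt g1 (g2 x) x) (ig : Integrable g) (ig1 : Integrable g1)
    (ig2 : Integrable g2) : WA g (π * ((∫ x, ‖g x‖) + ∫ x, ‖g2 x‖)) := by
  have cg : Continuous g := continuous_iff_continuousAt.2 fun x => (h1 x).continuousAt
  set A := (∫ x, ‖g x‖) + ∫ x, ‖g2 x‖ with hA
  have hb : ∀ ξ, ‖𝓕 g ξ‖ ≤ A * (1 + ξ ^ 2)⁻¹ := by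
    intro ξ
    have e1 := four_norm_le g ξ
    have e2 := four_norm_le g2 ξ
    rw [four_deriv_aux h2 ig1 ig2, four_deriv_aux h1 ig ig1] at e2
    simp only [norm_mul, Complex.norm_I, Complex.norm_real, Complex.norm_ofNat] at e2
    rw [← div_eq_mul_inv, le_div_iff₀ (by positivity)]
    have hpi : ‖(π : ℝ)‖ = π := by simp [Real.pi_pos.le]
    have hx : ‖ξ‖ * ‖ξ‖ = ξ ^ 2 := by rw [← sq, Real.norm_eq_abs, sq_abs]
    have e3 : ξ ^ 2 * ‖𝓕 g ξ‖ ≤ (2 * π * 1 * ‖ξ‖) * ((2 * π * 1 * ‖ξ‖) * ‖𝓕 g ξ‖) := by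
      have : (2 * π * 1 * ‖ξ‖) * ((2 * π * 1 * ‖ξ‖) * ‖𝓕 g ξ‖)
        = (4 * π^2) * (ξ ^ 2 * ‖𝓕 g ξ‖) := by rw [← hx]; ring
      rw [this]
      refine le_mul_of_one_le_left (by positivity) ?_
      nlinarith [Real.pi_gt_three]
    rw [hpi] at e2
    nlinarith
  have ib : Integrable (fun ξ : ℝ => A * (1 + ξ ^ 2)⁻¹) := integrable_inv_one_add_sq.const_mul _
  have cF : Continuous (𝓕 g) := by
    have := VectorFourier.fourierIntegral_continuous (L := innerₗ ℝ) (μ := volume)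
      Real.continuous_fourierChar (by fun_prop) ig
    exact this
  have iF : Integrable (𝓕 g) := ib.mono' cF.aestronglyMeasurable (ae_of_all _ hb)
  have e : 𝓕⁻ g = fun x => 𝓕 g (-x) := by
    ext x; rw [Real.fourierInv_eq_fourier_neg]
  refine ⟨𝓕⁻ g, ?_, fun ξ => by rw [cg.fourier_fourierInv_eq ig iF], ?_⟩
  · rw [e]; exact iF.comp_neg
  · rw [e, integral_neg_eq_self (fun x => ‖𝓕 g x‖)]
    refine (integral_mono iF.norm ib hb).trans (le_of_eq ?_)
    rw [integral_const_mul, integral_univ_inv_one_add_sq, mul_comm]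

lemma pow_sub_bound {u v : ℂ} {r : ℝ} (hu : ‖u‖ ≤ r) (hv : ‖v‖ ≤ r) (n : ℕ) :
    ‖u ^ (n + 1) - v ^ (n + 1)‖ ≤ (n + 1) * r ^ n * ‖u - v‖ := by
  have hr : 0 ≤ r := (norm_nonneg _).trans hu
  induction n with
  | zero => simp
  | succ k ih =>
    have e : u ^ (k + 1 + 1) - v ^ (k + 1 + 1) =
      u * (u ^ (k+1) - v ^ (k+1)) + (u - v) * v ^ (k+1) := by ring
    rw [e]
    refine (norm_add_le _ _).trans ?_
    rw [norm_mul, norm_mul, norm_pow]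
    have h1 : ‖u‖ * ‖u ^ (k+1) - v ^ (k+1)‖ ≤ r * ((k + 1) * r ^ k * ‖u - v‖) := by gcongr
    have h2 : ‖u - v‖ * ‖v‖ ^ (k+1) ≤ ‖u - v‖ * r ^ (k+1) := by gcongr
    push_cast
    calc _ ≤ _ := add_le_add h1 h2
      _ = _ := by ring

lemma WA.inv_pow (Θ : SchwartzMap ℝ ℂ) (l : ℂ) (δ : ℝ) (hδ : 0 < δ) (hl : δ ≤ ‖l‖)
    (hΘ : ∀ x, δ ≤ ‖l - Θ x‖) :
    ∃ K, 0 ≤ K ∧ ∀ n : ℕ, WA (fun x => (l - Θ x)⁻¹ ^ (n + 1) - l⁻¹ ^ (n + 1))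
      (K * ((n + 1) ^ 2 * δ⁻¹ ^ n)) := by
  let Θ1 : SchwartzMap ℝ ℂ := SchwartzMap.derivCLM ℂ ℂ Θ
  let Θ2 : SchwartzMap ℝ ℂ := SchwartzMap.derivCLM ℂ ℂ Θ1
  have d1 : ∀ x, HasDerivAt Θ (Θ1 x) x := fun x => by
    simpa [Θ1] using! (Θ.differentiable x).hasDerivAt
  have d2 : ∀ x, HasDerivAt Θ1 (Θ2 x) x := fun x => by
    simpa [Θ2] using! (Θ1.differentiable x).hasDerivAt
  set r := δ⁻¹ with hr
  have hr0 : 0 < r := inv_pos.2 hδ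
  have hG0 : ∀ x, l - Θ x ≠ 0 := fun x => norm_pos_iff.1 (hδ.trans_le (hΘ x))
  have hl0 : l ≠ 0 := norm_pos_iff.1 (hδ.trans_le hl)
  have hG : ∀ x, ‖(l - Θ x)⁻¹‖ ≤ r := fun x => by
    rw [norm_inv]; exact inv_anti₀ hδ (hΘ x)
  have hli : ‖l⁻¹‖ ≤ r := by rw [norm_inv]; exact inv_anti₀ hδ hl
  obtain ⟨B, hB0, hB⟩ : ∃ B, 0 ≤ B ∧ ∀ x, ‖Θ1 x‖ ≤ B :=
    ⟨_, by positivity, fun x => Θ1.norm_le_seminorm ℝ x⟩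
  set I0 := ∫ x, ‖Θ x‖
  set I1 := ∫ x, ‖Θ1 x‖
  set I2 := ∫ x, ‖Θ2 x‖
  have I00 : 0 ≤ I0 := integral_nonneg fun _ => norm_nonneg _
  have I10 : 0 ≤ I1 := integral_nonneg fun _ => norm_nonneg _
  have I20 : 0 ≤ I2 := integral_nonneg fun _ => norm_nonneg _
  have cG : Continuous (fun x => (l - Θ x)⁻¹) :=
    (continuous_const.sub Θ.continuous).inv₀ hG0
  -- pointwise bounds
  have dG : ∀ x, HasDerivAt (fun x => (l - Θ x)⁻¹) (((l - Θ x)⁻¹) ^ 2 * Θ1 x) x := fun x => by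
    refine (((d1 x).const_sub l).fun_inv (hG0 x)).congr_deriv ?_
    have := hG0 x
    field_simp
    try ring
  refine ⟨π * (r ^ 2 * I0 + (2 * r ^ 3 * B * I1 + r ^ 2 * I2)), by positivity, fun n => ?_⟩
  let g1 : ℝ → ℂ := fun x => (n + 1 : ℂ) * ((l - Θ x)⁻¹ ^ (n + 2) * Θ1 x)
  let g2 : ℝ → ℂ := fun x => (n + 1 : ℂ) * ((n + 2 : ℂ) * (l - Θ x)⁻¹ ^ (n + 3) * Θ1 x * Θ1 x
    + (l - Θ x)⁻¹ ^ (n + 2) * Θ2 x)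
  have h1 : ∀ x, HasDerivAt (fun x => (l - Θ x)⁻¹ ^ (n + 1) - l⁻¹ ^ (n + 1)) (g1 x) x := by
    intro x
    refine (((dG x).fun_pow (n + 1)).sub_const (l⁻¹ ^ (n + 1))).congr_deriv ?_
    simp only [g1]
    push_cast
    ring
  have h2 : ∀ x, HasDerivAt g1 (g2 x) x := by
    intro x
    refine ((((dG x).fun_pow (n + 2)).fun_mul (d2 x)).const_mul (n + 1 : ℂ)).congr_deriv ?_
    simp only [g2]
    push_cast
    ring
  have b0 : ∀ x, ‖(l - Θ x)⁻¹ ^ (n + 1) - l⁻¹ ^ (n + 1)‖ ≤ (n + 1) * r ^ n * r ^ 2 * ‖Θ x‖ := by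
    intro x
    refine (pow_sub_bound (hG x) hli n).trans ?_
    have : (l - Θ x)⁻¹ - l⁻¹ = (l - Θ x)⁻¹ * l⁻¹ * Θ x := by
      have := hG0 x
      field_simp
      ring
    rw [this, norm_mul, norm_mul, mul_assoc _ (r ^ 2), sq]
    gcongr
    · exact hG x
  have b1 : ∀ x, ‖g1 x‖ ≤ (n + 1) * r ^ (n + 2) * ‖Θ1 x‖ := by
    intro x
    simp only [g1, norm_mul, norm_pow]
    have : ‖(n + 1 : ℂ)‖ = n + 1 := by exact_mod_cast Complex.norm_natCast (n + 1)
    rw [this, ← mul_assoc]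
    gcongr
    exact hG x
  have b2 : ∀ x, ‖g2 x‖ ≤ (n + 1) * ((n + 2) * r ^ (n + 3) * B * ‖Θ1 x‖ +
      r ^ (n + 2) * ‖Θ2 x‖) := by
    intro x
    simp only [g2, norm_mul]
    have e1 : ‖(n + 1 : ℂ)‖ = n + 1 := by exact_mod_cast Complex.norm_natCast (n + 1)
    have e2 : ‖(n + 2 : ℂ)‖ = n + 2 := by exact_mod_cast Complex.norm_natCast (n + 2)
    rw [e1]
    refine mul_le_mul_of_nonneg_left ?_ (by positivity)
    refine (norm_add_le _ _).trans ?_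
    simp only [norm_mul, norm_pow, e2]
    gcongr
    · exact hG x
    · exact hB x
    · exact hG x
  have i0 := Θ.integrable (μ := volume)
  have i1 := Θ1.integrable (μ := volume)
  have i2 := Θ2.integrable (μ := volume)
  have j0 : Integrable (fun x => (l - Θ x)⁻¹ ^ (n + 1) - l⁻¹ ^ (n + 1)) :=
    (i0.norm.const_mul _).mono' ((cG.pow _).sub continuous_const).aestronglyMeasurable
      (ae_of_all _ b0)
  have j1 : Integrable g1 :=
    (i1.norm.const_mul _).mono'
      (continuous_const.mul ((cG.pow _).mul Θ1.continuous)).aestronglyMeasurable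
      (ae_of_all _ b1)
  have k2 : Integrable (fun x => (n + 1 : ℝ) * ((n + 2) * r ^ (n + 3) * B * ‖Θ1 x‖ +
      r ^ (n + 2) * ‖Θ2 x‖)) :=
    ((i1.norm.const_mul _).add (i2.norm.const_mul _)).const_mul _
  have j2 : Integrable g2 :=
    k2.mono'
      (continuous_const.mul ((((continuous_const.mul (cG.pow _)).mul Θ1.continuous).mul
        Θ1.continuous).add ((cG.pow _).mul Θ2.continuous))).aestronglyMeasurable
      (ae_of_all _ b2)
  refine (WA.of_C2 h1 h2 j0 j1 j2).mono ?_
  have q0 := integral_mono j0.norm (i0.norm.const_mul ((n + 1) * r ^ n * r ^ 2)) b0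
  have q2 := integral_mono j2.norm k2 b2
  rw [integral_const_mul] at q0 q2
  rw [integral_add (i1.norm.const_mul _) (i2.norm.const_mul _), integral_const_mul,
    integral_const_mul] at q2
  rw [mul_assoc]
  refine mul_le_mul_of_nonneg_left ?_ Real.pi_pos.le
  have hn : (0 : ℝ) ≤ n := Nat.cast_nonneg n
  have s0 : (n + 1) * r ^ n * r ^ 2 * I0 ≤ (r ^ 2 * I0) * ((n + 1) ^ 2 * r ^ n) := by
    have : (0 : ℝ) ≤ r ^ n * r ^ 2 * I0 := by positivity
    nlinarith [mul_nonneg (mul_nonneg hn this) (by positivity : (0:ℝ) ≤ n + 1)]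
  have s2 : (n + 1 : ℝ) * ((n + 2) * r ^ (n + 3) * B * I1 + r ^ (n + 2) * I2) ≤
      (2 * r ^ 3 * B * I1 + r ^ 2 * I2) * ((n + 1) ^ 2 * r ^ n) := by
    have t1 : (0 : ℝ) ≤ r ^ n * r ^ 3 * B * I1 := by positivity
    have t2 : (0 : ℝ) ≤ r ^ n * r ^ 2 * I2 := by positivity
    have e1 : (n + 1 : ℝ) * ((n + 2) * r ^ (n + 3) * B * I1 + r ^ (n + 2) * I2) =
      ((n + 1) * (n + 2)) * (r ^ n * r ^ 3 * B * I1) + (n + 1) * (r ^ n * r ^ 2 * I2) := by ring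
    have e2 : (2 * r ^ 3 * B * I1 + r ^ 2 * I2) * ((n + 1) ^ 2 * r ^ n) =
      (2 * (n + 1) ^ 2) * (r ^ n * r ^ 3 * B * I1) + (n + 1) ^ 2 * (r ^ n * r ^ 2 * I2) := by ring
    rw [e1, e2]
    refine add_le_add (mul_le_mul_of_nonneg_right ?_ t1) (mul_le_mul_of_nonneg_right ?_ t2) <;>
      nlinarith
  linarith

end WienerAux

namespace WienerAux

open FourierTransform Real Filter Topology

lemma WA.inverse {P : ℝ → ℂ} (hP : Integrable P) (l : ℂ) (η : ℝ) (hη : 0 < η)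
    (h : ∀ ξ, η ≤ ‖l - 𝓕 P ξ‖) :
    l ≠ 0 ∧ ∃ M, WA (fun ξ => l * ((l - 𝓕 P ξ)⁻¹ - l⁻¹)) M := by
  have hl : η ≤ ‖l‖ := by
    have h1 : Tendsto (fun ξ => ‖l - 𝓕 P ξ‖) (cocompact ℝ) (𝓝 ‖l - 0‖) :=
      (tendsto_const_nhds.sub (Real.zero_at_infty_fourier P)).norm
    rw [sub_zero] at h1
    exact ge_of_tendsto h1 (Eventually.of_forall h)
  have hl0 : l ≠ 0 := norm_pos_iff.1 (hη.trans_le hl)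
  refine ⟨hl0, ?_⟩
  obtain ⟨g, hg1, hg2, hg3⟩ := MemLp.exist_eLpNorm_sub_le ENNReal.one_ne_top le_rfl
    (memLp_one_iff_integrable.2 hP) (ε := η / 4) (by positivity)
  let S : SchwartzMap ℝ ℂ := hg1.toSchwartzMap hg2
  have hS : (S : ℝ → ℂ) = g := rfl
  let Θ : SchwartzMap ℝ ℂ := 𝓕 S
  have hΘ : ∀ ξ, Θ ξ = 𝓕 g ξ := fun ξ => by
    rw [← hS, ← SchwartzMap.fourier_coe]
  have ig : Integrable g := hS ▸ S.integrable
  have hD : WA (fun ξ => 𝓕 P ξ - Θ ξ) (η / 4) := by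
    refine ⟨P - g, hP.sub ig, fun ξ => ?_, ?_⟩
    · beta_reduce
      rw [hΘ, sub_eq_add_neg, ← neg_one_smul ℂ g, four_add hP (ig.smul _), four_smul]; ring
    · rw [← ENNReal.ofReal_le_ofReal_iff (by positivity),
        ofReal_integral_norm_eq_lintegral_enorm (hP.sub ig), ← eLpNorm_one_eq_lintegral_enorm]
      exact hg3
  have hDn : ∀ ξ, ‖𝓕 P ξ - Θ ξ‖ ≤ η / 4 := fun ξ => by
    obtain ⟨F, hF, h1, h2⟩ := hD
    have h3 : 𝓕 F ξ = 𝓕 P ξ - Θ ξ := h1 ξ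
    rw [← h3]
    exact (four_norm_le F ξ).trans h2
  have hG : ∀ ξ, 3 * η / 4 ≤ ‖l - Θ ξ‖ := fun ξ => by
    have h1 := h ξ
    have h2 := hDn ξ
    have h3 : l - 𝓕 P ξ = (l - Θ ξ) - (𝓕 P ξ - Θ ξ) := by ring
    have h4 := norm_sub_le (l - Θ ξ) (𝓕 P ξ - Θ ξ)
    rw [← h3] at h4
    linarith
  obtain ⟨K, hK0, hK⟩ := WA.inv_pow Θ l (3 * η / 4) (by positivity) (by linarith) hG
  set r := (3 * η / 4)⁻¹ with hr
  have hr0 : 0 < r := by positivity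
  have hli : ‖l⁻¹‖ ≤ r := by
    rw [norm_inv]; exact inv_anti₀ (by positivity) (by linarith)
  have her : η / 4 * r = 1 / 3 := by rw [hr]; field_simp
  have hterm : ∀ n : ℕ, WA (fun ξ => (𝓕 P ξ - Θ ξ) ^ (n + 1) * (l - Θ ξ)⁻¹ ^ (n + 2))
      (K * ((n + 2) ^ 2 * (1 / 3) ^ (n + 1)) + r * (1 / 3) ^ (n + 1)) := by
    intro n
    have a1 := (hD.pow n).mul (hK (n + 1))
    have a2 := (hD.pow n).smul (l⁻¹ ^ (n + 2))
    have a3 := a1.add a2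
    have e : (fun ξ => (𝓕 P ξ - Θ ξ) ^ (n + 1) * (l - Θ ξ)⁻¹ ^ (n + 2)) = fun x =>
      (𝓕 P x - Θ x) ^ (n + 1) * ((l - Θ x)⁻¹ ^ (n + 1 + 1) - l⁻¹ ^ (n + 1 + 1)) +
        l⁻¹ ^ (n + 2) * (𝓕 P x - Θ x) ^ (n + 1) := by
      ext x; ring
    rw [e]
    refine a3.mono ?_
    rw [← her, mul_pow]
    push_cast
    have b1 : (η / 4) ^ (n + 1) * (K * (((n : ℝ) + 1 + 1) ^ 2 * r ^ (n + 1))) =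
      K * ((n + 2) ^ 2 * ((η / 4) ^ (n + 1) * r ^ (n + 1))) := by ring
    have b2 : ‖l⁻¹ ^ (n + 2)‖ * (η / 4) ^ (n + 1) ≤ r * ((η / 4) ^ (n + 1) * r ^ (n + 1)) := by
      rw [norm_pow]
      calc ‖l⁻¹‖ ^ (n + 2) * (η / 4) ^ (n + 1) ≤ r ^ (n + 2) * (η / 4) ^ (n + 1) := by gcongr
        _ = _ := by ring
    rw [b1]
    gcongr
  have hsum : Summable fun n : ℕ =>
      (K * (((n : ℝ) + 2) ^ 2 * (1 / 3) ^ (n + 1)) + r * (1 / 3) ^ (n + 1)) := by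
    have g1 : Summable fun n : ℕ => ((1 : ℝ) / 3) ^ n :=
      summable_geometric_of_lt_one (by norm_num) (by norm_num)
    have g1' := (summable_nat_add_iff 1).2 g1
    have g2 : Summable fun n : ℕ => (n : ℝ) ^ 2 * ((1 : ℝ) / 3) ^ n :=
      summable_pow_mul_geometric_of_norm_lt_one 2 (by norm_num)
    have g2' := ((summable_nat_add_iff 2).2 g2).mul_left 3
    refine Summable.add (Summable.mul_left K ?_) (g1'.mul_left r)
    refine g2'.congr fun n => ?_
    push_cast
    ring
  obtain ⟨M, hM⟩ := WA.tsum hterm hsum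
  have h0 := hK 0
  refine ⟨‖l‖ * (K * ((((0 : ℕ) : ℝ) + 1) ^ 2 * r ^ 0) + M), ?_⟩
  convert (h0.add hM).smul l using 3 with ξ
  have hGξ : l - Θ ξ ≠ 0 := norm_pos_iff.1 (lt_of_lt_of_le (by positivity) (hG ξ))
  have hPξ : l - 𝓕 P ξ ≠ 0 := norm_pos_iff.1 (lt_of_lt_of_le hη (h ξ))
  have hq : ‖(𝓕 P ξ - Θ ξ) * (l - Θ ξ)⁻¹‖ < 1 := by
    rw [norm_mul, norm_inv, ← div_eq_mul_inv, div_lt_one (norm_pos_iff.2 hGξ)]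
    linarith [hDn ξ, hG ξ]
  have hs : ∑' n : ℕ, (𝓕 P ξ - Θ ξ) ^ (n + 1) * (l - Θ ξ)⁻¹ ^ (n + 2) =
      (𝓕 P ξ - Θ ξ) * (l - Θ ξ)⁻¹ ^ 2 * (1 - (𝓕 P ξ - Θ ξ) * (l - Θ ξ)⁻¹)⁻¹ := by
    rw [← tsum_geometric_of_norm_lt_one hq, ← tsum_mul_left]
    congr 1; ext n
    rw [mul_pow]; ring
  rw [hs]
  have e1 : 1 - (𝓕 P ξ - Θ ξ) * (l - Θ ξ)⁻¹ = (l - 𝓕 P ξ) * (l - Θ ξ)⁻¹ := by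
    field_simp; ring
  rw [e1]
  simp only [zero_add, pow_one]
  field_simp
  ring

/-- Wiener's theorem for `L¹(ℝ)`. -/
theorem wiener {P : ℝ → ℂ} (hP : Integrable P) (l : ℂ) (η : ℝ) (hη : 0 < η)
    (h : ∀ ξ, η ≤ ‖l - 𝓕 P ξ‖) :
    l ≠ 0 ∧ ∃ Q : ℝ → ℂ, Integrable Q ∧ Measurable Q ∧
      ∀ᵐ x, l * Q x = P x + convolution P Q (ContinuousLinearMap.mul ℂ ℂ) volume x := by
  obtain ⟨hl0, M, F, hF, h1, -⟩ := WA.inverse hP l η hη h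
  refine ⟨hl0, hF.1.mk F, hF.congr hF.1.ae_eq_mk, hF.1.stronglyMeasurable_mk.measurable, ?_⟩
  set Q := hF.1.mk F
  have hQ : Integrable Q := hF.congr hF.1.ae_eq_mk
  have h2 : ∀ ξ, 𝓕 Q ξ = l * ((l - 𝓕 P ξ)⁻¹ - l⁻¹) := fun ξ => by
    rw [← four_congr hF.1.ae_eq_mk]; exact h1 ξ
  have hc := hP.integrable_convolution (ContinuousLinearMap.mul ℂ ℂ) hQ
  have hi := (hQ.smul l).add ((hP.add hc).smul (-1 : ℂ))
  have := four_inj hi fun ξ => by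
    rw [four_add (hQ.smul l) ((hP.add hc).smul (-1 : ℂ)), four_smul, four_smul,
      four_add hP hc, four_conv hP hQ, h2]
    have hPξ : l - 𝓕 P ξ ≠ 0 := norm_pos_iff.1 (lt_of_lt_of_le hη (h ξ))
    field_simp
    ring
  filter_upwards [this] with x hx
  simp only [Pi.add_apply, Pi.smul_apply, smul_eq_mul, Pi.zero_apply] at hx
  linear_combination hx

end WienerAux

namespace BergmanAux

open Real Filter Topology Metric

lemma circle_ineq {f : ℂ → ℂ} {z : ℂ} {r : ℝ} (hr : 0 < r) (hf : DiffContOnCl ℂ f (ball z r)) :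
    ENNReal.ofReal (2 * π) * ‖f z‖ₑ ≤ ∫⁻ θ in Set.Ioo (-π) π, ‖f (circleMap z r θ)‖ₑ := by
  have h := DiffContOnCl.circleAverage (c := z) (R := r) (f := f) (by rwa [abs_of_pos hr])
  rw [Real.circleAverage] at h
  have hper : Function.Periodic (fun θ => f (circleMap z r θ)) (2 * π) :=
    (periodic_circleMap z r).comp f
  have h2 := hper.intervalIntegral_add_eq 0 (-π)
  have e1 : (0 : ℝ) + 2 * π = 2 * π := by ring
  have e2 : -π + 2 * π = π := by ring
  rw [e1, e2] at h2
  rw [h2] at h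
  have h3 : (2 * π) • f z = ∫ θ in (-π)..π, f (circleMap z r θ) := by
    rw [← h, smul_smul, mul_inv_cancel₀ (by positivity), one_smul]
  have h4 : ENNReal.ofReal (2 * π) * ‖f z‖ₑ = ‖(2 * π) • f z‖ₑ := by
    rw [enorm_smul, Real.enorm_of_nonneg (by positivity)]
  rw [h4, h3, intervalIntegral.integral_of_le (by linarith [Real.pi_pos]),
    integral_Ioc_eq_integral_Ioo]
  exact enorm_integral_le_lintegral_enorm _

lemma lint_r (R : ℝ) (hR : 0 < R) :
    ∫⁻ r in Set.Ioo 0 R, ENNReal.ofReal r = ENNReal.ofReal (R ^ 2 / 2) := by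
  rw [← ofReal_integral_eq_lintegral_ofReal]
  · rw [← integral_Ioc_eq_integral_Ioo, ← intervalIntegral.integral_of_le hR.le, integral_id]
    simp
  · exact (continuous_id.integrableOn_Icc (a := 0) (b := R)).mono_set Set.Ioo_subset_Icc_self
  · exact (ae_restrict_iff' measurableSet_Ioo).2 (ae_of_all _ fun r hr => hr.1.le)

lemma area_ineq {f : ℂ → ℂ} {z : ℂ} {R : ℝ} (hR : 0 < R) (hf : DifferentiableOn ℂ f (ball z R)) :
    ENNReal.ofReal (π * R ^ 2) * ‖f z‖ₑ ≤ ∫⁻ w in ball z R, ‖f w‖ₑ := by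
  let F : ℂ → ℝ≥0∞ := (ball z R).indicator fun w => ‖f w‖ₑ
  have hFm : Measurable F := by
    have hc : ContinuousOn (fun w => ‖f w‖ₑ) (ball z R) :=
      continuous_enorm.comp_continuousOn hf.continuousOn
    classical
    have := hc.measurable_piecewise (g := fun _ => (0 : ℝ≥0∞)) continuousOn_const
      (measurableSet_ball)
    have e : F = (ball z R).piecewise (fun w => ‖f w‖ₑ) fun _ => 0 := by
      ext w; simp [F, Set.indicator, Set.piecewise]
    rw [e]; exact this
  rw [← lintegral_indicator measurableSet_ball]
  change _ ≤ ∫⁻ w, F w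
  rw [← lintegral_add_left_eq_self F z, ← Complex.lintegral_comp_polarCoord_symm,
    polarCoord_target, Measure.volume_eq_prod, ← Measure.prod_restrict, lintegral_prod]
  swap
  · apply Measurable.aemeasurable
    simp only [Complex.polarCoord_symm_apply, smul_eq_mul]
    refine Measurable.mul (by fun_prop) (hFm.comp ?_)
    fun_prop
  have hsub : Set.Ioo 0 R ⊆ Set.Ioi (0 : ℝ) := fun r hr => hr.1
  refine le_trans ?_ (lintegral_mono_set hsub)
  have : ENNReal.ofReal (π * R ^ 2) * ‖f z‖ₑ =
      ∫⁻ r in Set.Ioo 0 R, ENNReal.ofReal r * (ENNReal.ofReal (2 * π) * ‖f z‖ₑ) := by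
    rw [lintegral_mul_const _ (by fun_prop), lint_r R hR, ← mul_assoc,
      ← ENNReal.ofReal_mul (by positivity)]
    congr 2; ring
  rw [this]
  refine setLIntegral_mono' measurableSet_Ioo fun r hr => ?_
  simp only [smul_eq_mul]
  rw [lintegral_const_mul']
  swap
  · exact ENNReal.ofReal_ne_top
  gcongr
  refine (circle_ineq hr.1 ?_).trans (le_of_eq ?_)
  · refine DifferentiableOn.diffContOnCl ?_
    rw [closure_ball _ hr.1.ne']
    exact hf.mono (closedBall_subset_ball hr.2)
  · refine lintegral_congr fun θ => ?_
    have e : z + Complex.polarCoord.symm (r, θ) = circleMap z r θ := by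
      rw [Complex.polarCoord_symm_apply, circleMap, Complex.exp_mul_I]
      push_cast; rfl
    rw [e]
    simp only [F]
    rw [Set.indicator_of_mem]
    exact (sphere_subset_closedBall.trans (closedBall_subset_ball hr.2))
      (circleMap_mem_sphere z hr.1.le θ)

lemma rpow_min_le (b : ℝ) {s : ℝ} (h1 : 1 / 2 ≤ s) (h2 : s ≤ 3 / 2) :
    min ((1 / 2 : ℝ) ^ b) ((3 / 2) ^ b) ≤ s ^ b := by
  rcases le_total 0 b with hb | hb
  · exact (min_le_left _ _).trans (Real.rpow_le_rpow (by norm_num) h1 hb)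
  · exact (min_le_right _ _).trans (Real.rpow_le_rpow_of_nonpos (by linarith) h2 hb)

theorem pointwise_bound (p a : ℝ) (hp : 1 ≤ p) (f : ℂ → ℂ)
    (hf : DifferentiableOn ℂ f upperHalf) (hb : bergmanNorm p a f < ⊤) :
    ∃ C : ℝ, 0 ≤ C ∧ ∀ z ∈ upperHalf, ‖f z‖ ≤ C * z.im ^ (-((a + 1) / p)) := by
  have hp0 : 0 < p := by linarith
  set J := ∫⁻ z in upperHalf, (‖f z‖₊ : ℝ≥0∞) ^ p * ENNReal.ofReal (z.im ^ (a - 1)) with hJ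
  have hJt : J ≠ ⊤ := by
    intro h
    rw [bergmanNorm, ← hJ, h, ENNReal.top_rpow_of_pos (by positivity)] at hb
    exact lt_irrefl _ hb
  set k := min ((1 / 2 : ℝ) ^ (a - 1)) ((3 / 2) ^ (a - 1)) with hk
  have hk0 : 0 < k := lt_min (by positivity) (by positivity)
  refine ⟨(J.toReal / (π / 4 * k)) ^ (1 / p), by positivity, fun z hz => ?_⟩
  have hy : 0 < z.im := hz
  set y := z.im with hyd
  set R := y / 2 with hR
  have hR0 : 0 < R := by positivity
  have hball : ∀ w ∈ ball z R, y / 2 ≤ w.im ∧ w.im ≤ 3 * y / 2 := by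
    intro w hw
    have h1 : |(w - z).im| ≤ ‖w - z‖ := Complex.abs_im_le_norm _
    have h2 : ‖w - z‖ < R := by rwa [mem_ball, dist_eq_norm] at hw
    rw [Complex.sub_im] at h1
    have := abs_le.1 (h1.trans h2.le)
    constructor <;> linarith [this.1, this.2]
  have hsub : ball z R ⊆ upperHalf := fun w hw => by
    have := (hball w hw).1
    change 0 < w.im
    linarith
  have hfb := hf.mono hsub
  set I := ∫⁻ w in ball z R, ‖f w‖ₑ ^ p with hI
  set V := ENNReal.ofReal (π * R ^ 2) with hV
  have hV0 : V ≠ 0 := by rw [hV]; simp; positivity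
  have hVt : V ≠ ⊤ := ENNReal.ofReal_ne_top
  have hvol : volume (ball z R) = V := by
    rw [Complex.volume_ball, hV, ENNReal.ofReal_mul Real.pi_pos.le, ENNReal.ofReal_pow hR0.le,
      mul_comm]
    congr 1
    rw [← NNReal.coe_real_pi, ENNReal.ofReal_coe_nnreal]
  have hH : ∫⁻ w in ball z R, ‖f w‖ₑ ≤ I ^ (1 / p) * V ^ (1 - 1 / p) := by
    have h := eLpNorm_le_eLpNorm_mul_rpow_measure_univ (p := 1) (q := ENNReal.ofReal p)
      (μ := volume.restrict (ball z R)) (f := f) (by simpa using hp)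
      (hfb.continuousOn.aestronglyMeasurable measurableSet_ball)
    rw [eLpNorm_one_eq_lintegral_enorm, eLpNorm_eq_lintegral_rpow_enorm_toReal
      (by simpa using hp0) ENNReal.ofReal_ne_top, Measure.restrict_apply_univ, hvol,
      ENNReal.toReal_ofReal hp0.le] at h
    simpa using h
  have hA := (area_ineq hR0 hfb).trans hH
  -- raise to the power p
  have hA2 : V * ‖f z‖ₑ ^ p ≤ I := by
    have h1 : (V * ‖f z‖ₑ) ^ p ≤ (I ^ (1 / p) * V ^ (1 - 1 / p)) ^ p :=
      ENNReal.rpow_le_rpow hA hp0.le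
    rw [ENNReal.mul_rpow_of_nonneg _ _ hp0.le, ENNReal.mul_rpow_of_nonneg _ _ hp0.le,
      ← ENNReal.rpow_mul, ← ENNReal.rpow_mul, one_div_mul_cancel hp0.ne', ENNReal.rpow_one] at h1
    have e : (1 - 1 / p) * p = p - 1 := by field_simp
    have e2 : V ^ p = V ^ (p - 1) * V := by
      conv_rhs => rw [← ENNReal.rpow_one V, ← ENNReal.rpow_mul, one_mul]
      rw [← ENNReal.rpow_add _ _ hV0 hVt]; congr 1; ring
    rw [e, e2, mul_comm I, mul_assoc] at h1
    exact (ENNReal.mul_le_mul_iff_right (ENNReal.rpow_pos (pos_iff_ne_zero.2 hV0) hVt).ne'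
      (ENNReal.rpow_ne_top_of_nonneg (by linarith) hVt)).1 h1
  have hIJ : I * ENNReal.ofReal (k * y ^ (a - 1)) ≤ J := by
    rw [hI, ← lintegral_mul_const' _ _ ENNReal.ofReal_ne_top]
    refine le_trans ?_ (lintegral_mono_set hsub)
    refine setLIntegral_mono' measurableSet_ball fun w hw => ?_
    rw [enorm_eq_nnnorm]
    gcongr
    obtain ⟨b1, b2⟩ := hball w hw
    have e : w.im = (w.im / y) * y := by field_simp
    rw [e, Real.mul_rpow (by apply div_nonneg <;> linarith) hy.le]
    gcongr
    refine rpow_min_le _ ?_ ?_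
    · rw [le_div_iff₀ hy]; linarith
    · rw [div_le_iff₀ hy]; linarith
  have hfin : V * ‖f z‖ₑ ^ p * ENNReal.ofReal (k * y ^ (a - 1)) ≤ J := by
    refine le_trans ?_ hIJ
    gcongr
  have hreal : π * R ^ 2 * ‖f z‖ ^ p * (k * y ^ (a - 1)) ≤ J.toReal := by
    have := ENNReal.toReal_mono hJt hfin
    rw [ENNReal.toReal_mul, ENNReal.toReal_mul, hV, ENNReal.toReal_ofReal (by positivity),
      ENNReal.toReal_ofReal (by positivity), ← ENNReal.toReal_rpow, toReal_enorm] at this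
    exact this
  have hpow : ‖f z‖ ^ p ≤ (J.toReal / (π / 4 * k)) * y ^ (-(a + 1)) := by
    have e : y ^ (a - 1) * y ^ 2 * y ^ (-(a + 1)) = 1 := by
      rw [← Real.rpow_natCast y 2, ← Real.rpow_add hy, ← Real.rpow_add hy]
      have : a - 1 + ((2 : ℕ) : ℝ) + -(a + 1) = 0 := by push_cast; ring
      rw [this, Real.rpow_zero]
    have hyp : 0 < y ^ (-(a + 1)) := by positivity
    rw [div_mul_eq_mul_div, le_div_iff₀ (by positivity)]
    calc ‖f z‖ ^ p * (π / 4 * k) =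
        (π * R ^ 2 * ‖f z‖ ^ p * (k * y ^ (a - 1))) * y ^ (-(a + 1)) := by
          rw [hR]
          linear_combination (-(‖f z‖ ^ p * (π / 4 * k))) * e
      _ ≤ _ := by gcongr
  have := Real.rpow_le_rpow (by positivity) hpow (by positivity : 0 ≤ 1 / p)
  rw [← Real.rpow_mul (norm_nonneg _), mul_one_div_cancel hp0.ne', Real.rpow_one,
    Real.mul_rpow (by positivity) (by positivity), ← Real.rpow_mul hy.le] at this
  convert this using 3
  ring

end BergmanAux

namespace HausAux

open Real Filter Topology Metric FourierTransform

lemma image_exp : Real.exp '' Set.univ = Set.Ioi (0 : ℝ) := by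
  rw [Set.image_univ, Real.range_exp]

lemma integral_exp_subst (g : ℝ → ℂ) :
    ∫ t in Set.Ioi (0 : ℝ), g t = ∫ u : ℝ, (Real.exp u : ℂ) * g (Real.exp u) := by
  have := integral_image_eq_integral_abs_deriv_smul (f := Real.exp) (f' := Real.exp)
    MeasurableSet.univ (fun x _ => (Real.hasDerivAt_exp x).hasDerivWithinAt)
    Real.exp_injective.injOn g
  rw [image_exp] at this
  rw [this, setIntegral_univ]
  congr 1; ext u
  rw [abs_of_pos (Real.exp_pos u), Complex.real_smul]

lemma integrable_exp_subst (g : ℝ → ℝ) :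
    IntegrableOn g (Set.Ioi (0 : ℝ)) ↔ Integrable fun u : ℝ => Real.exp u * g (Real.exp u) := by
  have := integrableOn_image_iff_integrableOn_abs_deriv_smul (f := Real.exp) (f' := Real.exp)
    MeasurableSet.univ (fun x _ => (Real.hasDerivAt_exp x).hasDerivWithinAt)
    Real.exp_injective.injOn g
  rw [image_exp, integrableOn_univ] at this
  rw [this]
  simp only [abs_of_pos (Real.exp_pos _), smul_eq_mul]

/-- Logarithmic form of the kernel. -/
noncomputable def tr (φ : ℝ → ℂ) (c u : ℝ) : ℂ := φ (Real.exp u) * (Real.exp (c * u) : ℂ)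

/-- Restriction of `f` to a ray, in logarithmic form. -/
noncomputable def ray (f : ℂ → ℂ) (c : ℝ) (z : ℂ) (u : ℝ) : ℂ :=
  f (z / (Real.exp u : ℂ)) * (Real.exp (-(c * u)) : ℂ)

/-- The averaging operator `F ↦ ∫ F(v+u) P(u) du`. -/
noncomputable def S (P F : ℝ → ℂ) (v : ℝ) : ℂ := ∫ u, F (v + u) * P u

lemma tr_measurable {φ : ℝ → ℂ} (h : Measurable φ) (c : ℝ) : Measurable (tr φ c) := by
  unfold tr
  exact (h.comp Real.measurable_exp).mul (by fun_prop)

lemma tr_integrable_iff {φ : ℝ → ℂ} (h : Measurable φ) (c : ℝ) :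
    IntegrableOn (fun t => ‖φ t‖ * t ^ (c - 1)) (Set.Ioi (0 : ℝ)) ↔ Integrable (tr φ c) := by
  rw [integrable_exp_subst, ← integrable_norm_iff (tr_measurable h c).aestronglyMeasurable]
  refine iff_of_eq (congrArg (fun g => Integrable g volume) (funext fun u => ?_))
  rw [tr, norm_mul, Complex.norm_real, Real.norm_of_nonneg (Real.exp_pos _).le,
    ← Real.exp_mul, mul_left_comm, ← Real.exp_add]
  congr 2; ring

lemma exp_cancel (x : ℝ) : (Real.exp (-x) : ℂ) * (Real.exp x : ℂ) = 1 := by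
  rw [← Complex.ofReal_mul, ← Real.exp_add]; simp

lemma Hphi_eq (φ : ℝ → ℂ) (f : ℂ → ℂ) (c : ℝ) (z : ℂ) :
    HphiHol φ f z = ∫ u, ray f c z u * tr φ c u := by
  rw [HphiHol, integral_exp_subst]
  congr 1; ext u
  have h := exp_cancel (c * u)
  have h0 : (Real.exp u : ℂ) ≠ 0 := by exact_mod_cast (Real.exp_pos u).ne'
  rw [ray, tr, mul_div_cancel₀ _ h0]
  linear_combination (-(f (z / (Real.exp u : ℂ)) * φ (Real.exp u))) * h

lemma ray_Hphi (φ : ℝ → ℂ) (f : ℂ → ℂ) (c : ℝ) (z : ℂ) (v : ℝ) :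
    ray (HphiHol φ f) c z v = S (tr φ c) (ray f c z) v := by
  rw [ray, Hphi_eq φ f c, S, ← integral_mul_const]
  congr 1; ext u
  rw [ray, ray, mul_add, neg_add, Real.exp_add, Real.exp_add, div_div]
  push_cast
  ring

lemma S_measurable {P F : ℝ → ℂ} (hP : Measurable P) (hF : Measurable F) :
    StronglyMeasurable (S P F) := by
  unfold S
  have : StronglyMeasurable (Function.uncurry fun v u => F (v + u) * P u) :=
    Measurable.stronglyMeasurable (by fun_prop)
  exact this.integral_prod_right

lemma S_bound {P F : ℝ → ℂ} (hP : Integrable P) {C : ℝ} (hC : ∀ u, ‖F u‖ ≤ C) (v : ℝ) :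
    ‖S P F v‖ ≤ C * ∫ u, ‖P u‖ := by
  rw [S, ← integral_const_mul]
  refine norm_integral_le_of_norm_le (hP.norm.const_mul C) (ae_of_all _ fun u => ?_)
  rw [norm_mul]
  gcongr
  exact hC _

lemma mul_integrable {P F : ℝ → ℂ} (hP : Integrable P) (hF : AEStronglyMeasurable F volume)
    {C : ℝ} (hC : ∀ u, ‖F u‖ ≤ C) : Integrable fun u => F u * P u :=
  hP.bdd_mul hF (ae_of_all _ hC)

lemma S_comp {P Q F : ℝ → ℂ} (hP : Integrable P) (hQ : Integrable Q) (hF : Measurable F)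
    {C : ℝ} (hC : ∀ u, ‖F u‖ ≤ C) :
    ∫ u, S Q F u * P u = ∫ u, F u * convolution P Q (ContinuousLinearMap.mul ℂ ℂ) volume u := by
  have hi := hP.convolution_integrand (ContinuousLinearMap.mul ℂ ℂ) hQ
  simp only [ContinuousLinearMap.mul_apply'] at hi
  have hi2 : Integrable (Function.uncurry fun x t => F x * (P t * Q (x - t)))
      (volume.prod volume) := by
    refine hi.bdd_mul (c := C) ?_ (ae_of_all _ fun q => hC _)
    exact (hF.comp measurable_fst).aestronglyMeasurable
  simp only [convolution, ContinuousLinearMap.mul_apply', ← integral_const_mul]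
  rw [integral_integral_swap hi2]
  congr 1; ext t
  rw [S, ← integral_mul_const,
    ← integral_add_left_eq_self (fun x => F x * (P t * Q (x - t))) t]
  congr 1; ext x
  rw [add_sub_cancel_left]; ring

lemma fourier_tr (φ : ℝ → ℂ) (c x : ℝ) : 𝓕 (tr φ c) x = khat φ c (2 * π * x) := by
  rw [khat, integral_exp_subst, Real.fourier_eq]
  congr 1; ext u
  have h0 : (Real.exp u : ℂ) ≠ 0 := by exact_mod_cast (Real.exp_pos u).ne'
  rw [Circle.smul_def, Real.fourierChar_apply, tr, Complex.cpow_def_of_ne_zero h0,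
    ← Complex.ofReal_log (Real.exp_pos u).le, Real.log_exp, smul_eq_mul]
  simp only [RCLike.inner_apply, conj_trivial]
  push_cast
  rw [mul_left_comm, ← Complex.exp_add, mul_left_comm, ← Complex.exp_add]
  congr 2; ring

lemma conv_comm (P Q : ℝ → ℂ) (x : ℝ) :
    convolution P Q (ContinuousLinearMap.mul ℂ ℂ) volume x =
      convolution Q P (ContinuousLinearMap.mul ℂ ℂ) volume x := by
  simp only [convolution, ContinuousLinearMap.mul_apply']
  rw [← integral_sub_left_eq_self (fun t => P t * Q (x - t)) volume x]
  congr 1; ext t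
  rw [sub_sub_cancel, mul_comm]

lemma ray_zero (f : ℂ → ℂ) (c : ℝ) (z : ℂ) : ray f c z 0 = f z := by
  simp [ray]

lemma div_mem {z : ℂ} (hz : z ∈ upperHalf) (u : ℝ) : z / (Real.exp u : ℂ) ∈ upperHalf := by
  change 0 < (z / (Real.exp u : ℂ)).im
  rw [Complex.div_ofReal_im]
  exact div_pos hz (Real.exp_pos u)

lemma ray_continuous {f : ℂ → ℂ} (hf : DifferentiableOn ℂ f upperHalf) (c : ℝ) {z : ℂ}
    (hz : z ∈ upperHalf) : Continuous (ray f c z) := by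
  unfold ray
  refine Continuous.mul ?_ (by fun_prop)
  refine hf.continuousOn.comp_continuous ?_ (div_mem hz)
  refine continuous_const.div (by fun_prop) fun u => ?_
  exact_mod_cast (Real.exp_pos u).ne'

lemma ray_bound {f : ℂ → ℂ} {C c : ℝ} (hC : ∀ z ∈ upperHalf, ‖f z‖ ≤ C * z.im ^ (-c)) {z : ℂ}
    (hz : z ∈ upperHalf) (u : ℝ) : ‖ray f c z u‖ ≤ C * z.im ^ (-c) := by
  have h := hC _ (div_mem hz u)
  rw [Complex.div_ofReal_im, Real.div_rpow (le_of_lt hz) (Real.exp_pos u).le, ← Real.exp_mul] at h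
  rw [ray, norm_mul, Complex.norm_real, Real.norm_of_nonneg (Real.exp_pos _).le]
  calc _ ≤ C * (z.im ^ (-c) / Real.exp (u * -c)) * Real.exp (-(c * u)) := by gcongr
    _ = _ := by
      have : u * -c = -(c * u) := by ring
      rw [this]
      field_simp

end HausAux

/-- For `l` outside the closure of the range of `k̂_{a,p}`, there is a
measurable `ψ` with `∫₀^∞ |ψ(t)| t^{(a+1)/p −1} dt < ∞` such that for every holomorphic `f`
on `𝕌` with finite weighted Bergman norm, `(1/l)(g + ℋ_ψ g) = f` where `g = l f − ℋ_φ f`,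
and `l h − ℋ_φ h = f` where `h = (1/l)(f + ℋ_ψ f)`, at every point of `𝕌`. -/
theorem stmt12 (p a : ℝ) (hp : 1 ≤ p) (ha : 0 < a) (φ : ℝ → ℂ) (hφm : Measurable φ)
    (hφ : IntegrableOn (fun t => ‖φ t‖ * t ^ ((a + 1) / p - 1)) (Set.Ioi (0 : ℝ)))
    (l : ℂ) (hl : l ∉ closure (Set.range (khat φ ((a + 1) / p)))) :
    ∃ ψ : ℝ → ℂ, Measurable ψ ∧
      IntegrableOn (fun t => ‖ψ t‖ * t ^ ((a + 1) / p - 1)) (Set.Ioi (0 : ℝ)) ∧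
      ∀ f : ℂ → ℂ, DifferentiableOn ℂ f upperHalf → bergmanNorm p a f < ⊤ →
        (∀ z ∈ upperHalf,
          (1 / l) * ((fun w => l * f w - HphiHol φ f w) z +
            HphiHol ψ (fun w => l * f w - HphiHol φ f w) z) = f z) ∧
        (∀ z ∈ upperHalf,
          l * ((fun w => (1 / l) * (f w + HphiHol ψ f w)) z) -
            HphiHol φ (fun w => (1 / l) * (f w + HphiHol ψ f w)) z = f z) := by
  set c := (a + 1) / p with hc
  set P := HausAux.tr φ c with hPd
  have hPm : Measurable P := HausAux.tr_measurable hφm c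
  have hP : Integrable P := (HausAux.tr_integrable_iff hφm c).1 hφ
  rw [Metric.mem_closure_iff] at hl
  push Not at hl
  obtain ⟨η, hη, hηl⟩ := hl
  obtain ⟨hl0, Q, hQ, hQm, hPQ⟩ := WienerAux.wiener hP l η hη fun ξ => by
    rw [HausAux.fourier_tr, ← dist_eq_norm]
    exact hηl _ ⟨_, rfl⟩
  have hψm : Measurable fun t : ℝ => Q (Real.log t) * ((Real.exp (-(c * Real.log t)) : ℝ) : ℂ) := by
    fun_prop
  refine ⟨_, hψm, ?_⟩
  set ψ : ℝ → ℂ := fun t => Q (Real.log t) * ((Real.exp (-(c * Real.log t)) : ℝ) : ℂ) with hψ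
  have hψQ : HausAux.tr ψ c = Q := by
    ext u
    simp only [HausAux.tr, hψ, Real.log_exp]
    rw [mul_assoc, HausAux.exp_cancel, mul_one]
  refine ⟨(HausAux.tr_integrable_iff hψm c).2 (hψQ ▸ hQ), fun f hf hfb => ?_⟩
  obtain ⟨C, hC0, hC⟩ := BergmanAux.pointwise_bound p a hp f hf hfb
  have key : ∀ z ∈ upperHalf, ∃ B, (∀ u, ‖HausAux.ray f c z u‖ ≤ B) ∧
      Measurable (HausAux.ray f c z) := fun z hz =>
    ⟨_, HausAux.ray_bound hC hz, (HausAux.ray_continuous hf c hz).measurable⟩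
  have main : ∀ F : ℝ → ℂ, Measurable F → ∀ B, (∀ u, ‖F u‖ ≤ B) →
      l * (∫ u, F u * Q u) = (∫ u, F u * P u) +
        ∫ u, F u * convolution P Q (ContinuousLinearMap.mul ℂ ℂ) volume u := by
    intro F hF B hB
    rw [← integral_const_mul, ← integral_add
      (HausAux.mul_integrable hP hF.aestronglyMeasurable hB)
      (HausAux.mul_integrable (hP.integrable_convolution _ hQ) hF.aestronglyMeasurable hB)]
    refine integral_congr_ae ?_
    filter_upwards [hPQ] with u hu
    linear_combination (F u) * hu
  constructor
  · intro z hz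
    obtain ⟨B, hB, hF⟩ := key z hz
    set F := HausAux.ray f c z with hFd
    have hm := main F hF B hB
    have e1 : HphiHol φ f z = ∫ u, F u * P u := HausAux.Hphi_eq φ f c z
    have e2 : HphiHol ψ (fun w => l * f w - HphiHol φ f w) z =
        l * (∫ u, F u * Q u) - ∫ u, HausAux.S P F u * Q u := by
      rw [HausAux.Hphi_eq ψ _ c z, hψQ, ← integral_const_mul, ← integral_sub
        ((HausAux.mul_integrable hQ hF.aestronglyMeasurable hB).const_mul l)
        (HausAux.mul_integrable hQ (HausAux.S_measurable hPm hF).aestronglyMeasurable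
          (HausAux.S_bound hP hB))]
      congr 1; ext u
      rw [← HausAux.ray_Hphi, hFd]
      simp only [HausAux.ray]
      ring
    rw [HausAux.S_comp hQ hP hF hB] at e2
    simp only [HausAux.conv_comm Q P] at e2
    beta_reduce
    rw [e2, e1, hm]
    field_simp
    ring
  · intro z hz
    obtain ⟨B, hB, hF⟩ := key z hz
    set F := HausAux.ray f c z with hFd
    have hm := main F hF B hB
    have e1 : HphiHol ψ f z = ∫ u, F u * Q u := by
      rw [HausAux.Hphi_eq ψ f c z, hψQ]
    have e2 : HphiHol φ (fun w => (1 / l) * (f w + HphiHol ψ f w)) z =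
        (1 / l) * ((∫ u, F u * P u) + ∫ u, HausAux.S Q F u * P u) := by
      rw [HausAux.Hphi_eq φ _ c z, ← integral_add
        (HausAux.mul_integrable hP hF.aestronglyMeasurable hB)
        (HausAux.mul_integrable hP (HausAux.S_measurable hQm hF).aestronglyMeasurable
          (HausAux.S_bound hQ hB)), ← integral_const_mul]
      congr 1; ext u
      rw [← hψQ, ← HausAux.ray_Hphi, hFd]
      simp only [HausAux.ray, hPd]
      ring
    rw [HausAux.S_comp hP hQ hF hB] at e2
    beta_reduce
    rw [e2, e1, ← hm]
    field_simp
    ring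
end

section
/- Let 1 ≤ p < ∞, a > 0, and let φ : (0,∞) → ℂ be measurable with ∫₀^∞ |φ(t)| t^{(a+1)/p − 1} dt < ∞. For ξ ∈ ℝ and ε ∈ (0,1), let f_{ε,ξ}(z) = (z+i)^{−(a+1)/p − ε + iξ} (principal branch) for z ∈ 𝕌. Then ‖f_{ε,ξ}‖_{A^p_a} < ∞ and, for each fixed ξ ∈ ℝ, lim_{ε→0⁺} ‖ℋ_φ f_{ε,ξ} − k̂_{a,p}(ξ)·f_{ε,ξ}‖_{A^p_a} / ‖f_{ε,ξ}‖_{A^p_a} = 0. -/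
open MeasureTheory Filter
open scoped ENNReal NNReal Topology

/-- The test function `f_{ε,ξ}(z) = (z+i)^{−c − ε + iξ}` (principal branch), `c = (a+1)/p`. -/
noncomputable def testFun (c ε ξ : ℝ) (z : ℂ) : ℂ :=
  (z + Complex.I) ^ (((-c - ε : ℝ) : ℂ) + Complex.I * (ξ : ℂ))

lemma norm_cpow_upper (w s : ℂ) (hw : 0 < w.im) :
    ‖w ^ s‖ ≤ Real.exp (Real.pi * |s.im|) * ‖w‖ ^ s.re := by
  have hw0 : w ≠ 0 := by rintro rfl; simp at hw
  rw [Complex.norm_cpow_of_ne_zero hw0, div_eq_mul_inv, ← Real.exp_neg, mul_comm]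
  gcongr
  have h1 := Complex.abs_arg_le_pi w
  calc -(w.arg * s.im) ≤ |w.arg * s.im| := neg_le_abs _
    _ = |w.arg| * |s.im| := abs_mul _ _
    _ ≤ _ := by gcongr

lemma norm_cpow_lower (w s : ℂ) (hw : 0 < w.im) :
    Real.exp (-(Real.pi * |s.im|)) * ‖w‖ ^ s.re ≤ ‖w ^ s‖ := by
  have hw0 : w ≠ 0 := by rintro rfl; simp at hw
  rw [Complex.norm_cpow_of_ne_zero hw0, div_eq_mul_inv, ← Real.exp_neg, mul_comm]
  refine mul_le_mul_of_nonneg_left (Real.exp_le_exp.2 (neg_le_neg ?_)) (by positivity)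
  have h1 := Complex.abs_arg_le_pi w
  calc (w.arg * s.im) ≤ |w.arg * s.im| := le_abs_self _
    _ = |w.arg| * |s.im| := abs_mul _ _
    _ ≤ _ := by gcongr

lemma measurableSet_upperHalf : MeasurableSet upperHalf :=
  measurableSet_lt measurable_const Complex.measurable_im

lemma norm_add_I_ge (z : ℂ) (hz : 0 < z.im) : 1 + z.im ≤ ‖z + Complex.I‖ := by
  have := Complex.abs_im_le_norm (z + Complex.I)
  simp at this
  rw [abs_of_pos (by linarith)] at this
  linarith

lemma lintegral_complex (F : ℝ × ℝ → ℝ≥0∞) :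
    ∫⁻ z : ℂ, F (z.re, z.im) = ∫⁻ q : ℝ × ℝ, F q :=
  Complex.volume_preserving_equiv_real_prod.lintegral_comp_emb
    Complex.measurableEquivRealProd.measurableEmbedding F

lemma lint_y_fin (a δ : ℝ) (ha : 0 < a) (hδ : 0 < δ) :
    ∫⁻ y in Set.Ioi (0 : ℝ), ENNReal.ofReal ((1 + y) ^ (-(a + δ)) * y ^ (a - 1)) < ⊤ := by
  rw [← Set.Ioc_union_Ioi_eq_Ioi (zero_le_one' ℝ)]
  refine (lintegral_union_le _ _ _).trans_lt (ENNReal.add_lt_top.2 ⟨?_, ?_⟩)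
  · have h : IntegrableOn (fun y : ℝ => y ^ (a - 1)) (Set.Ioc 0 1) :=
      (intervalIntegrable_iff_integrableOn_Ioc_of_le zero_le_one).1
        (intervalIntegral.intervalIntegrable_rpow' (by linarith))
    refine lt_of_le_of_lt (setLIntegral_mono' measurableSet_Ioc fun y hy => ?_) h.lintegral_lt_top
    apply ENNReal.ofReal_le_ofReal
    have h1 : (1 + y) ^ (-(a + δ)) ≤ 1 :=
      Real.rpow_le_one_of_one_le_of_nonpos (by linarith [hy.1]) (by linarith)
    have h2 : 0 ≤ y ^ (a - 1) := Real.rpow_nonneg hy.1.le _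
    nlinarith
  · have h : IntegrableOn (fun y : ℝ => y ^ (-1 - δ)) (Set.Ioi 1) :=
      integrableOn_Ioi_rpow_of_lt (by linarith) one_pos
    refine lt_of_le_of_lt (setLIntegral_mono' measurableSet_Ioi fun y hy => ?_) h.lintegral_lt_top
    apply ENNReal.ofReal_le_ofReal
    have hy : (1 : ℝ) < y := hy
    have hy0 : 0 < y := by linarith
    have h1 : (1 + y) ^ (-(a + δ)) ≤ y ^ (-(a + δ)) :=
      Real.rpow_le_rpow_of_nonpos hy0 (by linarith) (by linarith)
    have h2 : 0 ≤ y ^ (a - 1) := Real.rpow_nonneg hy0.le _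
    calc _ ≤ y ^ (-(a + δ)) * y ^ (a - 1) := by gcongr
      _ = _ := by rw [← Real.rpow_add hy0]; congr 1; ring

lemma lint_J_fin (a b : ℝ) (ha : 0 < a) (hb : a + 1 < b) :
    ∫⁻ z in upperHalf, ENNReal.ofReal (‖z + Complex.I‖ ^ (-b)) * ENNReal.ofReal (z.im ^ (a - 1))
      < ⊤ := by
  obtain ⟨δ, hδ, hbδ⟩ : ∃ δ : ℝ, 0 < δ ∧ b = (1 + δ) + (a + δ) :=
    ⟨(b - a - 1) / 2, by linarith, by ring⟩
  let X : ℝ → ℝ≥0∞ := fun x => ENNReal.ofReal (2 ^ (1 + δ) * (1 + ‖x‖) ^ (-(1 + δ)))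
  let Y : ℝ → ℝ≥0∞ := (Set.Ioi (0 : ℝ)).indicator
    fun y => ENNReal.ofReal ((1 + y) ^ (-(a + δ)) * y ^ (a - 1))
  have hX : ∫⁻ x, X x < ⊤ :=
    ((integrable_one_add_norm (μ := volume) (r := 1 + δ) (E := ℝ)
      (by simp [hδ])).const_mul _).lintegral_lt_top
  have hY : ∫⁻ y, Y y < ⊤ := by
    rw [lintegral_indicator measurableSet_Ioi]; exact lint_y_fin a δ ha hδ
  have hXm : Measurable X := by fun_prop
  have hYm : Measurable Y := Measurable.indicator (by fun_prop) measurableSet_Ioi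
  have key := lintegral_complex (fun q => X q.1 * Y q.2)
  rw [Measure.volume_eq_prod, lintegral_prod_mul hXm.aemeasurable hYm.aemeasurable] at key
  refine lt_of_le_of_lt ?_ (key ▸ ENNReal.mul_lt_top hX hY)
  rw [← lintegral_indicator measurableSet_upperHalf]
  refine lintegral_mono fun z => ?_
  by_cases hz : z ∈ upperHalf
  · have hz' : 0 < z.im := hz
    have hz'' : z.im ∈ Set.Ioi (0 : ℝ) := hz
    simp only [Set.indicator_of_mem hz, X, Y, Set.indicator_of_mem hz'']
    have hge := norm_add_I_ge z hz'
    have hn : 0 < ‖z + Complex.I‖ := by linarith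
    rw [← ENNReal.ofReal_mul (by positivity), ← ENNReal.ofReal_mul (by positivity)]
    apply ENNReal.ofReal_le_ofReal
    rw [← mul_assoc, hbδ, neg_add, Real.rpow_add hn]
    have hx : ‖z.re‖ ≤ ‖z + Complex.I‖ := by
      have := Complex.abs_re_le_norm (z + Complex.I); simpa using this
    gcongr ?_ * ?_ * _
    · rw [Real.rpow_neg (by positivity), ← Real.inv_rpow (by positivity),
        Real.rpow_neg (by positivity), ← Real.inv_rpow (by positivity),
        ← Real.mul_rpow (by positivity) (by positivity)]
      apply Real.rpow_le_rpow (by positivity) _ (by positivity)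
      rw [← div_eq_mul_inv, inv_eq_one_div, div_le_div_iff₀ hn (by positivity)]
      linarith
    · exact Real.rpow_le_rpow_of_nonpos (by linarith) hge (by linarith)
  · simp [Set.indicator_of_notMem hz]

lemma lint_J_lower (a b η : ℝ) (hη : 0 < η) (hb : b = a + 1 + η) (ha : 0 < a) :
    ENNReal.ofReal (3 ^ (-b) / η) ≤
    ∫⁻ z in upperHalf, ENNReal.ofReal (‖z + Complex.I‖ ^ (-b)) *
      ENNReal.ofReal (z.im ^ (a - 1)) := by
  let S : Set (ℝ × ℝ) := {q | 1 < q.2 ∧ 0 < q.1 ∧ q.1 < q.2}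
  have hS : MeasurableSet S := by
    refine (measurableSet_lt measurable_const measurable_snd).inter
      ((measurableSet_lt measurable_const measurable_fst).inter
        (measurableSet_lt measurable_fst measurable_snd))
  let F : ℝ × ℝ → ℝ≥0∞ := S.indicator fun q => ENNReal.ofReal ((3 * q.2) ^ (-b) * q.2 ^ (a - 1))
  have hF : Measurable F := Measurable.indicator (by fun_prop) hS
  have h1 : ∫⁻ z : ℂ, F (z.re, z.im) ≤ ∫⁻ z in upperHalf,
      ENNReal.ofReal (‖z + Complex.I‖ ^ (-b)) * ENNReal.ofReal (z.im ^ (a - 1)) := by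
    rw [← lintegral_indicator measurableSet_upperHalf]
    refine lintegral_mono fun z => ?_
    by_cases hz : (z.re, z.im) ∈ S
    · obtain ⟨h1, h2, h3⟩ := hz
      simp only at h1 h2 h3
      have hz : (z.re, z.im) ∈ S := ⟨h1, h2, h3⟩
      have hzu : z ∈ upperHalf := by change 0 < z.im; linarith
      have hge := norm_add_I_ge z hzu
      simp only [F, Set.indicator_of_mem hz, Set.indicator_of_mem hzu]
      have h0 : 0 < z.im := by linarith
      rw [← ENNReal.ofReal_mul (by positivity)]
      apply ENNReal.ofReal_le_ofReal
      gcongr ?_ * _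
      refine Real.rpow_le_rpow_of_nonpos (by linarith) ?_ (by linarith)
      have := Complex.norm_le_abs_re_add_abs_im (z + Complex.I)
      simp at this
      rw [abs_of_pos h2, abs_of_pos (by linarith)] at this
      linarith
    · simp [F, Set.indicator_of_notMem hz]
  refine le_trans ?_ h1
  rw [lintegral_complex, Measure.volume_eq_prod, lintegral_prod_symm _ hF.aemeasurable]
  have h2 : ∀ y : ℝ, ∫⁻ x, F (x, y) =
      (Set.Ioi (1 : ℝ)).indicator (fun y => ENNReal.ofReal (3 ^ (-b) * y ^ (-1 - η))) y := by
    intro y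
    by_cases hy : 1 < y
    · have hy0 : 0 < y := by linarith
      have : (fun x => F (x, y)) = (Set.Ioo 0 y).indicator
          fun _ => ENNReal.ofReal ((3 * y) ^ (-b) * y ^ (a - 1)) := by
        ext x
        by_cases hx : x ∈ Set.Ioo 0 y
        · have : (x, y) ∈ S := ⟨hy, hx.1, hx.2⟩
          simp only [F, Set.indicator_of_mem this, Set.indicator_of_mem hx]
        · have : (x, y) ∉ S := fun h => hx ⟨h.2.1, h.2.2⟩
          simp only [F, Set.indicator_of_notMem this, Set.indicator_of_notMem hx]
      rw [this, lintegral_indicator measurableSet_Ioo, setLIntegral_const, Real.volume_Ioo,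
        Set.indicator_of_mem (show y ∈ Set.Ioi (1 : ℝ) from hy),
        ← ENNReal.ofReal_mul (by positivity)]
      congr 1
      rw [Real.mul_rpow (by positivity) (by positivity), sub_zero, mul_assoc, mul_assoc]
      congr 1
      nth_rw 3 [← Real.rpow_one y]
      rw [← Real.rpow_add hy0, ← Real.rpow_add hy0, hb]
      congr 1; ring
    · have : ∀ x, (x, y) ∉ S := fun x h => hy h.1
      simp [F, Set.indicator_of_notMem (this _), hy]
  simp only [h2]
  rw [lintegral_indicator measurableSet_Ioi, ← ofReal_integral_eq_lintegral_ofReal]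
  · rw [integral_const_mul, integral_Ioi_rpow_of_lt (by linarith) one_pos]
    apply ENNReal.ofReal_le_ofReal
    apply le_of_eq
    simp only [Real.one_rpow]
    rw [show -1 - η + 1 = -η by ring]
    field_simp
  · exact (integrableOn_Ioi_rpow_of_lt (by linarith) one_pos).const_mul _
  · filter_upwards [ae_restrict_mem measurableSet_Ioi] with y hy
    have hy : (1 : ℝ) < y := hy
    have hy0 : 0 < y := by linarith
    positivity

lemma jensen_swap {μ : Measure ℝ} {ν : Measure ℂ} [SFinite μ] [SFinite ν] (p : ℝ) (hp : 1 ≤ p)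
    (g : ℝ → ℂ → ℂ) (hg : Measurable (Function.uncurry g)) :
    ∫⁻ z, (∫⁻ t, ‖g t z‖ₑ ∂μ) ^ p ∂ν ≤
      μ Set.univ ^ (p - 1) * ∫⁻ t, ∫⁻ z, ‖g t z‖ₑ ^ p ∂ν ∂μ := by
  have hp0 : 0 < p := by linarith
  rw [lintegral_lintegral_swap (by fun_prop)]
  rw [← lintegral_const_mul _ (by
    refine Measurable.lintegral_prod_right' (f := fun q : ℂ × ℝ => ‖g q.2 q.1‖ₑ ^ p) ?_
    exact (hg.comp measurable_swap).enorm.pow_const p)]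
  refine lintegral_mono fun z => ?_
  have hm : Measurable fun t => g t z := hg.comp (by fun_prop : Measurable fun t : ℝ => (t, z))
  have := eLpNorm'_le_eLpNorm'_mul_rpow_measure_univ (μ := μ) (f := fun t => g t z) one_pos hp
    hm.aestronglyMeasurable
  simp only [eLpNorm', ENNReal.rpow_one, div_one] at this
  calc _ ≤ ((∫⁻ a, ‖g a z‖ₑ ^ p ∂μ) ^ (1 / p) * μ Set.univ ^ (1 - 1 / p)) ^ p := by gcongr
    _ = _ := by
      rw [ENNReal.mul_rpow_of_nonneg _ _ hp0.le, ← ENNReal.rpow_mul, ← ENNReal.rpow_mul, mul_comm]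
      congr 2
      · field_simp
      · rw [one_div_mul_cancel hp0.ne', ENNReal.rpow_one]

/-- The weighted area measure on the upper half-plane. -/
noncomputable def bnu (a : ℝ) : Measure ℂ :=
  (volume.restrict upperHalf).withDensity (fun z => ENNReal.ofReal (z.im ^ (a - 1)))

instance bnu_sfinite (a : ℝ) : SFinite (bnu a) := by unfold bnu; infer_instance

lemma lintegral_bnu (a : ℝ) (F : ℂ → ℝ≥0∞) :
    ∫⁻ z, F z ∂(bnu a) = ∫⁻ z in upperHalf, F z * ENNReal.ofReal (z.im ^ (a - 1)) := by
  unfold bnu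
  rw [lintegral_withDensity_eq_lintegral_mul_non_measurable _ (by fun_prop) (by simp)]
  simp [mul_comm]

lemma bergmanNorm_eq (p a : ℝ) (f : ℂ → ℂ) :
    bergmanNorm p a f = (∫⁻ z, ‖f z‖ₑ ^ p ∂(bnu a)) ^ (1 / p) := by
  rw [lintegral_bnu]; rfl

lemma lintegral_bnu_mono (a : ℝ) {F G : ℂ → ℝ≥0∞} (h : ∀ z, 0 < z.im → F z ≤ G z) :
    ∫⁻ z, F z ∂(bnu a) ≤ ∫⁻ z, G z ∂(bnu a) := by
  rw [lintegral_bnu, lintegral_bnu]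
  exact setLIntegral_mono' measurableSet_upperHalf fun z hz => mul_le_mul_left (h z hz) _

lemma lintegral_bnu_scale (a t : ℝ) (ht : 0 < t) (F : ℂ → ℝ≥0∞) (hF : Measurable F) :
    ∫⁻ z, F (z / t) ∂(bnu a) = ENNReal.ofReal (t ^ (a + 1)) * ∫⁻ z, F z ∂(bnu a) := by
  rw [lintegral_bnu, lintegral_bnu]
  let K : ℂ → ℝ≥0∞ := upperHalf.indicator fun z => F z * ENNReal.ofReal (z.im ^ (a - 1))
  have hK : Measurable K := Measurable.indicator (by fun_prop) measurableSet_upperHalf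
  have h1 : ∫⁻ z, K (t⁻¹ • z) = ENNReal.ofReal (t ^ 2) * ∫⁻ z, K z := by
    rw [← lintegral_map (μ := volume) hK (measurable_const_smul t⁻¹),
      Measure.map_addHaar_smul _ (inv_ne_zero ht.ne'), lintegral_smul_measure,
      Complex.finrank_real_complex]
    simp
  have h2 : ∀ z, upperHalf.indicator (fun z => F (z / t) * ENNReal.ofReal (z.im ^ (a - 1))) z =
      ENNReal.ofReal (t ^ (a - 1)) * K (t⁻¹ • z) := by
    intro z
    by_cases hz : z ∈ upperHalf
    · have hz0 : 0 < z.im := hz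
      have hz' : t⁻¹ • z ∈ upperHalf := by
        change 0 < (t⁻¹ • z).im
        rw [Complex.smul_im, smul_eq_mul]; positivity
      have e : t⁻¹ • z = z / t := by
        rw [Complex.real_smul, Complex.ofReal_inv]; ring
      simp only [K, Set.indicator_of_mem hz, Set.indicator_of_mem hz']
      rw [mul_left_comm, ← ENNReal.ofReal_mul (by positivity), Complex.smul_im, smul_eq_mul,
        ← Real.mul_rpow ht.le (by positivity), e]
      congr 4
      field_simp
    · have hz' : t⁻¹ • z ∉ upperHalf := by
        intro h
        apply hz
        change 0 < (t⁻¹ • z).im at h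
        rw [Complex.smul_im, smul_eq_mul] at h
        exact (pos_iff_pos_of_mul_pos h).1 (inv_pos.2 ht)
      simp only [K, Set.indicator_of_notMem hz, Set.indicator_of_notMem hz', mul_zero]
  rw [← lintegral_indicator measurableSet_upperHalf, ← lintegral_indicator measurableSet_upperHalf]
  simp only [h2]
  rw [lintegral_const_mul _ (show Measurable fun z => K (t⁻¹ • z) from hK.comp (measurable_const_smul t⁻¹)), h1, ← mul_assoc,
    ← ENNReal.ofReal_mul (by positivity), ← Real.rpow_natCast, ← Real.rpow_add ht]
  congr 3
  push_cast; ring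

lemma real_mul_cpow' (t : ℝ) (ht : 0 < t) (w s : ℂ) (hw : w ≠ 0) :
    ((t : ℂ) * w) ^ s = (t : ℂ) ^ s * w ^ s := by
  have ht' : (t : ℂ) ≠ 0 := by exact_mod_cast ht.ne'
  rw [Complex.cpow_def_of_ne_zero (mul_ne_zero ht' hw), Complex.cpow_def_of_ne_zero ht',
    Complex.cpow_def_of_ne_zero hw, Complex.log_ofReal_mul ht hw, Complex.ofReal_log ht.le,
    add_mul, Complex.exp_add]

lemma testFun_measurable (c ε ξ : ℝ) : Measurable (testFun c ε ξ) := by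
  unfold testFun; fun_prop

/-- The normalised dilation of the test function. -/
noncomputable def hfun (c ε ξ t : ℝ) (z : ℂ) : ℂ :=
  (t : ℂ) ^ (-(c : ℂ) + Complex.I * ξ) * testFun c ε ξ (z / t)

lemma norm_tpow (c ξ t : ℝ) (ht : 0 < t) :
    ‖(t : ℂ) ^ (-(c : ℂ) + Complex.I * ξ)‖ = t ^ (-c) := by
  rw [Complex.norm_cpow_eq_rpow_re_of_pos ht]; simp

lemma hfun_eq (c ε ξ t : ℝ) (ht : 0 < t) (z : ℂ) (hz : 0 < z.im) :
    hfun c ε ξ t z = ((t ^ ε : ℝ) : ℂ) *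
      (z + t * Complex.I) ^ (((-c - ε : ℝ) : ℂ) + Complex.I * (ξ : ℂ)) := by
  have ht' : (t : ℂ) ≠ 0 := by exact_mod_cast ht.ne'
  unfold hfun testFun
  have hw : z / t + Complex.I ≠ 0 := by
    intro h
    have := congrArg Complex.im h
    simp at this
    have : 0 < z.im / t := by positivity
    linarith
  rw [show z + t * Complex.I = t * (z / t + Complex.I) by field_simp, real_mul_cpow' t ht _ _ hw,
    ← mul_assoc, Complex.ofReal_cpow ht.le, ← Complex.cpow_add _ _ ht']
  congr 2
  push_cast; ring

lemma hfun_norm_pow (p a ε ξ t : ℝ) (hp : 1 ≤ p) (ht : 0 < t) :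
    ∫⁻ z, ‖hfun ((a + 1) / p) ε ξ t z‖ₑ ^ p ∂(bnu a) =
      ∫⁻ z, ‖testFun ((a + 1) / p) ε ξ z‖ₑ ^ p ∂(bnu a) := by
  have hp0 : 0 < p := by linarith
  have hm := testFun_measurable ((a + 1) / p) ε ξ
  have h1 : ∀ z, ‖hfun ((a + 1) / p) ε ξ t z‖ₑ ^ p = ENNReal.ofReal (t ^ (-(a + 1))) *
      ‖testFun ((a + 1) / p) ε ξ (z / t)‖ₑ ^ p := by
    intro z
    unfold hfun
    rw [enorm_mul, ENNReal.mul_rpow_of_nonneg _ _ hp0.le, ← ofReal_norm, norm_tpow _ _ _ ht,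
      ENNReal.ofReal_rpow_of_nonneg (by positivity) hp0.le, ← Real.rpow_mul ht.le]
    congr 3
    field_simp
  simp only [h1]
  rw [lintegral_const_mul _ (by fun_prop),
    lintegral_bnu_scale a t ht (fun z => ‖testFun ((a + 1) / p) ε ξ z‖ₑ ^ p) (by fun_prop),
    ← mul_assoc, ← ENNReal.ofReal_mul (by positivity), ← Real.rpow_add ht]
  simp

lemma diff_bound (c ξ t : ℝ) (hc : 0 < c) (ht : 0 < t) : ∃ K : ℝ, 0 ≤ K ∧ ∀ ε ∈ Set.Ioo (0:ℝ) 1,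
    ∀ z : ℂ, 0 < z.im →
    ‖(z + t * Complex.I) ^ (((-c - ε : ℝ) : ℂ) + Complex.I * (ξ : ℂ)) - testFun c ε ξ z‖ ≤
      K * ‖z + Complex.I‖ ^ (-(c + 1)) := by
  set m : ℝ := min t 1 with hm
  have hm0 : 0 < m := lt_min ht one_pos
  have hm1 : m ≤ 1 := min_le_right _ _
  have hmt : m ≤ t := min_le_left _ _
  refine ⟨(c + 1 + |ξ|) * (Real.exp (Real.pi * |ξ|) * m ^ (-(c + 2))) * |t - 1|,
    by positivity, fun ε hε z hz => ?_⟩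
  obtain ⟨hε0, hε1⟩ := hε
  set s : ℂ := ((-c - ε : ℝ) : ℂ) + Complex.I * (ξ : ℂ) with hs
  have hsre : s.re = -c - ε := by simp [hs]
  have hsim : s.im = ξ := by simp [hs]
  have him : ∀ x ∈ Set.Ici m, 0 < (z + x * Complex.I).im := by
    intro x hx
    have hx : m ≤ x := hx
    simp; linarith
  have hd : ∀ x ∈ Set.Ici m, HasDerivWithinAt (fun x : ℝ => (z + x * Complex.I) ^ s)
      (s * (z + x * Complex.I) ^ (s - 1) * Complex.I) (Set.Ici m) x := by
    intro x hx
    have h1 : HasDerivAt (fun x : ℝ => z + x * Complex.I) Complex.I x := by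
      have := ((Complex.ofRealCLM.hasDerivAt (x := x)).mul_const Complex.I).const_add z
      simpa using this
    have h2 := (hasDerivAt_id (z + x * Complex.I)).cpow_const (c := s) (Or.inr (him x hx).ne')
    have h3 := HasDerivAt.comp x h2 h1
    simp only [id, mul_one] at h3
    exact h3.hasDerivWithinAt
  have hge := norm_add_I_ge z hz
  have hn : 0 < ‖z + Complex.I‖ := by linarith
  have hb : ∀ x ∈ Set.Ici m, ‖s * (z + x * Complex.I) ^ (s - 1) * Complex.I‖ ≤
      (c + 1 + |ξ|) * (Real.exp (Real.pi * |ξ|) * m ^ (-(c + 2))) *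
        ‖z + Complex.I‖ ^ (-(c + 1)) := by
    intro x hx
    have hmx : m ≤ x := hx
    rw [norm_mul, norm_mul, Complex.norm_I, mul_one, mul_assoc]
    have h1 : ‖s‖ ≤ c + 1 + |ξ| := by
      have := Complex.norm_le_abs_re_add_abs_im s
      rw [hsre, hsim, abs_of_neg (by linarith)] at this
      linarith
    have h2 := norm_cpow_upper (z + x * Complex.I) (s - 1) (him x hx)
    have h3 : m * ‖z + Complex.I‖ ≤ ‖z + x * Complex.I‖ := by
      rw [← abs_of_pos hm0, ← Real.norm_eq_abs, ← Complex.norm_real, ← norm_mul]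
      rw [← sq_le_sq₀ (norm_nonneg _) (norm_nonneg _), Complex.sq_norm, Complex.sq_norm,
        Complex.normSq_apply, Complex.normSq_apply]
      simp
      have e1 : m * z.re * (m * z.re) ≤ z.re * z.re := by
        have : m * m ≤ 1 := by nlinarith
        nlinarith [mul_self_nonneg z.re]
      have e2 : m * (z.im + 1) * (m * (z.im + 1)) ≤ (z.im + x) * (z.im + x) := by
        apply mul_self_le_mul_self (by positivity)
        nlinarith
      linarith
    simp only [Complex.sub_re, Complex.one_re, Complex.sub_im, Complex.one_im, hsre, hsim,
      sub_zero] at h2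
    refine mul_le_mul h1 (h2.trans ?_) (norm_nonneg _) (by positivity)
    rw [mul_assoc]
    gcongr
    calc ‖z + x * Complex.I‖ ^ (-c - ε - 1) ≤ (m * ‖z + Complex.I‖) ^ (-c - ε - 1) :=
          Real.rpow_le_rpow_of_nonpos (by positivity) h3 (by linarith)
      _ = m ^ (-c - ε - 1) * ‖z + Complex.I‖ ^ (-c - ε - 1) :=
          Real.mul_rpow hm0.le hn.le
      _ ≤ _ := by
        gcongr ?_ * ?_
        · exact Real.rpow_le_rpow_of_exponent_ge hm0 hm1 (by linarith)
        · exact Real.rpow_le_rpow_of_exponent_le (by linarith) (by linarith)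
  have := (convex_Ici m).norm_image_sub_le_of_norm_hasDerivWithin_le hd hb
    (x := 1) (y := t) hm1 hmt
  simp only [Complex.ofReal_one, one_mul, Real.norm_eq_abs] at this
  unfold testFun
  rw [← hs]
  refine this.trans (le_of_eq ?_)
  ring

lemma testFun_enorm_pow_fin (p a ε ξ : ℝ) (hp : 1 ≤ p) (ha : 0 < a) (hε : 0 < ε) :
    ∫⁻ z, ‖testFun ((a + 1) / p) ε ξ z‖ₑ ^ p ∂(bnu a) < ⊤ := by
  have hp0 : 0 < p := by linarith
  have h := lint_J_fin a (a + 1 + p * ε) ha (by nlinarith)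
  rw [← lintegral_bnu a (fun z => ENNReal.ofReal (‖z + Complex.I‖ ^ (-(a + 1 + p * ε))))] at h
  have h' : ∫⁻ z, ENNReal.ofReal (Real.exp (Real.pi * |ξ|) ^ p) *
      ENNReal.ofReal (‖z + Complex.I‖ ^ (-(a + 1 + p * ε))) ∂(bnu a) < ⊤ := by
    rw [lintegral_const_mul _ (by fun_prop)]
    exact ENNReal.mul_lt_top ENNReal.ofReal_lt_top h
  refine lt_of_le_of_lt (lintegral_bnu_mono a fun z hz => ?_) h'
  have h1 := norm_cpow_upper (z + Complex.I) (((-((a + 1) / p) - ε : ℝ) : ℂ) + Complex.I * (ξ : ℂ))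
    (by simp; linarith)
  rw [← ENNReal.ofReal_mul (by positivity), ← ofReal_norm,
    ENNReal.ofReal_rpow_of_nonneg (by positivity) hp0.le]
  apply ENNReal.ofReal_le_ofReal
  calc _ ≤ _ := Real.rpow_le_rpow (norm_nonneg _) h1 hp0.le
    _ = _ := by
      rw [Real.mul_rpow (by positivity) (by positivity), ← Real.rpow_mul (by positivity)]
      simp
      left
      congr 1
      field_simp
      ring

lemma testFun_enorm_pow_ge (p a ξ : ℝ) (hp : 1 ≤ p) (ha : 0 < a) : ∃ C : ℝ, 0 < C ∧
    ∀ ε ∈ Set.Ioo (0 : ℝ) 1,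
    ENNReal.ofReal (C * ε⁻¹) ≤ ∫⁻ z, ‖testFun ((a + 1) / p) ε ξ z‖ₑ ^ p ∂(bnu a) := by
  have hp0 : 0 < p := by linarith
  refine ⟨Real.exp (-(Real.pi * |ξ|)) ^ p * (3 ^ (-(a + 1 + p)) / p), by positivity,
    fun ε hε => ?_⟩
  obtain ⟨hε0, hε1⟩ := hε
  have h := lint_J_lower a (a + 1 + p * ε) (p * ε) (by positivity) rfl ha
  rw [← lintegral_bnu a (fun z => ENNReal.ofReal (‖z + Complex.I‖ ^ (-(a + 1 + p * ε))))] at h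
  have h' : ∫⁻ z, ENNReal.ofReal (Real.exp (-(Real.pi * |ξ|)) ^ p) *
      ENNReal.ofReal (‖z + Complex.I‖ ^ (-(a + 1 + p * ε))) ∂(bnu a) ≤
      ∫⁻ z, ‖testFun ((a + 1) / p) ε ξ z‖ₑ ^ p ∂(bnu a) := by
    refine (lintegral_bnu_mono a fun z hz => ?_)
    have h1 := norm_cpow_lower (z + Complex.I)
      (((-((a + 1) / p) - ε : ℝ) : ℂ) + Complex.I * (ξ : ℂ)) (by simp; linarith)
    rw [← ENNReal.ofReal_mul (by positivity), ← ofReal_norm,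
      ENNReal.ofReal_rpow_of_nonneg (by positivity) hp0.le]
    apply ENNReal.ofReal_le_ofReal
    refine le_trans (le_of_eq ?_) (Real.rpow_le_rpow (by positivity) h1 hp0.le)
    rw [Real.mul_rpow (by positivity) (by positivity), ← Real.rpow_mul (by positivity)]
    simp
    left
    congr 1
    field_simp
    ring
  refine le_trans ?_ h'
  rw [lintegral_const_mul _ (by fun_prop)]
  refine le_trans ?_ (mul_le_mul_right h _)
  rw [← ENNReal.ofReal_mul (by positivity)]
  apply ENNReal.ofReal_le_ofReal
  rw [mul_assoc]
  gcongr
  rw [← div_eq_mul_inv, div_div]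
  gcongr
  · norm_num
  · nlinarith

lemma tendsto_norm_top (p a ξ : ℝ) (hp : 1 ≤ p) (ha : 0 < a) :
    Tendsto (fun ε : ℝ => ∫⁻ z, ‖testFun ((a + 1) / p) ε ξ z‖ₑ ^ p ∂(bnu a))
      (𝓝[Set.Ioo (0 : ℝ) 1] 0) (𝓝 ⊤) := by
  obtain ⟨C, hC, h⟩ := testFun_enorm_pow_ge p a ξ hp ha
  refine tendsto_nhds_top_mono (f := fun ε : ℝ => ENNReal.ofReal (C * ε⁻¹)) ?_
    (eventually_nhdsWithin_of_forall h)
  refine ENNReal.tendsto_ofReal_atTop.comp (Tendsto.const_mul_atTop hC ?_)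
  exact tendsto_inv_nhdsGT_zero.mono_left (nhdsWithin_mono _ Set.Ioo_subset_Ioi_self)

lemma hfun_measurable (c ε ξ : ℝ) :
    Measurable (Function.uncurry fun t z => hfun c ε ξ t z - testFun c ε ξ z) := by
  have := testFun_measurable c ε ξ
  unfold Function.uncurry hfun
  fun_prop

lemma diff_le_two (p a ε ξ t : ℝ) (hp : 1 ≤ p) (ht : 0 < t) :
    ∫⁻ z, ‖hfun ((a + 1) / p) ε ξ t z - testFun ((a + 1) / p) ε ξ z‖ₑ ^ p ∂(bnu a) ≤
      2 ^ p * ∫⁻ z, ‖testFun ((a + 1) / p) ε ξ z‖ₑ ^ p ∂(bnu a) := by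
  have hp0 : 0 < p := by linarith
  have hm := testFun_measurable ((a + 1) / p) ε ξ
  calc _ ≤ ∫⁻ z, (2 : ℝ≥0∞) ^ (p - 1) * (‖hfun ((a + 1) / p) ε ξ t z‖ₑ ^ p +
        ‖testFun ((a + 1) / p) ε ξ z‖ₑ ^ p) ∂(bnu a) := by
        refine lintegral_mono fun z => ?_
        refine le_trans ?_ (ENNReal.rpow_add_le_mul_rpow_add_rpow _ _ hp)
        exact ENNReal.rpow_le_rpow enorm_sub_le hp0.le
    _ = _ := by
        rw [lintegral_const_mul _ (by unfold hfun; fun_prop), lintegral_add_right _ (by fun_prop),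
          hfun_norm_pow p a ε ξ t hp ht, ← two_mul, ← mul_assoc]
        congr 1
        nth_rw 2 [← ENNReal.rpow_one 2]
        rw [← ENNReal.rpow_add _ _ (by simp) (by simp)]
        congr 1; ring

lemma diff_tendsto (p a ξ t : ℝ) (hp : 1 ≤ p) (ha : 0 < a) (ht : 0 < t) :
    Tendsto (fun ε : ℝ =>
      (∫⁻ z, ‖hfun ((a + 1) / p) ε ξ t z - testFun ((a + 1) / p) ε ξ z‖ₑ ^ p ∂(bnu a)) /
      ∫⁻ z, ‖testFun ((a + 1) / p) ε ξ z‖ₑ ^ p ∂(bnu a))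
      (𝓝[Set.Ioo (0 : ℝ) 1] 0) (𝓝 0) := by
  have hp0 : 0 < p := by linarith
  have hc : 0 < (a + 1) / p := by positivity
  obtain ⟨K, hK, hKb⟩ := diff_bound ((a + 1) / p) ξ t hc ht
  set c := (a + 1) / p with hcdef
  set N : ℝ → ℝ≥0∞ := fun ε => ∫⁻ z, ‖testFun c ε ξ z‖ₑ ^ p ∂(bnu a) with hN
  have hNtop := tendsto_norm_top p a ξ hp ha
  set J : ℝ≥0∞ := ∫⁻ z, ENNReal.ofReal (‖z + Complex.I‖ ^ (-(a + 1 + p))) ∂(bnu a) with hJ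
  have hJfin : J < ⊤ := by
    rw [hJ, lintegral_bnu]; exact lint_J_fin a (a + 1 + p) ha (by linarith)
  set D : ℝ≥0∞ := ENNReal.ofReal (K ^ p) * J with hD
  have hDfin : D ≠ ⊤ := (ENNReal.mul_lt_top ENNReal.ofReal_lt_top hJfin).ne
  have main : ∀ ε ∈ Set.Ioo (0 : ℝ) 1,
      (∫⁻ z, ‖hfun c ε ξ t z - testFun c ε ξ z‖ₑ ^ p ∂(bnu a)) / N ε ≤
        2 ^ (p - 1) * (ENNReal.ofReal |1 - t ^ (-ε)| ^ p + D / N ε) := by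
    intro ε hε
    have hm := testFun_measurable c ε ξ
    have hN0 : N ε ≠ 0 := by
      obtain ⟨C, hC, h⟩ := testFun_enorm_pow_ge p a ξ hp ha
      have := h ε hε
      have h0 : 0 < ENNReal.ofReal (C * ε⁻¹) :=
        ENNReal.ofReal_pos.2 (mul_pos hC (inv_pos.2 hε.1))
      exact (h0.trans_le this).ne'
    have hNt : N ε ≠ ⊤ := (testFun_enorm_pow_fin p a ε ξ hp ha hε.1).ne
    have h1 : (∫⁻ z, ‖hfun c ε ξ t z - testFun c ε ξ z‖ₑ ^ p ∂(bnu a)) ≤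
        2 ^ (p - 1) * (ENNReal.ofReal |1 - t ^ (-ε)| ^ p * N ε + D) := by
      calc _ ≤ ∫⁻ z, (2 : ℝ≥0∞) ^ (p - 1) *
            (ENNReal.ofReal |1 - t ^ (-ε)| ^ p * ‖hfun c ε ξ t z‖ₑ ^ p +
            ENNReal.ofReal (K ^ p) *
              ENNReal.ofReal (‖z + Complex.I‖ ^ (-(a + 1 + p)))) ∂(bnu a) := by
            refine lintegral_bnu_mono a fun z hz => ?_
            set q := (z + t * Complex.I) ^ (((-c - ε : ℝ) : ℂ) + Complex.I * (ξ : ℂ)) with hq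
            have e1 : hfun c ε ξ t z - testFun c ε ξ z =
                ((1 - t ^ (-ε) : ℝ) : ℂ) * hfun c ε ξ t z + (q - testFun c ε ξ z) := by
              have : ((t ^ (-ε) : ℝ) : ℂ) * hfun c ε ξ t z = q := by
                rw [hfun_eq c ε ξ t ht z hz, ← mul_assoc, ← Complex.ofReal_mul,
                  ← Real.rpow_add ht]
                simp [hq]
              rw [← this]; push_cast; ring
            rw [e1]
            refine (ENNReal.rpow_le_rpow (enorm_add_le _ _) hp0.le).trans ?_
            refine (ENNReal.rpow_add_le_mul_rpow_add_rpow _ _ hp).trans ?_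
            gcongr
            · rw [enorm_mul, ENNReal.mul_rpow_of_nonneg _ _ hp0.le, ← ofReal_norm (E := ℂ) (((1 - t ^ (-ε) : ℝ) : ℂ)),
                Complex.norm_real, Real.norm_eq_abs]
            · rw [← ENNReal.ofReal_mul (by positivity), ← ofReal_norm,
                ENNReal.ofReal_rpow_of_nonneg (by positivity) hp0.le]
              apply ENNReal.ofReal_le_ofReal
              refine (Real.rpow_le_rpow (norm_nonneg _) (hKb ε hε z hz) hp0.le).trans ?_
              rw [Real.mul_rpow hK (by positivity), ← Real.rpow_mul (by positivity)]
              apply le_of_eq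
              congr 2
              rw [hcdef]; field_simp
        _ = _ := by
            rw [lintegral_const_mul _ (by unfold hfun; fun_prop),
              lintegral_add_right _ (by fun_prop),
              lintegral_const_mul _ (by unfold hfun; fun_prop), hfun_norm_pow p a ε ξ t hp ht,
              lintegral_const_mul _ (by fun_prop)]
    calc _ ≤ (2 ^ (p - 1) * (ENNReal.ofReal |1 - t ^ (-ε)| ^ p * N ε + D)) / N ε :=
          ENNReal.div_le_div_right h1 _
      _ = _ := by
        rw [mul_div_assoc, ENNReal.add_div, ENNReal.mul_div_cancel_right hN0 hNt]
  have hlim : Tendsto (fun ε : ℝ => (2 : ℝ≥0∞) ^ (p - 1) *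
      (ENNReal.ofReal |1 - t ^ (-ε)| ^ p + D / N ε)) (𝓝[Set.Ioo (0 : ℝ) 1] 0) (𝓝 0) := by
    have h1 : Tendsto (fun ε : ℝ => ENNReal.ofReal |1 - t ^ (-ε)| ^ p)
        (𝓝[Set.Ioo (0 : ℝ) 1] 0) (𝓝 0) := by
      have hcont : Continuous fun ε : ℝ => ENNReal.ofReal |1 - t ^ (-ε)| ^ p := by
        refine (ENNReal.continuous_rpow_const).comp (ENNReal.continuous_ofReal.comp ?_)
        exact (continuous_const.sub (continuous_const.rpow continuous_neg
          (fun _ => Or.inl ht.ne'))).abs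
      have := (hcont.tendsto 0).mono_left (nhdsWithin_le_nhds (s := Set.Ioo (0 : ℝ) 1))
      simpa [hp0] using this
    have h2 : Tendsto (fun ε : ℝ => D / N ε) (𝓝[Set.Ioo (0 : ℝ) 1] 0) (𝓝 0) := by
      have := ENNReal.Tendsto.const_div (a := D) hNtop (Or.inr hDfin)
      simpa using this
    have h3 := ENNReal.Tendsto.const_mul (a := (2 : ℝ≥0∞) ^ (p - 1)) (h1.add h2)
      (Or.inr (ENNReal.rpow_ne_top_of_nonneg (by linarith) (by simp)))
    simpa using h3
  exact tendsto_of_tendsto_of_tendsto_of_le_of_le' tendsto_const_nhds hlim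
    (Eventually.of_forall fun _ => zero_le) (eventually_nhdsWithin_of_forall main)

/-- The weighted kernel measure. -/
noncomputable def bmu (φ : ℝ → ℂ) (c : ℝ) : Measure ℝ :=
  (volume.restrict (Set.Ioi 0)).withDensity fun t => ENNReal.ofReal (‖φ t‖ * t ^ (c - 1))

lemma numer_le (φ : ℝ → ℂ) (hφm : Measurable φ) (c ε ξ : ℝ) (hc : 0 < c) (hε : 0 < ε)
    (hφ : IntegrableOn (fun t => ‖φ t‖ * t ^ (c - 1)) (Set.Ioi (0 : ℝ))) (z : ℂ) (hz : 0 < z.im) :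
    ‖HphiHol φ (testFun c ε ξ) z - khat φ c ξ * testFun c ε ξ z‖ₑ ≤
      ∫⁻ t, ‖hfun c ε ξ t z - testFun c ε ξ z‖ₑ ∂(bmu φ c) := by
  have hm := testFun_measurable c ε ξ
  have hnorm : ∀ t : ℝ, 0 < t → ‖φ t * (t : ℂ) ^ ((c : ℂ) - 1 - Complex.I * (ξ : ℂ))‖ =
      ‖φ t‖ * t ^ (c - 1) := by
    intro t ht
    rw [norm_mul, Complex.norm_cpow_eq_rpow_re_of_pos ht]; simp
  have hk : IntegrableOn (fun t : ℝ => φ t * (t : ℂ) ^ ((c : ℂ) - 1 - Complex.I * (ξ : ℂ)))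
      (Set.Ioi (0 : ℝ)) := by
    refine Integrable.mono' hφ (by fun_prop) ?_
    filter_upwards [ae_restrict_mem measurableSet_Ioi] with t ht
    exact (hnorm t ht).le
  have heq : ∀ t ∈ Set.Ioi (0 : ℝ), testFun c ε ξ (z / (t : ℂ)) * φ t / (t : ℂ) =
      φ t * (t : ℂ) ^ ((c : ℂ) - 1 - Complex.I * (ξ : ℂ)) * hfun c ε ξ t z := by
    intro t ht
    have ht : 0 < t := ht
    have ht' : (t : ℂ) ≠ 0 := by exact_mod_cast ht.ne'
    unfold hfun
    rw [mul_assoc, ← mul_assoc (_ ^ _), ← Complex.cpow_add _ _ ht',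
      show (c : ℂ) - 1 - Complex.I * ξ + (-(c : ℂ) + Complex.I * ξ) = -1 by ring,
      Complex.cpow_neg_one]
    field_simp
  have hbd : ∀ t ∈ Set.Ioi (0 : ℝ), ‖hfun c ε ξ t z‖ ≤ Real.exp (Real.pi * |ξ|) * z.im ^ (-c) := by
    intro t ht
    have ht : 0 < t := ht
    have him : (z + t * Complex.I).im = z.im + t := by simp
    rw [hfun_eq c ε ξ t ht z hz, norm_mul, Complex.norm_real, Real.norm_of_nonneg (by positivity)]
    have h1 := norm_cpow_upper (z + t * Complex.I)
      (((-c - ε : ℝ) : ℂ) + Complex.I * (ξ : ℂ)) (by rw [him]; positivity)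
    have h2 : z.im + t ≤ ‖z + t * Complex.I‖ := by
      rw [← him]; exact Complex.im_le_norm _
    simp only [Complex.add_re, Complex.ofReal_re, Complex.mul_re, Complex.I_re, zero_mul,
      Complex.I_im, Complex.ofReal_im, mul_zero, sub_zero, add_zero, Complex.add_im,
      Complex.mul_im, one_mul, zero_add] at h1
    calc _ ≤ t ^ ε * (Real.exp (Real.pi * |ξ|) * ‖z + t * Complex.I‖ ^ (-c - ε)) := by gcongr
      _ ≤ t ^ ε * (Real.exp (Real.pi * |ξ|) * (z.im ^ (-c) * t ^ (-ε))) := by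
        gcongr
        rw [sub_eq_add_neg, Real.rpow_add (by linarith)]
        gcongr ?_ * ?_
        · exact Real.rpow_le_rpow_of_nonpos hz (by linarith) (by linarith)
        · exact Real.rpow_le_rpow_of_nonpos ht (by linarith) (by linarith)
      _ = Real.exp (Real.pi * |ξ|) * z.im ^ (-c) * (t ^ ε * t ^ (-ε)) := by ring
      _ = _ := by rw [← Real.rpow_add ht]; simp
  have hh : IntegrableOn (fun t : ℝ => φ t * (t : ℂ) ^ ((c : ℂ) - 1 - Complex.I * (ξ : ℂ)) *
      hfun c ε ξ t z) (Set.Ioi (0 : ℝ)) := by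
    refine Integrable.mul_bdd (c := Real.exp (Real.pi * |ξ|) * z.im ^ (-c)) hk
      (Measurable.aestronglyMeasurable (by unfold hfun; fun_prop)) ?_
    filter_upwards [ae_restrict_mem measurableSet_Ioi] with t ht
    exact hbd t ht
  unfold HphiHol khat
  rw [setIntegral_congr_fun measurableSet_Ioi heq, ← integral_mul_const,
    ← integral_sub hh (hk.mul_const _)]
  refine (enorm_integral_le_lintegral_enorm _).trans (le_of_eq ?_)
  unfold bmu
  rw [lintegral_withDensity_eq_lintegral_mul_non_measurable _ (by fun_prop)
    (Eventually.of_forall fun _ => ENNReal.ofReal_lt_top)]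
  refine setLIntegral_congr_fun measurableSet_Ioi fun t ht => ?_
  simp only [Pi.mul_apply]
  rw [← mul_sub, enorm_mul, ← hnorm t ht, ofReal_norm]

theorem stmt13 (p a : ℝ) (hp : 1 ≤ p) (ha : 0 < a) (φ : ℝ → ℂ) (hφm : Measurable φ)
    (hφ : IntegrableOn (fun t => ‖φ t‖ * t ^ ((a + 1) / p - 1)) (Set.Ioi (0 : ℝ)))
    (ξ : ℝ) :
    (∀ ε ∈ Set.Ioo (0 : ℝ) 1, bergmanNorm p a (testFun ((a + 1) / p) ε ξ) < ⊤) ∧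
    Tendsto (fun ε : ℝ =>
        bergmanNorm p a (fun z => HphiHol φ (testFun ((a + 1) / p) ε ξ) z -
            khat φ ((a + 1) / p) ξ * testFun ((a + 1) / p) ε ξ z) /
          bergmanNorm p a (testFun ((a + 1) / p) ε ξ))
      (𝓝[Set.Ioo (0 : ℝ) 1] 0) (𝓝 (0 : ℝ≥0∞)) := by
  have hp0 : 0 < p := by linarith
  have hc : 0 < (a + 1) / p := by positivity
  refine ⟨fun ε hε => ?_, ?_⟩
  · rw [bergmanNorm_eq]
    exact ENNReal.rpow_lt_top_of_nonneg (by positivity)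
      (testFun_enorm_pow_fin p a ε ξ hp ha hε.1).ne
  simp only [bergmanNorm_eq, ← ENNReal.div_rpow_of_nonneg _ _ (one_div_nonneg.2 hp0.le)]
  set c := (a + 1) / p with hcdef
  set N : ℝ → ℝ≥0∞ := fun ε => ∫⁻ z, ‖testFun c ε ξ z‖ₑ ^ p ∂(bnu a) with hN
  set μ := bmu φ c with hμ
  have hμfin : μ Set.univ < ⊤ := by
    rw [hμ, bmu, withDensity_apply _ MeasurableSet.univ, Measure.restrict_univ]
    exact hφ.lintegral_lt_top
  have : IsFiniteMeasure μ := ⟨hμfin⟩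
  have hpos : ∀ᵐ t ∂μ, 0 < t := by
    have h0 : ∀ᵐ t ∂(volume.restrict (Set.Ioi (0 : ℝ))), 0 < t :=
      ae_restrict_mem measurableSet_Ioi
    exact (withDensity_absolutelyContinuous _ _).ae_le h0
  have hAm : ∀ ε, Measurable fun t =>
      ∫⁻ z, ‖hfun c ε ξ t z - testFun c ε ξ z‖ₑ ^ p ∂(bnu a) := fun ε =>
    Measurable.lintegral_prod_right'
      (f := fun q : ℝ × ℂ => ‖hfun c ε ξ q.1 q.2 - testFun c ε ξ q.2‖ₑ ^ p)
      ((hfun_measurable c ε ξ).enorm.pow_const p)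
  have hN0 : ∀ ε ∈ Set.Ioo (0 : ℝ) 1, N ε ≠ 0 := by
    intro ε hε
    obtain ⟨C, hC, h⟩ := testFun_enorm_pow_ge p a ξ hp ha
    have := h ε hε
    have h0 : 0 < ENNReal.ofReal (C * ε⁻¹) :=
      ENNReal.ofReal_pos.2 (mul_pos hC (inv_pos.2 hε.1))
    exact (h0.trans_le this).ne'
  have hNt : ∀ ε ∈ Set.Ioo (0 : ℝ) 1, N ε ≠ ⊤ := fun ε hε =>
    (testFun_enorm_pow_fin p a ε ξ hp ha hε.1).ne
  have hdct : Tendsto (fun ε => ∫⁻ t,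
      (∫⁻ z, ‖hfun c ε ξ t z - testFun c ε ξ z‖ₑ ^ p ∂(bnu a)) / N ε ∂μ)
      (𝓝[Set.Ioo (0 : ℝ) 1] 0) (𝓝 (∫⁻ _, 0 ∂μ)) := by
    refine tendsto_lintegral_filter_of_dominated_convergence (fun _ => 2 ^ p)
      (Eventually.of_forall fun ε => (hAm ε).div_const _) ?_ ?_ ?_
    · refine eventually_nhdsWithin_of_forall fun ε hε => ?_
      filter_upwards [hpos] with t ht
      exact ENNReal.div_le_of_le_mul (diff_le_two p a ε ξ t hp ht)
    · rw [lintegral_const]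
      exact ENNReal.mul_ne_top (ENNReal.rpow_ne_top_of_nonneg hp0.le (by simp)) hμfin.ne
    · filter_upwards [hpos] with t ht
      exact diff_tendsto p a ξ t hp ha ht
  rw [lintegral_zero] at hdct
  have hbig := ENNReal.Tendsto.const_mul (a := μ Set.univ ^ (p - 1)) hdct
    (Or.inr (ENNReal.rpow_ne_top_of_nonneg (by linarith) hμfin.ne))
  rw [mul_zero] at hbig
  have hrat : Tendsto (fun ε : ℝ => (∫⁻ z, ‖HphiHol φ (testFun c ε ξ) z -
      khat φ c ξ * testFun c ε ξ z‖ₑ ^ p ∂(bnu a)) / N ε) (𝓝[Set.Ioo (0 : ℝ) 1] 0) (𝓝 0) := by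
    refine tendsto_of_tendsto_of_tendsto_of_le_of_le' tendsto_const_nhds hbig
      (Eventually.of_forall fun _ => zero_le) (eventually_nhdsWithin_of_forall fun ε hε => ?_)
    have h1 : ∫⁻ z, ‖HphiHol φ (testFun c ε ξ) z - khat φ c ξ * testFun c ε ξ z‖ₑ ^ p ∂(bnu a) ≤
        ∫⁻ z, (∫⁻ t, ‖hfun c ε ξ t z - testFun c ε ξ z‖ₑ ∂μ) ^ p ∂(bnu a) :=
      lintegral_bnu_mono a fun z hz =>
        ENNReal.rpow_le_rpow (numer_le φ hφm c ε ξ hc hε.1 hφ z hz) hp0.le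
    have h2 := h1.trans (jensen_swap (μ := μ) (ν := bnu a) p hp
      (fun t z => hfun c ε ξ t z - testFun c ε ξ z) (hfun_measurable c ε ξ))
    refine (ENNReal.div_le_div_right h2 _).trans (le_of_eq ?_)
    simp only [div_eq_mul_inv]
    rw [lintegral_mul_const _ (hAm ε), mul_assoc]
  have hfin := ((ENNReal.continuous_rpow_const (y := 1 / p)).tendsto 0).comp hrat
  rw [ENNReal.zero_rpow_of_pos (by positivity)] at hfin
  exact hfin
end

section
/- Let 1 ≤ p < ∞, a > 0, and let φ : (0,∞) → ℂ be measurable with ∫₀^∞ |φ(t)| t^{(a+1)/p − 1} dt < ∞. If C ≥ 0 is a constant such that ‖ℋ_φ f‖_{A^p_a} ≤ C ‖f‖_{A^p_a} for every holomorphic f on 𝕌 with ‖f‖_{A^p_a} < ∞, then sup_{ξ ∈ ℝ} |k̂_{a,p}(ξ)| ≤ C. -/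
open MeasureTheory
open scoped ENNReal NNReal

section helpers

open Set Filter Topology

theorem cov_upper (g : ℂ → ℝ≥0∞) (hg : Measurable g) (ε : ℝ) (hε : 0 < ε) :
    ∫⁻ z in upperHalf, g z = ∫⁻ x, ENNReal.ofReal (Real.exp (x.2/ε) * Real.exp (x.2/ε) / ε) *
      g (Complex.exp ((x.2/ε : ℝ) + (x.1:ℝ) * Complex.I))
      ∂((volume.restrict (Ioo 0 Real.pi)).prod (volume : Measure ℝ)) := by
  have hU : MeasurableSet upperHalf := measurableSet_lt measurable_const Complex.measurable_im
  rw [← lintegral_indicator hU, ← Complex.lintegral_comp_polarCoord_symm, lintegral_prod _ (by fun_prop),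
    polarCoord_target, Measure.volume_eq_prod, ← Measure.prod_restrict, lintegral_prod_symm]
  swap
  · have := hg.indicator hU
    apply Measurable.aemeasurable
    simp only [Complex.polarCoord_symm_apply]
    fun_prop
  have hsub : Ioo (0:ℝ) Real.pi ⊆ Ioo (-Real.pi) Real.pi := fun x hx => ⟨by linarith [hx.1, hx.2], hx.2⟩
  have key : ∀ θ ∈ Ioo (-Real.pi) Real.pi, (∫⁻ r in Ioi (0:ℝ), ENNReal.ofReal r • upperHalf.indicator g (Complex.polarCoord.symm (r, θ))) = (Ioo (0:ℝ) Real.pi).indicator (fun θ => ∫⁻ S : ℝ, ENNReal.ofReal (Real.exp (S/ε) * Real.exp (S/ε) / ε) *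
      g (Complex.exp ((S/ε : ℝ) + (θ:ℝ) * Complex.I))) θ := by
    intro θ hθ
    by_cases h : θ ∈ Ioo 0 Real.pi
    · rw [indicator_of_mem h]
      have him : Ioi (0:ℝ) = (fun S : ℝ => Real.exp (S/ε)) '' univ := by
        ext r
        simp only [mem_Ioi, image_univ, mem_range]
        constructor
        · intro hr
          exact ⟨ε * Real.log r, by rw [mul_div_cancel_left₀ _ hε.ne', Real.exp_log hr]⟩
        · rintro ⟨y, rfl⟩; positivity
      rw [him, lintegral_image_eq_lintegral_abs_deriv_mul (f' := fun S => Real.exp (S/ε) * (1/ε)) MeasurableSet.univ, Measure.restrict_univ]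
      · refine lintegral_congr fun S => ?_
        have e1 : Complex.polarCoord.symm (Real.exp (S/ε), θ) = Complex.exp ((S/ε : ℝ) + (θ:ℝ) * Complex.I) := by
          rw [Complex.polarCoord_symm_apply, Complex.exp_add, Complex.exp_mul_I]
          simp
        have e2 : Complex.exp ((S/ε : ℝ) + (θ:ℝ) * Complex.I) ∈ upperHalf := by
          simp only [upperHalf, mem_ofPred_eq, Complex.exp_im]
          have := Real.sin_pos_of_mem_Ioo h
          simp
          positivity
        rw [e1, indicator_of_mem e2, smul_eq_mul, ← mul_assoc, ← ENNReal.ofReal_mul (by positivity), abs_of_pos (by positivity)]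
        congr 2
        ring
      · intro S _
        exact (((hasDerivAt_id S).div_const ε).exp).hasDerivWithinAt
      · intro x _ y _ hxy
        have := Real.exp_injective hxy
        field_simp at this
        exact this
    · rw [indicator_of_notMem h, setLIntegral_congr_fun (g := fun _ => 0) measurableSet_Ioi, lintegral_zero]
      intro r hr
      have : Complex.polarCoord.symm (r, θ) ∉ upperHalf := by
        simp only [upperHalf, mem_ofPred_eq, not_lt, Complex.polarCoord_symm_apply]
        have : Real.sin θ ≤ 0 := Real.sin_nonpos_of_nonpos_of_neg_pi_le (by
          by_contra h'; exact h ⟨by linarith, hθ.2⟩) hθ.1.le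
        simp [-Complex.ofReal_sin, -Complex.ofReal_cos]
        exact mul_nonpos_of_nonneg_of_nonpos (le_of_lt hr) this
      show _ • upperHalf.indicator g _ = 0
      rw [indicator_of_notMem this, smul_zero]
  rw [setLIntegral_congr_fun measurableSet_Ioo key, setLIntegral_indicator measurableSet_Ioo, inter_eq_left.2 hsub]

theorem W_fin (a : ℝ) (ha : 0 < a) (b : ℝ) :
    ∫⁻ θ in Ioo 0 Real.pi, ENNReal.ofReal (Real.exp (b * θ) * Real.sin θ ^ (a - 1)) < ⊤ := by
  have hpi := Real.pi_pos
  have i1 : IntegrableOn (fun θ : ℝ => θ ^ (a-1)) (Ioo 0 Real.pi) := by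
    have := intervalIntegral.intervalIntegrable_rpow' (r := a - 1) (by linarith) (a := 0) (b := Real.pi)
    rw [intervalIntegrable_iff_integrableOn_Ioo_of_le hpi.le] at this
    exact this
  have i2 : IntegrableOn (fun θ : ℝ => (Real.pi - θ) ^ (a-1)) (Ioo 0 Real.pi) := by
    have := (intervalIntegral.intervalIntegrable_rpow' (r := a - 1) (by linarith) (a := 0) (b := Real.pi)).comp_sub_left Real.pi
    simp only [sub_zero, sub_self] at this
    have := this.symm
    rw [intervalIntegrable_iff_integrableOn_Ioo_of_le hpi.le] at this
    exact this
  have i3 : IntegrableOn (fun θ : ℝ => Real.exp (|b| * Real.pi) * (1 + (2/Real.pi)^(a-1) * (θ ^ (a-1) + (Real.pi - θ) ^ (a-1)))) (Ioo 0 Real.pi) := by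
    refine Integrable.const_mul (Integrable.add ?_ ((i1.add i2).const_mul _)) _
    simp
  refine lt_of_le_of_lt (setLIntegral_mono' measurableSet_Ioo fun θ hθ => ENNReal.ofReal_le_ofReal ?_) i3.lintegral_lt_top
  have hs := Real.sin_pos_of_mem_Ioo hθ
  have h0 : 0 < θ := hθ.1
  have h1 : 0 < Real.pi - θ := by linarith [hθ.2]
  refine mul_le_mul (Real.exp_le_exp.2 ?_) ?_ (by positivity) (by positivity)
  · calc b * θ ≤ |b| * θ := by gcongr; exact le_abs_self b
      _ ≤ _ := by gcongr; linarith
  · rcases le_total 1 a with h | h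
    · have : Real.sin θ ^ (a-1) ≤ 1 := Real.rpow_le_one hs.le (Real.sin_le_one _) (by linarith)
      have : 0 ≤ (2/Real.pi)^(a-1) * (θ ^ (a-1) + (Real.pi - θ) ^ (a-1)) := by positivity
      linarith
    · have q1 : 0 ≤ (2/Real.pi)^(a-1) * θ ^ (a-1) := by positivity
      have q2 : 0 ≤ (2/Real.pi)^(a-1) * (Real.pi - θ) ^ (a-1) := by positivity
      rcases le_total θ (Real.pi/2) with h' | h'
      · have := Real.rpow_le_rpow_of_nonpos (z := a-1) (by positivity) (Real.mul_le_sin h0.le h') (by linarith)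
        rw [Real.mul_rpow (by positivity) (by positivity)] at this
        linarith
      · have := Real.mul_le_sin h1.le (by linarith)
        rw [Real.sin_pi_sub] at this
        have := Real.rpow_le_rpow_of_nonpos (z := a-1) (by positivity) this (by linarith)
        rw [Real.mul_rpow (by positivity) (by positivity)] at this
        linarith

/-- the strip measure -/
noncomputable def stripM : Measure (ℝ × ℝ) :=
  (volume.restrict (Ioo 0 Real.pi)).prod (volume : Measure ℝ)

theorem ae_strip : ∀ᵐ x ∂stripM, x.1 ∈ Ioo 0 Real.pi := by
  have : stripM = (volume.prod volume).restrict (Ioo (0:ℝ) Real.pi ×ˢ (univ : Set ℝ)) := by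
    rw [← Measure.prod_restrict, Measure.restrict_univ, stripM]
  rw [this]
  filter_upwards [ae_restrict_mem (measurableSet_Ioo.prod MeasurableSet.univ)] with x hx
  exact hx.1

theorem wnorm (p a ξ : ℝ) (hp : 1 ≤ p) (g : ℂ → ℂ) (hg : Measurable g) (ε : ℝ) (hε : 0 < ε)
    (h : ℝ × ℝ → ℂ) (hgh : ∀ x : ℝ × ℝ, x.1 ∈ Ioo 0 Real.pi →
      g (Complex.exp ((x.2/ε : ℝ) + (x.1:ℝ) * Complex.I)) =
      Complex.exp ((-((a+1)/p : ℝ) + Complex.I * ξ) * ((x.2/ε : ℝ) + (x.1:ℝ) * Complex.I)) * h x) :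
    ∫⁻ z in upperHalf, (‖g z‖₊ : ℝ≥0∞) ^ p * ENNReal.ofReal (z.im ^ (a - 1)) =
    ENNReal.ofReal (1/ε) * ∫⁻ x, ENNReal.ofReal (Real.exp (-(p*ξ) * x.1) * Real.sin x.1 ^ (a - 1)) *
      (‖h x‖₊ : ℝ≥0∞)^p ∂stripM := by
  rw [cov_upper _ (by fun_prop) ε hε, ← lintegral_const_mul' _ _ ENNReal.ofReal_ne_top]
  refine lintegral_congr_ae ?_
  filter_upwards [ae_strip] with x hx
  rw [hgh x hx]
  have hs := Real.sin_pos_of_mem_Ioo hx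
  set s := x.2/ε with hsdef
  set θ := x.1
  have e1 : (Complex.exp ((s : ℝ) + (θ:ℝ) * Complex.I)).im = Real.exp s * Real.sin θ := by
    simp [Complex.exp_im]
  have e2 : ‖Complex.exp ((-((a+1)/p : ℝ) + Complex.I * ξ) * ((s : ℝ) + (θ:ℝ) * Complex.I))‖ =
      Real.exp (-((a+1)/p) * s - ξ * θ) := by
    rw [Complex.norm_exp]
    congr 1
    simp [-Complex.ofReal_add, -Complex.ofReal_div]
  have e3 : ((‖Complex.exp ((-((a+1)/p : ℝ) + Complex.I * ξ) * ((s : ℝ) + (θ:ℝ) * Complex.I)) * h x‖₊ : ℝ≥0) : ℝ≥0∞) =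
      ENNReal.ofReal (Real.exp (-((a+1)/p) * s - ξ * θ)) * (‖h x‖₊ : ℝ≥0∞) := by
    rw [nnnorm_mul, ENNReal.coe_mul, ← e2, ofReal_norm]; rfl
  rw [e1, e3, ENNReal.mul_rpow_of_nonneg _ _ (by linarith), ENNReal.ofReal_rpow_of_pos (by positivity)]
  have e4 : ENNReal.ofReal (Real.exp s * Real.exp s / ε) * ENNReal.ofReal (Real.exp (-((a+1)/p) * s - ξ * θ) ^ p) *
     ENNReal.ofReal ((Real.exp s * Real.sin θ) ^ (a-1)) = ENNReal.ofReal (1/ε) * ENNReal.ofReal (Real.exp (-(p*ξ) * θ) * Real.sin θ ^ (a - 1)) := by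
    rw [← ENNReal.ofReal_mul (by positivity), ← ENNReal.ofReal_mul (by positivity), ← ENNReal.ofReal_mul (by positivity)]
    congr 1
    rw [Real.mul_rpow (by positivity) hs.le, ← Real.exp_mul, ← Real.exp_mul]
    have : Real.exp (-(p*ξ) * θ) = Real.exp s * Real.exp s * Real.exp ((-((a+1)/p) * s - ξ * θ) * p) * Real.exp (s * (a-1)) := by
      rw [← Real.exp_add, ← Real.exp_add, ← Real.exp_add]
      congr 1
      field_simp
      ring
    rw [this]
    ring
  calc _ = (ENNReal.ofReal (Real.exp s * Real.exp s / ε) * ENNReal.ofReal (Real.exp (-((a+1)/p) * s - ξ * θ) ^ p) *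
     ENNReal.ofReal ((Real.exp s * Real.sin θ) ^ (a-1))) * (‖h x‖₊ : ℝ≥0∞)^p := by ring
    _ = _ := by rw [e4]; ring

/-- the test function -/
noncomputable def tf (c ξ ε : ℝ) (z : ℂ) : ℂ :=
  Complex.exp ((-(c:ℂ) + Complex.I * ξ) * Complex.log z) * Complex.exp (-(ε * Complex.log z)^2)

theorem tf_meas (c ξ ε : ℝ) : Measurable (tf c ξ ε) := by
  unfold tf
  have := Complex.measurable_log
  fun_prop

theorem tf_diff (c ξ ε : ℝ) : DifferentiableOn ℂ (tf c ξ ε) upperHalf := by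
  intro z hz
  have hz' : z ∈ Complex.slitPlane := Or.inr (ne_of_gt hz)
  have := (Complex.differentiableAt_log hz').differentiableWithinAt (s := upperHalf)
  unfold tf
  fun_prop

theorem H_meas (φ : ℝ → ℂ) (hφm : Measurable φ) (c ξ ε : ℝ) : Measurable (HphiHol φ (tf c ξ ε)) := by
  unfold HphiHol
  apply StronglyMeasurable.measurable
  apply StronglyMeasurable.integral_prod_right (f := fun z (t:ℝ) => tf c ξ ε (z / (t : ℂ)) * φ t / (t : ℂ))
  have := tf_meas c ξ ε
  apply Measurable.stronglyMeasurable
  simp only [Function.uncurry_def]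
  fun_prop

/-- the reduced integral -/
noncomputable def JJ (φ : ℝ → ℂ) (c ξ ε : ℝ) (x : ℝ × ℝ) : ℂ :=
  ∫ t in Set.Ioi (0 : ℝ), φ t * (t : ℂ) ^ ((c : ℂ) - 1 - Complex.I * (ξ : ℂ)) *
    Complex.exp (-((x.2 - ε * Real.log t : ℝ) + (ε * x.1 : ℝ) * Complex.I)^2)

theorem JJ_meas (φ : ℝ → ℂ) (hφm : Measurable φ) (c ξ ε : ℝ) : Measurable (JJ φ c ξ ε) := by
  unfold JJ
  apply StronglyMeasurable.measurable
  apply StronglyMeasurable.integral_prod_right (f := fun (x : ℝ × ℝ) (t:ℝ) => φ t * (t : ℂ) ^ ((c : ℂ) - 1 - Complex.I * (ξ : ℂ)) *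
    Complex.exp (-((x.2 - ε * Real.log t : ℝ) + (ε * x.1 : ℝ) * Complex.I)^2))
  apply Measurable.stronglyMeasurable
  simp only [Function.uncurry_def]
  fun_prop

theorem log_E (s θ : ℝ) (h : θ ∈ Ioo 0 Real.pi) :
    Complex.log (Complex.exp (s + θ * Complex.I)) = s + θ * Complex.I := by
  have := Real.pi_pos
  rw [Complex.log_exp] <;> simp <;> linarith [h.1, h.2]

theorem tf_E (c ξ ε : ℝ) (hε : 0 < ε) (x : ℝ × ℝ) (hx : x.1 ∈ Ioo 0 Real.pi) :
    tf c ξ ε (Complex.exp ((x.2/ε : ℝ) + (x.1:ℝ) * Complex.I)) =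
    Complex.exp ((-(c : ℝ) + Complex.I * ξ) * ((x.2/ε : ℝ) + (x.1:ℝ) * Complex.I)) *
      Complex.exp (-((x.2 : ℝ) + (ε * x.1 : ℝ) * Complex.I)^2) := by
  rw [tf, log_E _ _ hx]
  congr 4
  have : (ε:ℂ) ≠ 0 := by exact_mod_cast hε.ne'
  push_cast
  field_simp

theorem H_E (φ : ℝ → ℂ) (c ξ ε : ℝ) (hε : 0 < ε) (x : ℝ × ℝ) (hx : x.1 ∈ Ioo 0 Real.pi) :
    HphiHol φ (tf c ξ ε) (Complex.exp ((x.2/ε : ℝ) + (x.1:ℝ) * Complex.I)) =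
    Complex.exp ((-(c : ℝ) + Complex.I * ξ) * ((x.2/ε : ℝ) + (x.1:ℝ) * Complex.I)) * JJ φ c ξ ε x := by
  rw [HphiHol, JJ, ← integral_const_mul]
  refine setIntegral_congr_fun measurableSet_Ioi fun t ht => ?_
  have ht : 0 < t := ht
  have ht' : (t:ℂ) ≠ 0 := by exact_mod_cast ht.ne'
  have : (ε:ℂ) ≠ 0 := by exact_mod_cast hε.ne'
  have e : Complex.exp ((x.2/ε : ℝ) + (x.1:ℝ) * Complex.I) / (t:ℂ) =
      Complex.exp (((x.2 - ε * Real.log t)/ε : ℝ) + (x.1:ℝ) * Complex.I) := by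
    have : (t:ℂ) = Complex.exp (Real.log t : ℝ) := by rw [← Complex.ofReal_exp, Real.exp_log ht]
    nth_rw 1 [this]
    rw [← Complex.exp_sub]
    congr 1
    push_cast
    field_simp
    ring
  rw [e, tf_E c ξ ε hε (x.1, x.2 - ε * Real.log t) hx]
  have e2 : Complex.exp ((-(c : ℝ) + Complex.I * ξ) * (((x.2 - ε * Real.log t)/ε : ℝ) + (x.1:ℝ) * Complex.I)) / t =
     Complex.exp ((-(c : ℝ) + Complex.I * ξ) * ((x.2/ε : ℝ) + (x.1:ℝ) * Complex.I)) * (t : ℂ) ^ ((c : ℂ) - 1 - Complex.I * (ξ : ℂ)) := by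
    rw [div_eq_iff ht', mul_assoc]
    have e3 : (t : ℂ) ^ ((c : ℂ) - 1 - Complex.I * (ξ : ℂ)) * t = (t : ℂ) ^ ((c : ℂ) - 1 - Complex.I * (ξ : ℂ) + 1) := by
      rw [Complex.cpow_add _ _ ht', Complex.cpow_one]
    rw [e3, Complex.cpow_def_of_ne_zero ht', ← Complex.exp_add, ← Complex.ofReal_log ht.le]
    congr 1
    push_cast
    field_simp
    ring
  calc _ = (Complex.exp ((-(c : ℝ) + Complex.I * ξ) * (((x.2 - ε * Real.log t)/ε : ℝ) + (x.1:ℝ) * Complex.I)) / t) * (φ t * Complex.exp (-((x.2 - ε * Real.log t : ℝ) + (ε * x.1 : ℝ) * Complex.I)^2)) := by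
          simp only []
          ring
    _ = _ := by rw [e2]; ring

theorem norm_gauss (u v : ℝ) : ‖Complex.exp (-((u:ℝ) + (v : ℝ) * Complex.I)^2)‖ = Real.exp (-u^2 + v^2) := by
  rw [Complex.norm_exp]
  congr 1
  simp [pow_two]
  ring

theorem JJ_lim (φ : ℝ → ℂ) (hφm : Measurable φ) (c ξ : ℝ)
    (hφ : IntegrableOn (fun t => ‖φ t‖ * t ^ (c - 1)) (Set.Ioi (0 : ℝ))) (x : ℝ × ℝ) :
    Tendsto (fun n : ℕ => JJ φ c ξ (1 / ((n:ℝ) + 1)) x) atTop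
      (𝓝 (khat φ c ξ * Complex.exp (-(x.2:ℂ)^2))) := by
  rw [khat, ← integral_mul_const]
  unfold JJ
  refine tendsto_integral_of_dominated_convergence (fun t => ‖φ t‖ * t ^ (c - 1) * Real.exp (x.1^2)) ?_ (hφ.mul_const _) ?_ ?_
  · intro n
    apply Measurable.aestronglyMeasurable
    fun_prop
  · intro n
    filter_upwards [ae_restrict_mem measurableSet_Ioi] with t ht
    have ht : 0 < t := ht
    rw [norm_mul, norm_mul, norm_gauss, Complex.norm_cpow_eq_rpow_re_of_pos ht]
    have : ((c : ℂ) - 1 - Complex.I * (ξ : ℂ)).re = c - 1 := by simp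
    rw [this]
    gcongr
    have h1 : 1 / ((n:ℝ)+1) ≤ 1 := by
      rw [div_le_one (by positivity)]; linarith [(Nat.cast_nonneg n : (0:ℝ) ≤ n)]
    have h2 : 0 ≤ 1 / ((n:ℝ)+1) := by positivity
    have h3 : (1 / ((n:ℝ)+1))^2 ≤ 1 := pow_le_one₀ h2 h1
    have : (1 / ((n:ℝ)+1) * x.1)^2 ≤ x.1^2 := by
      rw [mul_pow]; exact mul_le_of_le_one_left (sq_nonneg _) h3
    linarith [sq_nonneg (x.2 - 1 / ((n:ℝ)+1) * Real.log t)]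
  · refine ae_of_all _ fun t => ?_
    refine Tendsto.const_mul _ ?_
    have hc : Continuous (fun ε : ℝ => Complex.exp (-((x.2 - ε * Real.log t : ℝ) + (ε * x.1 : ℝ) * Complex.I)^2)) := by
      fun_prop
    have := (hc.tendsto 0).comp tendsto_one_div_add_atTop_nhds_zero_nat
    simpa [Function.comp_def] using this

theorem main_aux (p a : ℝ) (hp : 1 ≤ p) (ha : 0 < a) (φ : ℝ → ℂ) (hφm : Measurable φ)
    (hφ : IntegrableOn (fun t => ‖φ t‖ * t ^ ((a + 1) / p - 1)) (Set.Ioi (0 : ℝ)))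
    (C : ℝ) (hC : 0 ≤ C)
    (hbound : ∀ f : ℂ → ℂ, DifferentiableOn ℂ f upperHalf → bergmanNorm p a f < ⊤ →
      bergmanNorm p a (HphiHol φ f) ≤ ENNReal.ofReal C * bergmanNorm p a f) (ξ : ℝ) :
    ‖khat φ ((a + 1) / p) ξ‖ ≤ C := by
  have hp0 : 0 < p := by linarith
  set c := (a+1)/p with hc
  set W : ℝ → ℝ≥0∞ := fun θ => ENNReal.ofReal (Real.exp (-(p*ξ) * θ) * Real.sin θ ^ (a - 1)) with hW
  have hWm : Measurable W := by fun_prop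
  set V : ℝ → ℝ≥0∞ := fun S => ENNReal.ofReal (Real.exp (-p * S^2)) with hV
  have hVm : Measurable V := by fun_prop
  set B : ℝ≥0∞ := ∫⁻ x, W x.1 * V x.2 ∂stripM with hB
  have hBe : B = (∫⁻ θ in Ioo 0 Real.pi, W θ) * ∫⁻ S, V S := by
    rw [hB, stripM, lintegral_prod_mul hWm.aemeasurable hVm.aemeasurable]
  have hBtop : B ≠ ⊤ := by
    rw [hBe]
    exact ENNReal.mul_ne_top (W_fin a ha _).ne (integrable_exp_neg_mul_sq hp0).lintegral_lt_top.ne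
  have hB0 : B ≠ 0 := by
    rw [hBe]
    refine mul_ne_zero ?_ ?_
    · refine ((setLIntegral_pos_iff hWm).2 ?_).ne'
      have : Function.support W ∩ Ioo 0 Real.pi = Ioo 0 Real.pi := by
        rw [inter_eq_right]
        intro θ hθ
        have := Real.sin_pos_of_mem_Ioo hθ
        have : 0 < W θ := ENNReal.ofReal_pos.2 (by positivity)
        exact this.ne'
      rw [this]
      simp [Real.pi_pos]
    · refine ((lintegral_pos_iff_support hVm).2 ?_).ne'
      have : Function.support V = univ := by
        ext S
        have : 0 < V S := ENNReal.ofReal_pos.2 (by positivity)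
        simp [this.ne']
      rw [this]
      simp
  have step : ∀ n : ℕ, ∫⁻ x, W x.1 * (‖JJ φ c ξ (1/((n:ℝ)+1)) x‖₊ : ℝ≥0∞)^p ∂stripM ≤
      ENNReal.ofReal C ^ p * (ENNReal.ofReal (Real.exp (p * ((1/((n:ℝ)+1))^2 * Real.pi^2))) * B) := by
    intro n
    set ε := 1/((n:ℝ)+1) with hεd
    have hε : 0 < ε := by positivity
    have N1 := wnorm p a ξ hp (tf c ξ ε) (tf_meas _ _ _) ε hε _ (tf_E c ξ ε hε)
    have N2 := wnorm p a ξ hp (HphiHol φ (tf c ξ ε)) (H_meas φ hφm _ _ _) ε hε _ (H_E φ c ξ ε hε)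
    have N3 : ∫⁻ x, ENNReal.ofReal (Real.exp (-(p*ξ) * x.1) * Real.sin x.1 ^ (a - 1)) *
      (‖Complex.exp (-((x.2 : ℝ) + (ε * x.1 : ℝ) * Complex.I)^2)‖₊ : ℝ≥0∞)^p ∂stripM ≤
        ENNReal.ofReal (Real.exp (p * (ε^2 * Real.pi^2))) * B := by
      rw [hB, ← lintegral_const_mul' _ _ ENNReal.ofReal_ne_top]
      refine lintegral_mono_ae ?_
      filter_upwards [ae_strip] with x hx
      rw [mul_left_comm]
      refine mul_le_mul_right ?_ _
      rw [← enorm_eq_nnnorm, ← ofReal_norm, norm_gauss, ENNReal.ofReal_rpow_of_pos (by positivity), ← ENNReal.ofReal_mul (by positivity), ← Real.exp_mul, ← Real.exp_add]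
      refine ENNReal.ofReal_le_ofReal (Real.exp_le_exp.2 ?_)
      have : x.1^2 ≤ Real.pi^2 := pow_le_pow_left₀ hx.1.le hx.2.le 2
      have : p * (ε^2 * x.1^2) ≤ p * (ε^2 * Real.pi^2) := by gcongr
      nlinarith
    have hfin : bergmanNorm p a (tf c ξ ε) < ⊤ := by
      rw [bergmanNorm, N1]
      refine ENNReal.rpow_lt_top_of_nonneg (by positivity) ?_
      exact ENNReal.mul_ne_top ENNReal.ofReal_ne_top (ne_top_of_le_ne_top (ENNReal.mul_ne_top ENNReal.ofReal_ne_top hBtop) N3)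
    have hb := ENNReal.rpow_le_rpow (hbound _ (tf_diff c ξ ε) hfin) hp0.le
    rw [ENNReal.mul_rpow_of_nonneg _ _ hp0.le, bergmanNorm, bergmanNorm, ← ENNReal.rpow_mul, ← ENNReal.rpow_mul, one_div_mul_cancel hp0.ne', ENNReal.rpow_one, ENNReal.rpow_one, N1, N2, mul_left_comm] at hb
    rw [ENNReal.mul_le_mul_iff_right (by simpa using hε) ENNReal.ofReal_ne_top] at hb
    exact hb.trans (mul_le_mul_right N3 _)
  have lim1 : ∀ x, Tendsto (fun n : ℕ => W x.1 * (‖JJ φ c ξ (1/((n:ℝ)+1)) x‖₊ : ℝ≥0∞)^p) atTop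
      (𝓝 (ENNReal.ofReal ‖khat φ c ξ‖ ^ p * (W x.1 * V x.2))) := by
    intro x
    have h1 := (JJ_lim φ hφm c ξ hφ x).enorm
    have h2 := (ENNReal.continuous_rpow_const (y := p)).continuousAt.tendsto.comp h1
    have h3 := ENNReal.Tendsto.const_mul (a := W x.1) h2 (Or.inr ENNReal.ofReal_ne_top)
    convert! h3 using 2
    rw [enorm_mul, ENNReal.mul_rpow_of_nonneg _ _ hp0.le, ofReal_norm, mul_left_comm]
    congr 2
    have := norm_gauss x.2 0
    simp only [Complex.ofReal_zero, zero_mul, add_zero] at this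
    rw [← ofReal_norm (Complex.exp _), this, ENNReal.ofReal_rpow_of_pos (by positivity), ← Real.exp_mul, hV]
    ring_nf
  have fatou := lintegral_liminf_le (μ := stripM) (u := atTop) (f := fun (n : ℕ) x => W x.1 * (‖JJ φ c ξ (1/((n:ℝ)+1)) x‖₊ : ℝ≥0∞)^p) (by
    intro n
    have := JJ_meas φ hφm c ξ (1/((n:ℝ)+1))
    fun_prop)
  have lim2 : Tendsto (fun n : ℕ => ENNReal.ofReal C ^ p * (ENNReal.ofReal (Real.exp (p * ((1/((n:ℝ)+1))^2 * Real.pi^2))) * B)) atTop (𝓝 (ENNReal.ofReal C ^ p * B)) := by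
    have hcont : Continuous (fun ε : ℝ => ENNReal.ofReal (Real.exp (p * (ε^2 * Real.pi^2)))) :=
      ENNReal.continuous_ofReal.comp (by fun_prop)
    have h1 := (hcont.tendsto 0).comp tendsto_one_div_add_atTop_nhds_zero_nat
    have h2 := ENNReal.Tendsto.const_mul (a := ENNReal.ofReal C ^ p) (ENNReal.Tendsto.mul_const (b := B) h1 (Or.inr hBtop)) (Or.inr (ENNReal.rpow_ne_top_of_nonneg hp0.le ENNReal.ofReal_ne_top))
    simpa using h2
  have fin : ENNReal.ofReal ‖khat φ c ξ‖ ^ p * B ≤ ENNReal.ofReal C ^ p * B := by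
    calc _ = ∫⁻ x, liminf (fun n : ℕ => W x.1 * (‖JJ φ c ξ (1/((n:ℝ)+1)) x‖₊ : ℝ≥0∞)^p) atTop ∂stripM := by
          rw [hB, ← lintegral_const_mul' _ _ (ENNReal.rpow_ne_top_of_nonneg hp0.le ENNReal.ofReal_ne_top)]
          exact lintegral_congr fun x => (lim1 x).liminf_eq.symm
      _ ≤ _ := fatou
      _ ≤ liminf (fun n : ℕ => ENNReal.ofReal C ^ p * (ENNReal.ofReal (Real.exp (p * ((1/((n:ℝ)+1))^2 * Real.pi^2))) * B)) atTop := liminf_le_liminf (Eventually.of_forall step)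
      _ = _ := lim2.liminf_eq
  rw [ENNReal.mul_le_mul_iff_left hB0 hBtop, ENNReal.rpow_le_rpow_iff hp0] at fin
  exact (ENNReal.ofReal_le_ofReal_iff hC).1 fin

end helpers

/-- If `C ≥ 0` satisfies `‖ℋ_φ f‖_{A^p_a} ≤ C ‖f‖_{A^p_a}` for every
holomorphic `f` on `𝕌` of finite weighted Bergman norm, then
`sup_{ξ ∈ ℝ} |k̂_{a,p}(ξ)| ≤ C`. -/
theorem stmt14 (p a : ℝ) (hp : 1 ≤ p) (ha : 0 < a) (φ : ℝ → ℂ) (hφm : Measurable φ)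
    (hφ : IntegrableOn (fun t => ‖φ t‖ * t ^ ((a + 1) / p - 1)) (Set.Ioi (0 : ℝ)))
    (C : ℝ) (hC : 0 ≤ C)
    (hbound : ∀ f : ℂ → ℂ, DifferentiableOn ℂ f upperHalf → bergmanNorm p a f < ⊤ →
      bergmanNorm p a (HphiHol φ f) ≤ ENNReal.ofReal C * bergmanNorm p a f) :
    ∀ ξ : ℝ, ‖khat φ ((a + 1) / p) ξ‖ ≤ C := by
  exact fun ξ => main_aux p a hp ha φ hφm hφ C hC hbound ξ
end

section
/- Let 1 ≤ p < ∞, a > −1, and let ν ∈ ℂ with p·Re ν > a + 1. Let C_ν be the Hausdorff operator H_φ with kernel φ(t) = t^{−ν}·1_{[1,∞)}(t), i.e. C_ν f(x) = ∫₁^∞ f(x/t) t^{−ν−1} dt. Then C_ν is a bounded linear operator on L^p(ℝ, |x|^a) and its spectrum equals the circle { z ∈ ℂ : |z − p/(2(p·Re ν − a − 1))| = p/(2(p·Re ν − a − 1)) }. -/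
open MeasureTheory

/-- The Hausdorff operator `H_φ f(x) = ∫₀^∞ f(x/t) φ(t) t⁻¹ dt`. -/
noncomputable def Hphi (φ : ℝ → ℂ) (f : ℝ → ℂ) (x : ℝ) : ℂ :=
  ∫ t in Set.Ioi (0 : ℝ), f (x / t) * φ t / (t : ℂ)

/-- The weighted measure `|x|^a dx` on `ℝ`. -/
noncomputable def weightMeasure (a : ℝ) : Measure ℝ :=
  volume.withDensity fun x => ENNReal.ofReal (|x| ^ a)

/-- The Cesàro kernel `φ(t) = t^{−ν}·1_{[1,∞)}(t)`. -/
noncomputable def cesaroKernel (ν : ℂ) (t : ℝ) : ℂ :=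
  if 1 ≤ t then (t : ℂ) ^ (-ν) else 0

open scoped ENNReal

namespace HausdorffAux

lemma meas_weight (a : ℝ) : Measurable (fun x : ℝ => ENNReal.ofReal (|x| ^ a)) := by
  fun_prop

instance (a : ℝ) : SFinite (weightMeasure a) := by
  unfold weightMeasure; infer_instance

/-- scaling of the weighted measure -/
lemma lintegral_scale (a : ℝ) (g : ℝ → ℝ≥0∞) (hg : Measurable g) (y : ℝ) :
    ∫⁻ x, g (Real.exp (-y) * x) ∂(weightMeasure a)
      = ENNReal.ofReal (Real.exp ((a + 1) * y)) * ∫⁻ x, g x ∂(weightMeasure a) := by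
  unfold weightMeasure
  have hgm : Measurable (fun x => g (Real.exp (-y) * x)) := hg.comp (measurable_const_mul _)
  rw [lintegral_withDensity_eq_lintegral_mul _ (meas_weight a) hgm,
    lintegral_withDensity_eq_lintegral_mul _ (meas_weight a) hg]
  have hne : Real.exp (-y) ≠ 0 := (Real.exp_pos _).ne'
  have h1 : ∀ x : ℝ, ((fun x : ℝ => ENNReal.ofReal (|x| ^ a)) * fun x => g (Real.exp (-y) * x)) x
      = ENNReal.ofReal (Real.exp (a * y)) *
        ((fun x : ℝ => ENNReal.ofReal (|x| ^ a)) * g) (Real.exp (-y) * x) := by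
    intro x
    simp only [Pi.mul_apply]
    rw [← mul_assoc, ← ENNReal.ofReal_mul (Real.exp_pos _).le]
    congr 2
    rw [abs_mul, abs_of_pos (Real.exp_pos _), Real.mul_rpow (Real.exp_pos _).le (abs_nonneg _),
      ← Real.exp_mul, ← mul_assoc, ← Real.exp_add]
    simp [mul_comm]
  have hm : Measurable ((fun x : ℝ => ENNReal.ofReal (|x| ^ a)) * g) := (meas_weight a).mul hg
  have hm' : Measurable (fun x => ((fun x : ℝ => ENNReal.ofReal (|x| ^ a)) * g)
    (Real.exp (-y) * x)) := hm.comp (measurable_const_mul _)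
  rw [lintegral_congr h1, lintegral_const_mul _ hm']
  have h2 := lintegral_map (μ := volume) hm (measurable_const_mul (Real.exp (-y)))
  rw [Real.map_volume_mul_left hne, lintegral_smul_measure] at h2
  rw [← h2, smul_eq_mul, ← mul_assoc, ← ENNReal.ofReal_mul (Real.exp_pos _).le]
  congr 2
  rw [← Real.exp_neg, abs_of_pos (Real.exp_pos _), ← Real.exp_add]
  ring_nf

lemma jensen {m : Measure ℝ} {p : ℝ} (hp : 1 ≤ p) (G : ℝ → ℝ≥0∞) (hG : Measurable G) :
    (∫⁻ y, G y ∂m) ^ p ≤ (∫⁻ y, G y ^ p ∂m) * m Set.univ ^ (p - 1) := by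
  have hp0 : 0 < p := by linarith
  have h := eLpNorm'_le_eLpNorm'_mul_rpow_measure_univ (μ := m) (f := G) one_pos hp
    hG.aestronglyMeasurable
  simp only [eLpNorm', enorm_eq_self, ENNReal.rpow_one, div_one] at h
  have h9 := ENNReal.rpow_le_rpow h hp0.le
  rw [ENNReal.mul_rpow_of_nonneg _ _ hp0.le, ← ENNReal.rpow_mul, ← ENNReal.rpow_mul] at h9
  have e1 : 1 / p * p = 1 := by field_simp
  have e2 : (1 - 1 / p) * p = p - 1 := by field_simp
  rwa [e1, e2, ENNReal.rpow_one] at h9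

/-- the total mass of a kernel against `e^{s y}` -/
noncomputable def mass (s : ℝ) (K : ℝ → ℂ) : ℝ≥0∞ :=
  ∫⁻ y, ‖K y‖ₑ * ENNReal.ofReal (Real.exp (s * y))

lemma key (p a : ℝ) (hp : 1 ≤ p) (K : ℝ → ℂ) (hK : Measurable K)
    (hM : mass ((a + 1) / p) K ≠ ∞) (F : ℝ → ℝ≥0∞) (hF : Measurable F) :
    ∫⁻ x, (∫⁻ y, F (Real.exp (-y) * x) * ‖K y‖ₑ) ^ p ∂(weightMeasure a)
      ≤ mass ((a + 1) / p) K ^ p * ∫⁻ x, F x ^ p ∂(weightMeasure a) := by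
  have hp0 : 0 < p := by linarith
  set s := (a + 1) / p with hs
  set d : ℝ → ℝ≥0∞ := fun y => ‖K y‖ₑ * ENNReal.ofReal (Real.exp (s * y)) with hd
  have hdm : Measurable d := by fun_prop
  set m : Measure ℝ := volume.withDensity d with hmdef
  have hmuniv : m Set.univ = mass s K := by
    rw [hmdef, withDensity_apply _ MeasurableSet.univ, Measure.restrict_univ]; rfl
  have hFm : Measurable (fun z : ℝ × ℝ => F (Real.exp (-z.2) * z.1) *
      ENNReal.ofReal (Real.exp (-(s * z.2)))) := by
    refine Measurable.mul (hF.comp (by fun_prop)) (by fun_prop)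
  have hstep : ∀ x, (∫⁻ y, F (Real.exp (-y) * x) * ‖K y‖ₑ) =
      ∫⁻ y, F (Real.exp (-y) * x) * ENNReal.ofReal (Real.exp (-(s * y))) ∂m := by
    intro x
    have hx : Measurable (fun y => F (Real.exp (-y) * x) *
        ENNReal.ofReal (Real.exp (-(s * y)))) := hFm.comp (measurable_prodMk_left (x := x))
    rw [hmdef, lintegral_withDensity_eq_lintegral_mul _ hdm hx]
    refine lintegral_congr fun y => ?_
    simp only [Pi.mul_apply, hd]
    have : ENNReal.ofReal (Real.exp (s * y)) * ENNReal.ofReal (Real.exp (-(s * y))) = 1 := by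
      rw [← ENNReal.ofReal_mul (Real.exp_pos _).le, ← Real.exp_add]; simp
    calc F (Real.exp (-y) * x) * ‖K y‖ₑ
        = F (Real.exp (-y) * x) * ‖K y‖ₑ * (ENNReal.ofReal (Real.exp (s * y)) *
          ENNReal.ofReal (Real.exp (-(s * y)))) := by rw [this, mul_one]
      _ = _ := by ring
  have hpm : Measurable (fun z : ℝ × ℝ => (F (Real.exp (-z.2) * z.1) *
      ENNReal.ofReal (Real.exp (-(s * z.2)))) ^ p) := hFm.pow_const p
  calc ∫⁻ x, (∫⁻ y, F (Real.exp (-y) * x) * ‖K y‖ₑ) ^ p ∂(weightMeasure a)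
      ≤ ∫⁻ x, (∫⁻ y, (F (Real.exp (-y) * x) * ENNReal.ofReal (Real.exp (-(s * y)))) ^ p ∂m)
          * m Set.univ ^ (p - 1) ∂(weightMeasure a) := by
        refine lintegral_mono fun x => ?_
        rw [hstep x]
        exact jensen hp _ (hFm.comp (measurable_prodMk_left (x := x)))
    _ = (∫⁻ x, (∫⁻ y, (F (Real.exp (-y) * x) * ENNReal.ofReal (Real.exp (-(s * y)))) ^ p ∂m)
          ∂(weightMeasure a)) * mass s K ^ (p - 1) := by
        rw [lintegral_mul_const _ hpm.lintegral_prod_right', hmuniv]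
    _ = (∫⁻ y, (∫⁻ x, F x ^ p ∂(weightMeasure a)) ∂m) * mass s K ^ (p - 1) := by
        rw [lintegral_lintegral_swap hpm.aemeasurable]
        congr 1
        refine lintegral_congr fun y => ?_
        have : ∀ x, (F (Real.exp (-y) * x) * ENNReal.ofReal (Real.exp (-(s * y)))) ^ p
            = (fun x => F x ^ p) (Real.exp (-y) * x) *
              ENNReal.ofReal (Real.exp (-((a + 1) * y))) := by
          intro x
          rw [ENNReal.mul_rpow_of_nonneg _ _ hp0.le,
            ENNReal.ofReal_rpow_of_pos (Real.exp_pos _), ← Real.exp_mul]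
          congr 4
          rw [hs]; field_simp
        have hy : Measurable (fun x => (fun x => F x ^ p) (Real.exp (-y) * x)) :=
          (hF.pow_const p).comp (measurable_const_mul _)
        rw [lintegral_congr this, lintegral_mul_const _ hy, lintegral_scale a _ (hF.pow_const p)]
        rw [mul_right_comm, ← ENNReal.ofReal_mul (Real.exp_pos _).le, ← Real.exp_add]
        simp
    _ = mass s K ^ p * ∫⁻ x, F x ^ p ∂(weightMeasure a) := by
        rw [lintegral_const, hmuniv, mul_assoc, mul_comm]
        congr 1
        nth_rw 1 [← ENNReal.rpow_one (mass s K)]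
        rw [← ENNReal.rpow_add_of_nonneg _ _ zero_le_one (by linarith)]
        ring_nf

/-- the convolution-type operator -/
noncomputable def WOp (K : ℝ → ℂ) (f : ℝ → ℂ) (x : ℝ) : ℂ :=
  ∫ y, f (Real.exp (-y) * x) * K y

lemma eLp (p a : ℝ) (hp : 1 ≤ p) (f : ℝ → ℂ) :
    eLpNorm f (ENNReal.ofReal p) (weightMeasure a) =
      (∫⁻ x, ‖f x‖ₑ ^ p ∂(weightMeasure a)) ^ (1 / p) := by
  have hp0 : 0 < p := by linarith
  rw [eLpNorm_eq_lintegral_rpow_enorm_toReal (by simpa using hp0) ENNReal.ofReal_ne_top,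
    ENNReal.toReal_ofReal hp0.le]

lemma lint_lt_top {p a : ℝ} (hp : 1 ≤ p) {f : ℝ → ℂ}
    (hf : eLpNorm f (ENNReal.ofReal p) (weightMeasure a) < ∞) :
    ∫⁻ x, ‖f x‖ₑ ^ p ∂(weightMeasure a) < ∞ := by
  rw [eLp p a hp] at hf
  exact (ENNReal.rpow_lt_top_iff_of_pos (by positivity)).1 hf

lemma meas_prod {f K : ℝ → ℂ} (hf : Measurable f) (hK : Measurable K) :
    Measurable (fun z : ℝ × ℝ => f (Real.exp (-z.2) * z.1) * K z.2) :=
  (hf.comp (by fun_prop)).mul (hK.comp measurable_snd)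

lemma WOp_meas {f K : ℝ → ℂ} (hf : Measurable f) (hK : Measurable K) :
    StronglyMeasurable (WOp K f) :=
  (meas_prod hf hK).stronglyMeasurable.integral_prod_right'

lemma WOp_norm (p a : ℝ) (hp : 1 ≤ p) (K : ℝ → ℂ) (hK : Measurable K)
    (hM : mass ((a + 1) / p) K ≠ ∞) (f : ℝ → ℂ) (hf : Measurable f) :
    eLpNorm (WOp K f) (ENNReal.ofReal p) (weightMeasure a) ≤
      mass ((a + 1) / p) K * eLpNorm f (ENNReal.ofReal p) (weightMeasure a) := by
  have hp0 : 0 < p := by linarith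
  rw [eLp p a hp, eLp p a hp]
  have h : ∫⁻ x, ‖WOp K f x‖ₑ ^ p ∂(weightMeasure a) ≤
      mass ((a + 1) / p) K ^ p * ∫⁻ x, ‖f x‖ₑ ^ p ∂(weightMeasure a) := by
    refine le_trans (lintegral_mono fun x => ?_) (key p a hp K hK hM (fun x => ‖f x‖ₑ) hf.enorm)
    refine ENNReal.rpow_le_rpow ?_ hp0.le
    refine (enorm_integral_le_lintegral_enorm _).trans_eq ?_
    simp [enorm_mul]
  refine (ENNReal.rpow_le_rpow h (by positivity : 0 ≤ 1 / p)).trans_eq ?_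
  rw [ENNReal.mul_rpow_of_nonneg _ _ (by positivity), ← ENNReal.rpow_mul]
  have e1 : p * (1 / p) = 1 := by field_simp
  rw [e1, ENNReal.rpow_one]

lemma ae_int (p a : ℝ) (hp : 1 ≤ p) (K : ℝ → ℂ) (hK : Measurable K)
    (hM : mass ((a + 1) / p) K ≠ ∞) (f : ℝ → ℂ) (hf : Measurable f)
    (hfp : eLpNorm f (ENNReal.ofReal p) (weightMeasure a) < ∞) :
    ∀ᵐ x ∂(weightMeasure a), Integrable (fun y => f (Real.exp (-y) * x) * K y) := by
  have hp0 : 0 < p := by linarith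
  have h := (key p a hp K hK hM (fun x => ‖f x‖ₑ) hf.enorm).trans_lt
    (ENNReal.mul_lt_top (ENNReal.rpow_lt_top_of_nonneg hp0.le hM) (lint_lt_top hp hfp))
  have hm : Measurable (fun z : ℝ × ℝ => ‖f (Real.exp (-z.2) * z.1)‖ₑ * ‖K z.2‖ₑ) := by
    simpa [enorm_mul] using (meas_prod hf hK).enorm
  filter_upwards [ae_lt_top (hm.lintegral_prod_right'.pow_const p) h.ne] with x hx
  refine ⟨((meas_prod hf hK).comp (measurable_prodMk_left (x := x))).aestronglyMeasurable, ?_⟩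
  rw [ENNReal.rpow_lt_top_iff_of_pos hp0] at hx
  simpa [HasFiniteIntegral, enorm_mul] using hx

lemma WOp_eq_of (K f g : ℝ → ℂ) (hK : Measurable K) (hf : Measurable f) (hg : Measurable g)
    (x : ℝ) (hx : ∫⁻ y, ‖f (Real.exp (-y) * x) - g (Real.exp (-y) * x)‖ₑ * ‖K y‖ₑ = 0) :
    WOp K f x = WOp K g x := by
  have hmx : Measurable (fun y => ‖f (Real.exp (-y) * x) - g (Real.exp (-y) * x)‖ₑ * ‖K y‖ₑ) := by
    have h1 : Measurable (fun y : ℝ => f (Real.exp (-y) * x)) := hf.comp (by fun_prop)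
    have h2 : Measurable (fun y : ℝ => g (Real.exp (-y) * x)) := hg.comp (by fun_prop)
    exact (h1.sub h2).enorm.mul hK.enorm
  have hx' := (lintegral_eq_zero_iff hmx).1 hx
  refine integral_congr_ae (hx'.mono fun y hy => ?_)
  have hy' : ‖f (Real.exp (-y) * x) - g (Real.exp (-y) * x)‖ₑ * ‖K y‖ₑ = 0 := hy
  rcases mul_eq_zero.1 hy' with h3 | h3
  · have h4 := sub_eq_zero.1 (enorm_eq_zero.1 h3)
    simp only [h4]
  · simp only [enorm_eq_zero.1 h3, mul_zero]

lemma WOp_congr (p a : ℝ) (hp : 1 ≤ p) (K : ℝ → ℂ) (hK : Measurable K)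
    (hM : mass ((a + 1) / p) K ≠ ∞) (f g : ℝ → ℂ) (hf : Measurable f) (hg : Measurable g)
    (hfg : f =ᵐ[weightMeasure a] g) :
    WOp K f =ᵐ[weightMeasure a] WOp K g := by
  have hp0 : 0 < p := by linarith
  have hs1 : Measurable (fun x => ‖f x - g x‖ₑ) := by fun_prop
  have h := key p a hp K hK hM (fun x => ‖f x - g x‖ₑ) hs1
  have h0 : ∫⁻ x, ‖f x - g x‖ₑ ^ p ∂(weightMeasure a) = 0 := by
    have hsub : Measurable (fun x => ‖f x - g x‖ₑ ^ p) := hs1.pow_const p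
    rw [lintegral_eq_zero_iff hsub]
    filter_upwards [hfg] with x hx
    simp [hx, hp0]
  rw [h0, mul_zero, nonpos_iff_eq_zero] at h
  have hm : Measurable (fun z : ℝ × ℝ =>
      ‖f (Real.exp (-z.2) * z.1) - g (Real.exp (-z.2) * z.1)‖ₑ * ‖K z.2‖ₑ) := by
    refine Measurable.mul ?_ (hK.enorm.comp measurable_snd)
    exact hs1.comp (g := fun x => ‖f x - g x‖ₑ)
      (f := fun z : ℝ × ℝ => Real.exp (-z.2) * z.1) (by fun_prop)
  have hmm : Measurable (fun x : ℝ => (∫⁻ y,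
      ‖f (Real.exp (-y) * x) - g (Real.exp (-y) * x)‖ₑ * ‖K y‖ₑ) ^ p) :=
    hm.lintegral_prod_right'.pow_const p
  have h' := (lintegral_eq_zero_iff hmm).1 h
  refine h'.mono fun x hx => WOp_eq_of K f g hK hf hg x ?_
  have hx2 : (∫⁻ y, ‖f (Real.exp (-y) * x) - g (Real.exp (-y) * x)‖ₑ * ‖K y‖ₑ) ^ p = 0 := hx
  exact (ENNReal.rpow_eq_zero_iff_of_pos hp0).1 hx2

/-- composition, in terms of the convolution of kernels -/
lemma WOp_comp (p a : ℝ) (hp : 1 ≤ p) (K L : ℝ → ℂ) (hK : Measurable K) (hL : Measurable L)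
    (hM : mass ((a + 1) / p) K ≠ ∞) (hN : mass ((a + 1) / p) L ≠ ∞)
    (f : ℝ → ℂ) (hf : Measurable f)
    (hfp : eLpNorm f (ENNReal.ofReal p) (weightMeasure a) < ∞) :
    WOp K (WOp L f) =ᵐ[weightMeasure a] WOp (fun w => ∫ y, L (w - y) * K y) f := by
  have hp0 : 0 < p := by linarith
  have hm : Measurable (fun z : ℝ × ℝ => ‖f (Real.exp (-z.2) * z.1)‖ₑ * ‖L z.2‖ₑ) := by
    simpa [enorm_mul] using (meas_prod hf hL).enorm
  set F : ℝ → ℝ≥0∞ := fun x => ∫⁻ z, ‖f (Real.exp (-z) * x)‖ₑ * ‖L z‖ₑ with hFdef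
  have hF : Measurable F := hm.lintegral_prod_right'
  have h1 := (key p a hp L hL hN (fun x => ‖f x‖ₑ) hf.enorm).trans_lt
    (ENNReal.mul_lt_top (ENNReal.rpow_lt_top_of_nonneg hp0.le hN) (lint_lt_top hp hfp))
  have h2 := (key p a hp K hK hM F hF).trans_lt
    (ENNReal.mul_lt_top (ENNReal.rpow_lt_top_of_nonneg hp0.le hM) h1)
  have hFK : Measurable (fun z : ℝ × ℝ => F (Real.exp (-z.2) * z.1) * ‖K z.2‖ₑ) :=
    (hF.comp (by fun_prop)).mul (hK.enorm.comp measurable_snd)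
  filter_upwards [ae_lt_top (hFK.lintegral_prod_right'.pow_const p) h2.ne] with x hx
  rw [ENNReal.rpow_lt_top_iff_of_pos hp0] at hx
  have hexp : ∀ y z : ℝ, Real.exp (-z) * (Real.exp (-y) * x) = Real.exp (-(z + y)) * x := by
    intro y z; rw [← mul_assoc, ← Real.exp_add]; ring_nf
  have hJ : Measurable (fun q : ℝ × ℝ => f (Real.exp (-q.2) * x) * (L (q.2 - q.1) * K q.1)) :=
    (hf.comp (by fun_prop)).mul ((hL.comp (by fun_prop)).mul (hK.comp measurable_fst))
  have hInt : Integrable (Function.uncurry fun y w : ℝ =>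
      f (Real.exp (-w) * x) * (L (w - y) * K y)) (volume.prod volume) := by
    refine ⟨hJ.aestronglyMeasurable, ?_⟩
    unfold HasFiniteIntegral
    have hJ' : Measurable (fun q : ℝ × ℝ => ‖Function.uncurry (fun y w : ℝ =>
      f (Real.exp (-w) * x) * (L (w - y) * K y)) q‖ₑ) := hJ.enorm
    rw [lintegral_prod _ hJ'.aemeasurable]
    refine lt_of_eq_of_lt (lintegral_congr fun y => ?_) hx
    simp only [Function.uncurry_apply_pair, hFdef, enorm_mul]
    have := lintegral_sub_right_eq_self (μ := volume) (fun z : ℝ =>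
      ‖f (Real.exp (-(z + y)) * x)‖ₑ * (‖L z‖ₑ * ‖K y‖ₑ)) y
    simp only [sub_add_cancel] at this
    rw [this, ← lintegral_mul_const' _ _ (by simp)]
    simp only [hexp, mul_assoc]
  calc WOp K (WOp L f) x = ∫ y, ∫ w, f (Real.exp (-w) * x) * (L (w - y) * K y) := by
        unfold WOp
        congr 1; ext y
        have := integral_sub_right_eq_self (μ := volume) (fun z : ℝ =>
          f (Real.exp (-(z + y)) * x) * (L z * K y)) y
        simp only [sub_add_cancel] at this
        rw [this, ← integral_mul_const]
        simp only [hexp, mul_assoc]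
    _ = ∫ w, ∫ y, f (Real.exp (-w) * x) * (L (w - y) * K y) := integral_integral_swap hInt
    _ = _ := by
        unfold WOp
        congr 1; ext w
        rw [integral_const_mul]

lemma exists_op (p a : ℝ) (hp : 1 ≤ p) [Fact (1 ≤ ENNReal.ofReal p)]
    (K : ℝ → ℂ) (hK : Measurable K) (hM : mass ((a + 1) / p) K ≠ ∞) :
    ∃ T : Lp ℂ (ENNReal.ofReal p) (weightMeasure a) →L[ℂ]
          Lp ℂ (ENNReal.ofReal p) (weightMeasure a),
      ∀ f : Lp ℂ (ENNReal.ofReal p) (weightMeasure a),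
        ⇑(T f) =ᵐ[weightMeasure a] WOp K ⇑f := by
  have hmf : ∀ f : Lp ℂ (ENNReal.ofReal p) (weightMeasure a), Measurable (f : ℝ → ℂ) :=
    fun f => (Lp.stronglyMeasurable f).measurable
  have hmem : ∀ f : Lp ℂ (ENNReal.ofReal p) (weightMeasure a),
      MemLp (WOp K f) (ENNReal.ofReal p) (weightMeasure a) := fun f =>
    ⟨(WOp_meas (hmf f) hK).aestronglyMeasurable,
      (WOp_norm p a hp K hK hM f (hmf f)).trans_lt
        (ENNReal.mul_lt_top hM.lt_top (Lp.eLpNorm_lt_top f))⟩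
  let T₀ : Lp ℂ (ENNReal.ofReal p) (weightMeasure a) →ₗ[ℂ]
      Lp ℂ (ENNReal.ofReal p) (weightMeasure a) :=
    { toFun := fun f => (hmem f).toLp
      map_add' := by
        intro f g
        refine Lp.ext ?_
        filter_upwards [(hmem (f + g)).coeFn_toLp, Lp.coeFn_add (hmem f).toLp (hmem g).toLp,
          (hmem f).coeFn_toLp, (hmem g).coeFn_toLp,
          WOp_congr p a hp K hK hM (f + g : Lp ℂ (ENNReal.ofReal p) (weightMeasure a))
            (⇑f + ⇑g) (hmf _) ((hmf f).add (hmf g)) (Lp.coeFn_add f g),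
          ae_int p a hp K hK hM f (hmf f) (Lp.eLpNorm_lt_top f),
          ae_int p a hp K hK hM g (hmf g) (Lp.eLpNorm_lt_top g)] with x h1 h2 h3 h4 h5 h6 h7
        rw [h1, h2, Pi.add_apply, h3, h4, h5]
        unfold WOp
        rw [← integral_add h6 h7]
        simp [add_mul]
      map_smul' := by
        intro c f
        refine Lp.ext ?_
        filter_upwards [(hmem (c • f)).coeFn_toLp, Lp.coeFn_smul c (hmem f).toLp,
          (hmem f).coeFn_toLp,
          WOp_congr p a hp K hK hM (c • f : Lp ℂ (ENNReal.ofReal p) (weightMeasure a))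
            (c • ⇑f) (hmf _) ((hmf f).const_smul c) (Lp.coeFn_smul c f)] with x h1 h2 h3 h5
        rw [RingHom.id_apply, h1, h2, Pi.smul_apply, h3, h5]
        unfold WOp
        rw [← integral_smul]
        simp [mul_assoc] }
  refine ⟨T₀.mkContinuous (mass ((a + 1) / p) K).toReal fun f => ?_, fun f => (hmem f).coeFn_toLp⟩
  change ‖(hmem f).toLp‖ ≤ _
  rw [Lp.norm_toLp, Lp.norm_def, ← ENNReal.toReal_mul]
  exact ENNReal.toReal_mono (ENNReal.mul_lt_top hM.lt_top (Lp.eLpNorm_lt_top f)).ne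
    (WOp_norm p a hp K hK hM f (hmf f))

lemma op_comp (p a : ℝ) (hp : 1 ≤ p) [Fact (1 ≤ ENNReal.ofReal p)]
    (K L : ℝ → ℂ) (hK : Measurable K) (hL : Measurable L)
    (hM : mass ((a + 1) / p) K ≠ ∞) (hN : mass ((a + 1) / p) L ≠ ∞)
    (T S : Lp ℂ (ENNReal.ofReal p) (weightMeasure a) →L[ℂ]
          Lp ℂ (ENNReal.ofReal p) (weightMeasure a))
    (hT : ∀ f : Lp ℂ (ENNReal.ofReal p) (weightMeasure a),
        ⇑(T f) =ᵐ[weightMeasure a] WOp K ⇑f)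
    (hS : ∀ f : Lp ℂ (ENNReal.ofReal p) (weightMeasure a),
        ⇑(S f) =ᵐ[weightMeasure a] WOp L ⇑f) (c : ℂ)
    (hc : ∀ w, ∫ y, L (w - y) * K y = c * (K w - L w)) :
    T * S = c • (T - S) := by
  have hmf : ∀ f : Lp ℂ (ENNReal.ofReal p) (weightMeasure a), Measurable (f : ℝ → ℂ) :=
    fun f => (Lp.stronglyMeasurable f).measurable
  ext1 f
  refine Lp.ext ?_
  have e : (c • (T - S)) f = c • (T f - S f) := rfl
  rw [e]
  filter_upwards [hT (S f), WOp_congr p a hp K hK hM (S f) (WOp L f) (hmf _)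
      (WOp_meas (hmf f) hL).measurable (hS f),
    WOp_comp p a hp K L hK hL hM hN f (hmf f) (Lp.eLpNorm_lt_top f),
    Lp.coeFn_smul c (T f - S f), Lp.coeFn_sub (T f) (S f), hT f, hS f,
    ae_int p a hp K hK hM f (hmf f) (Lp.eLpNorm_lt_top f),
    ae_int p a hp L hL hN f (hmf f) (Lp.eLpNorm_lt_top f)] with x h1 h2 h3 h4 h5 h6 h7 h8 h9
  change (T (S f) : ℝ → ℂ) x = _
  rw [h1, h2, h3, h4, Pi.smul_apply, h5, Pi.sub_apply, h6, h7]
  unfold WOp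
  rw [← integral_sub h8 h9, ← integral_smul]
  congr 1; ext y
  simp only [hc, smul_eq_mul]; ring

lemma isUnit_of_comp {A : Type*} [Ring A] [Algebra ℂ A] (T S : A) (l : ℂ) (hl : l ≠ 0)
    (h1 : T * S = (-l) • (T - S)) (h2 : S * T = (-l) • (T - S)) :
    IsUnit (algebraMap ℂ A l - T) := by
  rw [Algebra.algebraMap_eq_smul_one]
  refine ⟨⟨_, l⁻¹ • 1 + (l⁻¹ * l⁻¹) • S, ?_, ?_⟩, rfl⟩
  · simp only [sub_mul, mul_add, mul_smul_comm, one_mul, mul_one, smul_mul_assoc, h1]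
    match_scalars <;> field_simp <;> ring
  · simp only [mul_sub, add_mul, mul_smul_comm, one_mul, mul_one, smul_mul_assoc, h2]
    match_scalars <;> field_simp <;> ring

/-- kernels -/
noncomputable def kpos (ν : ℂ) (y : ℝ) : ℂ := if 0 ≤ y then Complex.exp (-ν * y) else 0
noncomputable def kneg (ν : ℂ) (y : ℝ) : ℂ := if 0 ≤ y then 0 else -Complex.exp (-ν * y)

lemma kpos_meas (ν : ℂ) : Measurable (kpos ν) :=
  Measurable.ite measurableSet_Ici (by fun_prop) (by fun_prop)
lemma kneg_meas (ν : ℂ) : Measurable (kneg ν) :=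
  Measurable.ite measurableSet_Ici (by fun_prop) (by fun_prop)

lemma kpos_mass (s : ℝ) (ν : ℂ) (h : s < ν.re) : mass s (kpos ν) ≠ ∞ := by
  have h1 := (integrableOn_Ici_iff_integrableOn_Ioi (μ := volume)).2
    (integrableOn_exp_mul_Ioi (a := s - ν.re) (by linarith) 0)
  have h2 := (h1.integrable_indicator measurableSet_Ici).2
  refine ne_of_lt (lt_of_eq_of_lt (lintegral_congr fun y => ?_) h2)
  by_cases hy : 0 ≤ y
  · rw [Set.indicator_of_mem (show y ∈ Set.Ici 0 from hy), kpos, if_pos hy, ← ofReal_norm,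
      Complex.norm_exp, ← ENNReal.ofReal_mul (Real.exp_pos _).le, ← Real.exp_add, ← ofReal_norm,
      Real.norm_of_nonneg (Real.exp_pos _).le]
    congr 2
    simp; ring
  · rw [Set.indicator_of_notMem (show y ∉ Set.Ici 0 from hy), kpos, if_neg hy]
    simp

lemma kneg_mass (s : ℝ) (ν : ℂ) (h : ν.re < s) : mass s (kneg ν) ≠ ∞ := by
  have h1 := (integrableOn_exp_mul_Iic (a := s - ν.re) (by linarith) 0).mono_set
    Set.Iio_subset_Iic_self
  have h2 := (h1.integrable_indicator measurableSet_Iio).2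
  refine ne_of_lt (lt_of_eq_of_lt (lintegral_congr fun y => ?_) h2)
  by_cases hy : 0 ≤ y
  · rw [Set.indicator_of_notMem (show y ∉ Set.Iio 0 by simpa using hy), kneg, if_pos hy]
    simp
  · rw [Set.indicator_of_mem (show y ∈ Set.Iio 0 by simpa using hy), kneg, if_neg hy, enorm_neg,
      ← ofReal_norm,
      Complex.norm_exp, ← ENNReal.ofReal_mul (Real.exp_pos _).le, ← Real.exp_add, ← ofReal_norm,
      Real.norm_of_nonneg (Real.exp_pos _).le]
    congr 2
    simp; ring

lemma conv_swap (K L : ℝ → ℂ) (w : ℝ) : ∫ y, K (w - y) * L y = ∫ y, L (w - y) * K y := by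
  rw [← integral_sub_left_eq_self _ volume w]
  simp [mul_comm]

lemma conv_pp (ν ω : ℂ) (h : ω ≠ ν) (w : ℝ) :
    ∫ y, kpos ω (w - y) * kpos ν y = (ω - ν)⁻¹ * (kpos ν w - kpos ω w) := by
  have hne : ω - ν ≠ 0 := sub_ne_zero.2 h
  have e : ∀ y, kpos ω (w - y) * kpos ν y = (Set.Icc 0 w).indicator
      (fun y : ℝ => Complex.exp (-ω * w) * Complex.exp ((ω - ν) * y)) y := by
    intro y
    simp only [kpos, Set.indicator_apply, Set.mem_Icc, sub_nonneg]
    by_cases h1 : y ≤ w <;> by_cases h2 : 0 ≤ y <;> simp [h1, h2]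
    rw [← Complex.exp_add, ← Complex.exp_add]; ring_nf
  simp_rw [e]
  rw [integral_indicator measurableSet_Icc, integral_const_mul]
  by_cases hw : 0 ≤ w
  · rw [integral_Icc_eq_integral_Ioc, ← intervalIntegral.integral_of_le hw,
      integral_exp_mul_complex hne, kpos, kpos, if_pos hw, if_pos hw]
    have : Complex.exp (-ν * w) = Complex.exp (-ω * w) * Complex.exp ((ω - ν) * w) := by
      rw [← Complex.exp_add]; ring_nf
    rw [this]
    field_simp
    simp
  · rw [Set.Icc_eq_empty hw, kpos, kpos, if_neg hw, if_neg hw]; simp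

lemma conv_pn (ν ω : ℂ) (h : ω.re < ν.re) (w : ℝ) :
    ∫ y, kneg ω (w - y) * kpos ν y = (ω - ν)⁻¹ * (kpos ν w - kneg ω w) := by
  have hre : (ω - ν).re < 0 := by simpa using h
  have hne : ω - ν ≠ 0 := by
    intro h0; rw [h0] at hre; simp at hre
  have e : ∀ᵐ y : ℝ, kneg ω (w - y) * kpos ν y = (Set.Ioi (max 0 w)).indicator
      (fun y : ℝ => -Complex.exp (-ω * w) * Complex.exp ((ω - ν) * y)) y := by
    filter_upwards [Measure.ae_ne volume (0 : ℝ)] with y hy0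
    simp only [kpos, kneg, Set.indicator_apply, Set.mem_Ioi, sub_nonneg, max_lt_iff]
    by_cases h1 : y ≤ w <;> by_cases h2 : 0 ≤ y
    · simp [h1, h2]
    · simp [h1, h2]
    · have h3 : 0 < y := lt_of_le_of_ne h2 (Ne.symm hy0)
      rw [if_neg h1, if_pos h2, if_pos ⟨h3, not_le.1 h1⟩, neg_mul (Complex.exp _),
        neg_mul (Complex.exp _), ← Complex.exp_add, ← Complex.exp_add]
      push_cast; ring_nf
    · have h3 : ¬ 0 < y := fun h => h2 h.le
      simp [h2, h3]
  rw [integral_congr_ae e, integral_indicator measurableSet_Ioi, integral_const_mul,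
    integral_exp_mul_complex_Ioi hre]
  by_cases hw : 0 ≤ w
  · rw [max_eq_right hw, kpos, kneg, if_pos hw, if_pos hw]
    have : Complex.exp (-ν * w) = Complex.exp (-ω * w) * Complex.exp ((ω - ν) * w) := by
      rw [← Complex.exp_add]; ring_nf
    rw [this]
    field_simp
    simp
  · rw [max_eq_left (not_le.1 hw).le, kpos, kneg, if_neg hw, if_neg hw]
    field_simp
    simp

/-- conversion of the Hausdorff operator -/
lemma Hphi_eq (ν : ℂ) (f : ℝ → ℂ) : Hphi (cesaroKernel ν) f = WOp (kpos ν) f := by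
  ext x
  unfold Hphi WOp
  have h := integral_image_eq_integral_abs_deriv_smul (s := Set.univ) (f := Real.exp)
    (f' := Real.exp) MeasurableSet.univ
    (fun x _ => (Real.hasDerivAt_exp x).hasDerivWithinAt) Real.exp_injective.injOn
    (fun t : ℝ => f (x / t) * cesaroKernel ν t / (t : ℂ))
  rw [Set.image_univ, Real.range_exp, Measure.restrict_univ] at h
  rw [h]
  congr 1; ext y
  have hne : (Real.exp y : ℂ) ≠ 0 := by exact_mod_cast (Real.exp_pos y).ne'
  have hk : cesaroKernel ν (Real.exp y) = kpos ν y := by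
    unfold cesaroKernel kpos
    simp only [Real.one_le_exp_iff]
    split_ifs
    · rw [Complex.ofReal_exp, ← Complex.ofReal_exp, Complex.cpow_def_of_ne_zero hne,
        ← Complex.ofReal_log (Real.exp_pos y).le, Real.log_exp]
      ring_nf
    · rfl
  rw [hk, abs_of_pos (Real.exp_pos _), Complex.real_smul, mul_div_cancel₀ _ hne, Real.exp_neg,
    div_eq_inv_mul]

noncomputable def tst (A : Set ℝ) (ρ : ℂ) : ℝ → ℂ :=
  A.indicator fun x : ℝ => Complex.exp (-ρ * (Real.log x : ℝ))

lemma tst_meas {A : Set ℝ} (hA : MeasurableSet A) (ρ : ℂ) : Measurable (tst A ρ) := by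
  refine Measurable.indicator ?_ hA
  fun_prop

lemma tst_lint (p a : ℝ) (hp : 1 ≤ p) {A : Set ℝ} (hA : MeasurableSet A)
    (hA0 : A ⊆ Set.Ioi 0) (ρ : ℂ) :
    ∫⁻ x, ‖tst A ρ x‖ₑ ^ p ∂(weightMeasure a) =
      ∫⁻ x in A, ENNReal.ofReal (x ^ (a - p * ρ.re)) := by
  have hp0 : 0 < p := by linarith
  have hm : Measurable (fun x => ‖tst A ρ x‖ₑ ^ p) := (tst_meas hA ρ).enorm.pow_const p
  unfold weightMeasure
  rw [lintegral_withDensity_eq_lintegral_mul _ (meas_weight a) hm, ← lintegral_indicator hA]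
  refine lintegral_congr fun x => ?_
  simp only [Pi.mul_apply, tst]
  by_cases hx : x ∈ A
  · have hx0 : 0 < x := hA0 hx
    rw [Set.indicator_of_mem hx, Set.indicator_of_mem hx, ← ofReal_norm, Complex.norm_exp,
      ENNReal.ofReal_rpow_of_pos (Real.exp_pos _), ← ENNReal.ofReal_mul (by positivity),
      abs_of_pos hx0, ← Real.exp_mul, Real.rpow_def_of_pos hx0, Real.rpow_def_of_pos hx0,
      ← Real.exp_add]
    congr 2
    simp; ring
  · rw [Set.indicator_of_notMem hx, Set.indicator_of_notMem hx]
    simp [hp0]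

lemma tst_lint_Ioo (p a : ℝ) (hp : 1 ≤ p) (ρ : ℂ) (h : 0 < a + 1 - p * ρ.re) :
    ∫⁻ x, ‖tst (Set.Ioo 0 1) ρ x‖ₑ ^ p ∂(weightMeasure a) =
      ENNReal.ofReal (1 / (a + 1 - p * ρ.re)) := by
  rw [tst_lint p a hp measurableSet_Ioo (fun x hx => hx.1)]
  have hr : -1 < a - p * ρ.re := by linarith
  have hi : IntegrableOn (fun x : ℝ => x ^ (a - p * ρ.re)) (Set.Ioo 0 1) := by
    rw [← integrableOn_Ioc_iff_integrableOn_Ioo,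
      ← intervalIntegrable_iff_integrableOn_Ioc_of_le zero_le_one]
    exact intervalIntegral.intervalIntegrable_rpow' hr
  rw [← ofReal_integral_eq_lintegral_ofReal hi]
  · rw [← integral_Ioc_eq_integral_Ioo, ← intervalIntegral.integral_of_le zero_le_one,
      integral_rpow (Or.inl hr), Real.one_rpow, Real.zero_rpow (by linarith)]
    congr 1
    ring
  · filter_upwards [ae_restrict_mem measurableSet_Ioo] with x hx
    exact Real.rpow_nonneg hx.1.le _

lemma tst_lint_Ici (p a : ℝ) (hp : 1 ≤ p) (ν : ℂ) (h : a + 1 < p * ν.re) :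
    ∫⁻ x, ‖tst (Set.Ici 1) ν x‖ₑ ^ p ∂(weightMeasure a) < ∞ := by
  rw [tst_lint p a hp measurableSet_Ici (fun x hx => Set.mem_Ioi.2 (lt_of_lt_of_le one_pos (Set.mem_Ici.1 hx)))]
  have hi := (integrableOn_Ici_iff_integrableOn_Ioi (μ := volume)).2
    (integrableOn_Ioi_rpow_of_lt (a := a - p * ν.re) (by linarith) one_pos)
  refine lt_of_eq_of_lt (setLIntegral_congr_fun measurableSet_Ici fun x hx => ?_) hi.2
  have hx0 : (0 : ℝ) < x := lt_of_lt_of_le one_pos hx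
  rw [← ofReal_norm, Real.norm_of_nonneg (Real.rpow_nonneg hx0.le _)]

lemma tst_memLp (p a : ℝ) (hp : 1 ≤ p) {A : Set ℝ} (hA : MeasurableSet A) (ρ : ℂ)
    (h : ∫⁻ x, ‖tst A ρ x‖ₑ ^ p ∂(weightMeasure a) < ∞) :
    MemLp (tst A ρ) (ENNReal.ofReal p) (weightMeasure a) := by
  refine ⟨(tst_meas hA ρ).aestronglyMeasurable, ?_⟩
  rw [eLp p a hp]
  exact ENNReal.rpow_lt_top_of_nonneg (by positivity) h.ne

lemma WOp_tst (ν ρ : ℂ) (h : ρ.re < ν.re) (x : ℝ) :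
    WOp (kpos ν) (tst (Set.Ioo 0 1) ρ) x =
      (ν - ρ)⁻¹ * (tst (Set.Ioo 0 1) ρ x + tst (Set.Ici 1) ν x) := by
  have hre : (ρ - ν).re < 0 := by simpa using h
  have hne : ρ - ν ≠ 0 := by
    intro h0; rw [h0] at hre; simp at hre
  have hne' : ν - ρ ≠ 0 := by rw [← neg_sub]; exact neg_ne_zero.2 hne
  unfold WOp
  by_cases hx : 0 < x
  swap
  · have h1 : ∀ y : ℝ, ¬ (0 < Real.exp (-y) * x) := fun y hy =>
      hx ((mul_pos_iff_of_pos_left (Real.exp_pos _)).1 hy)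
    have h2 : ¬ (1 ≤ x) := fun h => hx (lt_of_lt_of_le one_pos h)
    simp only [tst, Set.indicator_apply, Set.mem_Ioo, Set.mem_Ici]
    simp [h1, h2, hx]
  have e : ∀ᵐ y : ℝ, tst (Set.Ioo 0 1) ρ (Real.exp (-y) * x) * kpos ν y =
      (Set.Ioi (max 0 (Real.log x))).indicator
      (fun y : ℝ => Complex.exp (-ρ * (Real.log x : ℝ)) * Complex.exp ((ρ - ν) * y)) y := by
    filter_upwards [Measure.ae_ne volume (0 : ℝ)] with y hy0
    have hpos : 0 < Real.exp (-y) * x := mul_pos (Real.exp_pos _) hx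
    have hlt : Real.exp (-y) * x < 1 ↔ Real.log x < y := by
      rw [Real.log_lt_iff_lt_exp hx, Real.exp_neg, inv_mul_lt_iff₀ (Real.exp_pos _), mul_one]
    have hlog : Real.log (Real.exp (-y) * x) = -y + Real.log x := by
      rw [Real.log_mul (Real.exp_pos _).ne' hx.ne', Real.log_exp]
    simp only [tst, kpos, Set.indicator_apply, Set.mem_Ioi, Set.mem_Ioo, max_lt_iff, hpos, hlt,
      true_and, hlog]
    by_cases h1 : Real.log x < y <;> by_cases h2 : 0 ≤ y
    · have h3 : 0 < y := lt_of_le_of_ne h2 (Ne.symm hy0)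
      rw [if_pos h1, if_pos h2, if_pos ⟨h3, h1⟩, ← Complex.exp_add, ← Complex.exp_add]
      push_cast; ring_nf
    · have h3 : ¬ 0 < y := fun h => h2 h.le
      simp [h2, h3]
    · simp [h1]
    · simp [h1]
  rw [integral_congr_ae e, integral_indicator measurableSet_Ioi, integral_const_mul,
    integral_exp_mul_complex_Ioi hre]
  have e3 : (ν - ρ)⁻¹ = -(ρ - ν)⁻¹ := by rw [← neg_sub, neg_inv]
  rw [e3]
  by_cases hx1 : 1 ≤ x
  · have hx2 : ¬ x < 1 := not_lt.2 hx1
    rw [max_eq_right (Real.log_nonneg hx1)]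
    simp only [tst, Set.indicator_apply, Set.mem_Ioo, Set.mem_Ici, hx1, hx2, and_false, if_true,
      if_false]
    have : Complex.exp (-ν * (Real.log x : ℝ)) = Complex.exp (-ρ * (Real.log x : ℝ)) *
        Complex.exp ((ρ - ν) * (Real.log x : ℝ)) := by
      rw [← Complex.exp_add]; ring_nf
    rw [this]; ring
  · rw [max_eq_left (Real.log_nonpos hx.le (not_le.1 hx1).le)]
    simp only [tst, Set.indicator_apply, Set.mem_Ioo, Set.mem_Ici, hx1, hx, not_le.1 hx1, and_self,
      if_true, if_false]
    simp; ring

lemma not_unit (p a : ℝ) (hp : 1 ≤ p) [Fact (1 ≤ ENNReal.ofReal p)] (ν : ℂ)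
    (hν : a + 1 < p * ν.re)
    (T : Lp ℂ (ENNReal.ofReal p) (weightMeasure a) →L[ℂ]
          Lp ℂ (ENNReal.ofReal p) (weightMeasure a))
    (hT : ∀ f : Lp ℂ (ENNReal.ofReal p) (weightMeasure a),
        ⇑(T f) =ᵐ[weightMeasure a] WOp (kpos ν) ⇑f) (l : ℂ) (hl : l ≠ 0)
    (hre : (l⁻¹).re = ν.re - (a + 1) / p) :
    l ∈ spectrum ℂ T := by
  have hp0 : 0 < p := by linarith
  have hδ : 0 < ν.re - (a + 1) / p := by
    rw [sub_pos, div_lt_iff₀ hp0]; linarith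
  set δ := ν.re - (a + 1) / p with hδdef
  intro hu
  obtain ⟨u, hu⟩ := hu
  set S : Lp ℂ (ENNReal.ofReal p) (weightMeasure a) →L[ℂ]
          Lp ℂ (ENNReal.ofReal p) (weightMeasure a) := ↑u⁻¹ with hS
  have hSu : ∀ F, S ((algebraMap ℂ _ l - T) F) = F := by
    intro F
    rw [← hu]
    have : (S * (u : Lp ℂ (ENNReal.ofReal p) (weightMeasure a) →L[ℂ]
          Lp ℂ (ENNReal.ofReal p) (weightMeasure a))) F = F := by
      rw [hS, Units.inv_mul]; rfl
    exact this
  have hGm := tst_memLp p a hp measurableSet_Ici ν (tst_lint_Ici p a hp ν hν)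
  set G : Lp ℂ (ENNReal.ofReal p) (weightMeasure a) := hGm.toLp with hG
  have main : ∀ ε : ℝ, 0 < ε → ∃ F : Lp ℂ (ENNReal.ofReal p) (weightMeasure a),
      ‖F‖ = (1 / (p * ε)) ^ (1 / p) ∧ (l⁻¹ + ε) • F = S ((ε * l) • F - G) := by
    intro ε hε
    set ρ : ℂ := ν - l⁻¹ - ε with hρ
    have hρre : ρ.re = (a + 1) / p - ε := by
      rw [hρ]; simp only [Complex.sub_re, hre, Complex.ofReal_re, hδdef]; ring
    have hpe : a + 1 - p * ρ.re = p * ε := by rw [hρre]; field_simp; ring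
    have hlin := tst_lint_Ioo p a hp ρ (by rw [hpe]; positivity)
    have hFm := tst_memLp p a hp measurableSet_Ioo ρ (by rw [hlin]; exact ENNReal.ofReal_lt_top)
    refine ⟨hFm.toLp, ?_, ?_⟩
    · rw [Lp.norm_toLp, eLp p a hp, hlin, hpe, ENNReal.ofReal_rpow_of_nonneg (by positivity)
        (by positivity), ENNReal.toReal_ofReal (by positivity)]
    · set F : Lp ℂ (ENNReal.ofReal p) (weightMeasure a) := hFm.toLp with hF
      have hsum : ν - ρ = l⁻¹ + ε := by rw [hρ]; ring
      have hne : l⁻¹ + (ε : ℂ) ≠ 0 := by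
        intro h0
        have := congrArg Complex.re h0
        simp only [Complex.add_re, hre, Complex.ofReal_re, Complex.zero_re] at this
        linarith
      have hTF : T F = (l⁻¹ + (ε : ℂ))⁻¹ • (F + G) := by
        refine Lp.ext ?_
        filter_upwards [hT F, WOp_congr p a hp (kpos ν) (kpos_meas ν)
          (kpos_mass _ ν (by linarith)) F (tst (Set.Ioo 0 1) ρ)
          (Lp.stronglyMeasurable F).measurable (tst_meas measurableSet_Ioo ρ) hFm.coeFn_toLp,
          hFm.coeFn_toLp, hGm.coeFn_toLp, Lp.coeFn_smul (l⁻¹ + (ε : ℂ))⁻¹ (F + G),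
          Lp.coeFn_add F G] with x h1 h2 h3 h4 h5 h6
        rw [h1, h2, h5, Pi.smul_apply, h6, Pi.add_apply, h3, h4,
          WOp_tst ν ρ (by rw [hρre]; linarith), hsum, smul_eq_mul]
      have hcalc : (algebraMap ℂ (Lp ℂ (ENNReal.ofReal p) (weightMeasure a) →L[ℂ]
          Lp ℂ (ENNReal.ofReal p) (weightMeasure a)) l - T) F = l • F - T F := rfl
      have h7 : ((ε : ℂ) * l) • F - G = (l⁻¹ + (ε : ℂ)) • (l • F - T F) := by
        rw [hTF, smul_sub, smul_smul, smul_smul, mul_inv_cancel₀ hne, one_smul, add_mul,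
          inv_mul_cancel₀ hl, add_smul, one_smul]
        abel
      rw [h7, map_smul, ← hcalc, hSu]
  -- choose a small parameter
  obtain ⟨ε, hε, h1, h2⟩ : ∃ ε : ℝ, 0 < ε ∧ ε * (‖S‖ * ‖l‖) ≤ δ / 2 ∧
      (2 * (‖S‖ * ‖G‖) / δ + 1) ^ p ≤ 1 / (p * ε) := by
    set B := (2 * (‖S‖ * ‖G‖) / δ + 1) ^ p with hB
    have hBpos : 0 < B := by positivity
    refine ⟨min (δ / 2 / (‖S‖ * ‖l‖ + 1)) (1 / (p * B)), by positivity, ?_, ?_⟩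
    · calc _ ≤ (δ / 2 / (‖S‖ * ‖l‖ + 1)) * (‖S‖ * ‖l‖ + 1) := by
            gcongr
            · exact min_le_left _ _
            · linarith
        _ = δ / 2 := by field_simp
    · rw [le_div_iff₀ (by positivity)]
      calc _ ≤ B * (p * (1 / (p * B))) := by
            gcongr
            exact min_le_right _ _
        _ = 1 := by field_simp
  obtain ⟨F, hF1, hF2⟩ := main ε hε
  have h3 : 2 * (‖S‖ * ‖G‖) / δ + 1 ≤ ‖F‖ := by
    rw [hF1]
    have := Real.rpow_le_rpow (by positivity) h2 (by positivity : 0 ≤ 1 / p)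
    rw [← Real.rpow_mul (by positivity)] at this
    have e1 : p * (1 / p) = 1 := by field_simp
    rwa [e1, Real.rpow_one] at this
  have h4 : δ ≤ ‖l⁻¹ + (ε : ℂ)‖ := by
    have := Complex.re_le_norm (l⁻¹ + (ε : ℂ))
    simp only [Complex.add_re, hre, Complex.ofReal_re] at this
    linarith
  have h5 : ‖l⁻¹ + (ε : ℂ)‖ * ‖F‖ ≤ ‖S‖ * (ε * ‖l‖ * ‖F‖ + ‖G‖) := by
    rw [← norm_smul, hF2]
    refine (S.le_opNorm _).trans ?_
    gcongr
    refine (norm_sub_le _ _).trans ?_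
    rw [norm_smul, norm_mul, Complex.norm_real, Real.norm_of_nonneg hε.le]
  have h6 : δ * ‖F‖ ≤ δ / 2 * ‖F‖ + ‖S‖ * ‖G‖ := by
    calc δ * ‖F‖ ≤ ‖l⁻¹ + (ε : ℂ)‖ * ‖F‖ := by gcongr
      _ ≤ _ := h5
      _ = ε * (‖S‖ * ‖l‖) * ‖F‖ + ‖S‖ * ‖G‖ := by ring
      _ ≤ _ := by gcongr
  have h7 : δ / 2 * (2 * (‖S‖ * ‖G‖) / δ + 1) ≤ δ / 2 * ‖F‖ := by gcongr
  have h8 : δ / 2 * (2 * (‖S‖ * ‖G‖) / δ + 1) = ‖S‖ * ‖G‖ + δ / 2 := by field_simp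
  linarith

lemma circle_iff (δ : ℝ) (hδ : 0 < δ) (z : ℂ) (hz : z ≠ 0) :
    ‖z - ((1 / (2 * δ) : ℝ) : ℂ)‖ = 1 / (2 * δ) ↔ (z⁻¹).re = δ := by
  have hn : 0 < Complex.normSq z := Complex.normSq_pos.2 hz
  rw [← sq_eq_sq₀ (norm_nonneg _) (by positivity), ← Complex.normSq_eq_norm_sq, Complex.inv_re,
    div_eq_iff hn.ne']
  rw [Complex.normSq_apply, Complex.normSq_apply]
  simp only [Complex.sub_re, Complex.sub_im, Complex.ofReal_re, Complex.ofReal_im, sub_zero]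
  constructor
  · intro h
    field_simp at h
    nlinarith
  · intro h
    field_simp
    linear_combination (-4 * δ) * h

end HausdorffAux

open HausdorffAux in
/-- For `1 ≤ p < ∞`, `a > −1`, `ν ∈ ℂ` with `p·Re ν > a + 1`, the Cesàro
operator `C_ν f(x) = ∫₁^∞ f(x/t) t^{−ν−1} dt` is a bounded linear operator on
`L^p(ℝ, |x|^a)` and its spectrum equals the circle
`{ z : |z − p/(2(p Re ν − a − 1))| = p/(2(p Re ν − a − 1)) }`. -/
theorem stmt16 (p a : ℝ) (hp : 1 ≤ p) (ha : -1 < a) [Fact (1 ≤ ENNReal.ofReal p)]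
    (ν : ℂ) (hν : a + 1 < p * ν.re) :
    ∃ T : Lp ℂ (ENNReal.ofReal p) (weightMeasure a) →L[ℂ]
          Lp ℂ (ENNReal.ofReal p) (weightMeasure a),
      (∀ f : Lp ℂ (ENNReal.ofReal p) (weightMeasure a),
        ⇑(T f) =ᵐ[weightMeasure a] Hphi (cesaroKernel ν) ⇑f) ∧
      spectrum ℂ T =
        {z : ℂ | ‖z - ((p / (2 * (p * ν.re - a - 1)) : ℝ) : ℂ)‖
          = p / (2 * (p * ν.re - a - 1))} := by
  have hp0 : 0 < p := by linarith
  have hs : (a + 1) / p < ν.re := by rw [div_lt_iff₀ hp0]; linarith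
  have hδ : 0 < ν.re - (a + 1) / p := sub_pos.2 hs
  have hM := kpos_mass _ ν hs
  obtain ⟨T, hT⟩ := exists_op p a hp (kpos ν) (kpos_meas ν) hM
  refine ⟨T, fun f => by rw [Hphi_eq]; exact hT f, ?_⟩
  have hr : p / (2 * (p * ν.re - a - 1)) = 1 / (2 * (ν.re - (a + 1) / p)) := by
    have h1 : p * ν.re - a - 1 = p * (ν.re - (a + 1) / p) := by field_simp; ring
    rw [h1]; field_simp
  rw [hr]
  set δ := ν.re - (a + 1) / p with hδdef
  ext z
  simp only [Set.mem_ofPred_eq]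
  by_cases hz : z = 0
  · subst hz
    refine iff_of_true ?_ ?_
    · have hlim : Filter.Tendsto (fun n : ℕ => ((δ : ℂ) + n * Complex.I)⁻¹) Filter.atTop
          (nhds 0) := by
        refine Filter.tendsto_inv₀_cobounded.comp ?_
        rw [← tendsto_norm_atTop_iff_cobounded]
        refine Filter.tendsto_atTop_mono (fun n : ℕ => ?_) tendsto_natCast_atTop_atTop
        have := Complex.abs_im_le_norm ((δ : ℂ) + n * Complex.I)
        simpa using this
      refine (spectrum.isClosed T).mem_of_tendsto hlim (Filter.Eventually.of_forall fun n => ?_)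
      have hne : (δ : ℂ) + n * Complex.I ≠ 0 := by
        intro h0
        have := congrArg Complex.re h0
        simp at this
        linarith
      refine not_unit p a hp ν hν T hT _ (inv_ne_zero hne) ?_
      rw [inv_inv]; simp [hδdef]
    · rw [zero_sub, norm_neg, Complex.norm_real, Real.norm_of_nonneg (by positivity)]
  · rw [circle_iff δ hδ z hz]
    constructor
    · intro hsp
      by_contra hne
      apply hsp
      set ω : ℂ := ν - z⁻¹ with hω
      have hωre : ω.re = ν.re - (z⁻¹).re := by rw [hω, Complex.sub_re]
      have hc : (ω - ν)⁻¹ = -z := by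
        rw [hω, sub_sub_cancel_left, ← neg_inv, inv_inv]
      rcases lt_or_gt_of_ne hne with h | h
      · have hωs : (a + 1) / p < ω.re := by rw [hωre]; linarith
        have hων : ω ≠ ν := by
          intro h0; rw [h0, sub_self, inv_zero] at hc
          exact hz (neg_eq_zero.1 hc.symm)
        obtain ⟨S, hS⟩ := exists_op p a hp (kpos ω) (kpos_meas ω) (kpos_mass _ ω hωs)
        have hconv := conv_pp ν ω hων
        rw [hc] at hconv
        refine isUnit_of_comp T S z hz (op_comp p a hp _ _ (kpos_meas ν) (kpos_meas ω) hM
          (kpos_mass _ ω hωs) T S hT hS _ hconv) ?_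
        rw [op_comp p a hp _ _ (kpos_meas ω) (kpos_meas ν) (kpos_mass _ ω hωs) hM S T hS hT z
          (fun w => by rw [conv_swap, hconv]; ring)]
        module
      · have hωs : ω.re < (a + 1) / p := by rw [hωre]; linarith
        obtain ⟨S, hS⟩ := exists_op p a hp (kneg ω) (kneg_meas ω) (kneg_mass _ ω hωs)
        have hconv := conv_pn ν ω (by linarith)
        rw [hc] at hconv
        refine isUnit_of_comp T S z hz (op_comp p a hp _ _ (kpos_meas ν) (kneg_meas ω) hM
          (kneg_mass _ ω hωs) T S hT hS _ hconv) ?_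
        rw [op_comp p a hp _ _ (kneg_meas ω) (kpos_meas ν) (kneg_mass _ ω hωs) hM S T hS hT z
          (fun w => by rw [conv_swap, hconv]; ring)]
        module
    · intro h
      exact not_unit p a hp ν hν T hT z hz h
end
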